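/- arXiv:1907.00061 — 12 statements merged into one kernel-verified Lean document; each statement's English description precedes it below -/
import Mathlib

section
/- For every integer r ≥ 1 and every integer k ≥ 3, there exists a finite digraph H with the following properties: (1) H has at most k^r vertices; (2) H has no acyclic r-coloring; (3) for every arc uv of H, the digraph obtained from H by deleting the arc uv has an acyclic r-coloring; (4) the directed girth of H is exactly k, i.e., H contains a directed cycle of length k and contains no directed cycle of length less than k. -/
/-- A directed cycle of length `ℓ ≥ 2` in the digraph with arc relation `Adj`:
an injective map `c : ZMod ℓ → V` with an arc from each vertex to the next. -/
def IsDicycle {V : Type} (Adj : V → V → Prop) (ℓ : ℕ) (c : ZMod ℓ → V) : Prop :=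
  2 ≤ ℓ ∧ Function.Injective c ∧ ∀ j : ZMod ℓ, Adj (c j) (c (j + 1))

/-- An acyclic `r`-coloring of a digraph: an assignment of `r` colors to the
vertices such that no directed cycle is monochromatic. -/
def HasAcyclicColoring {V : Type} (Adj : V → V → Prop) (r : ℕ) : Prop :=
  ∃ f : V → Fin r, ∀ (ℓ : ℕ) (c : ZMod ℓ → V), IsDicycle Adj ℓ c →
    ∃ i j : ZMod ℓ, f (c i) ≠ f (c j)

/-!
A finite non-`r`-colorable digraph contains an arc-minimal one, but passing to it could destroy all
dicycles of length `k`. So we look for a digraph of girth at least `k` in which every subdigraph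
without a `k`-dicycle is `r`-colorable: then the arc-minimal subdigraph must keep a `k`-dicycle.

For `r = 1` the directed `k`-cycle will do. To go from `r` to `r + 1`, replace all but one of the
vertices of the directed `k`-cycle by copies of the digraph for `r`. In an acyclic
`(r + 1)`-coloring each copy would see every color, in particular that of the remaining vertex, and
this yields a monochromatic `k`-dicycle. A dicycle through the remaining vertex winds around the
`k`-cycle, and one avoiding it stays in a single copy, so both the girth bound and the colorings of
subdigraphs are inherited from the copies, the remaining vertex getting the new color.
-/

section Dicycle

variable {V W : Type} {A : V → V → Prop} {B : W → W → Prop} {ℓ : ℕ}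

lemma IsDicycle.map {c : ZMod ℓ → V} (hc : IsDicycle A ℓ c) {φ : V → W}
    (hφ : Function.Injective φ) (hAB : ∀ a b, A a b → B (φ a) (φ b)) : IsDicycle B ℓ (φ ∘ c) :=
  ⟨hc.1, hφ.comp hc.2.1, fun j => hAB _ _ (hc.2.2 j)⟩

lemma IsDicycle.mono {A' : V → V → Prop} {c : ZMod ℓ → V} (hc : IsDicycle A ℓ c) (h : A ≤ A') :
    IsDicycle A' ℓ c :=
  hc.map Function.injective_id h

lemma IsDicycle.of_comp {c : ZMod ℓ → V} {φ : V → W} (hc : IsDicycle B ℓ (φ ∘ c)) :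
    IsDicycle (fun a b => B (φ a) (φ b)) ℓ c :=
  ⟨hc.1, hc.2.1.of_comp, hc.2.2⟩

lemma IsDicycle.neZero {c : ZMod ℓ → V} (hc : IsDicycle A ℓ c) : NeZero ℓ :=
  ⟨by have := hc.1; omega⟩

lemma IsDicycle.apply_ne_apply_add_one {c : ZMod ℓ → V} (hc : IsDicycle A ℓ c) (j : ZMod ℓ) :
    c j ≠ c (j + 1) := by
  have : Fact (1 < ℓ) := ⟨hc.1⟩
  exact hc.2.1.ne (by simp)

lemma apply_eq_apply_of_forall_le_apply_add_one {α : Type*} [PartialOrder α] [NeZero ℓ]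
    {g : ZMod ℓ → α} (hg : ∀ j, g j ≤ g (j + 1)) (i j : ZMod ℓ) : g i = g j := by
  have hle (i j : ZMod ℓ) : g i ≤ g j := by
    have hmono : Monotone fun t : ℕ => g (i + t) :=
      monotone_nat_of_le_succ fun t => by simpa [add_assoc] using hg (i + t)
    simpa using hmono (Nat.zero_le (j - i).val)
  exact (hle i j).antisymm (hle j i)

end Dicycle

section AcyclicColoring

variable {V W κ κ' : Type} {A : V → V → Prop} {B : W → W → Prop}

/-- `f` is an acyclic coloring of the digraph `A`, with colors in an arbitrary type;
`HasAcyclicColoring` asks for such an `f` with values in `Fin r`. -/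
def IsAcyclicColoring (A : V → V → Prop) (f : V → κ) : Prop :=
  ∀ (ℓ : ℕ) (c : ZMod ℓ → V), IsDicycle A ℓ c → ∃ i j : ZMod ℓ, f (c i) ≠ f (c j)

lemma IsAcyclicColoring.comap {f : W → κ} (hf : IsAcyclicColoring B f) {φ : V → W}
    (hφ : Function.Injective φ) (hAB : ∀ a b, A a b → B (φ a) (φ b)) :
    IsAcyclicColoring A (f ∘ φ) :=
  fun ℓ _ hc => hf ℓ _ (hc.map hφ hAB)

lemma IsAcyclicColoring.of_comp {f : V → κ} {e : κ → κ'} (hf : IsAcyclicColoring A (e ∘ f)) :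
    IsAcyclicColoring A f := by
  intro ℓ c hc
  obtain ⟨i, j, hij⟩ := hf ℓ c hc
  exact ⟨i, j, fun h => hij (congrArg e h)⟩

lemma IsAcyclicColoring.hasAcyclicColoring_of_forall_ne {r : ℕ} {f : V → Fin (r + 1)}
    (hf : IsAcyclicColoring A f) {x : Fin (r + 1)} (hx : ∀ v, f v ≠ x) :
    HasAcyclicColoring A r := by
  choose g hg using fun v => Fin.exists_succAbove_eq (hx v)
  obtain rfl : x.succAbove ∘ g = f := funext hg
  exact ⟨g, hf.of_comp⟩

lemma hasAcyclicColoring_of_forall_not_isDicycle {r : ℕ} [NeZero r]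
    (h : ∀ ℓ (c : ZMod ℓ → V), ¬ IsDicycle A ℓ c) : HasAcyclicColoring A r :=
  ⟨fun _ => 0, fun ℓ c hc => absurd hc (h ℓ c)⟩

lemma IsDicycle.not_hasAcyclicColoring_one {ℓ : ℕ} {c : ZMod ℓ → V} (hc : IsDicycle A ℓ c) :
    ¬ HasAcyclicColoring A 1 := by
  rintro ⟨f, hf⟩
  obtain ⟨i, j, hij⟩ := hf ℓ c hc
  exact hij (Subsingleton.elim _ _)

lemma exists_critical_subdigraph [Finite V] {r : ℕ} (hA : ¬ HasAcyclicColoring A r) :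
    ∃ B ≤ A, ¬ HasAcyclicColoring B r ∧
      ∀ u v, B u v → HasAcyclicColoring (fun a b => B a b ∧ ¬(a = u ∧ b = v)) r := by
  have hfin : {B : V → V → Prop | B ≤ A ∧ ¬ HasAcyclicColoring B r}.Finite := Set.toFinite _
  obtain ⟨B, ⟨hBA, hB⟩, hmin⟩ := hfin.exists_minimal ⟨A, le_rfl, hA⟩
  refine ⟨B, hBA, hB, fun u v huv => ?_⟩
  by_contra hdel
  have hle : (fun a b => B a b ∧ ¬(a = u ∧ b = v)) ≤ B := fun _ _ h => h.1
  exact (hmin ⟨hle.trans hBA, hdel⟩ hle u v huv).2 ⟨rfl, rfl⟩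

end AcyclicColoring

/-- A loopless digraph of girth at least `k` that is not acyclically `r`-colorable, but all of whose
subdigraphs without a `k`-dicycle are. This is the property carried through the induction on `r`. -/
structure IsGirthTight {V : Type} (A : V → V → Prop) (k r : ℕ) : Prop where
  irrefl : ∀ v, ¬ A v v
  not_hasAcyclicColoring : ¬ HasAcyclicColoring A r
  le_length : ∀ (ℓ : ℕ) (c : ZMod ℓ → V), IsDicycle A ℓ c → k ≤ ℓ
  hasAcyclicColoring_of_le : ∀ B ≤ A, (¬ ∃ c : ZMod k → V, IsDicycle B k c) →
    HasAcyclicColoring B r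

section DirectedCycle

variable {k : ℕ}

/-- The arc relation of the directed cycle with vertex set `ZMod k`. -/
def CycleAdj (k : ℕ) (a b : ZMod k) : Prop := b = a + 1

lemma isDicycle_cycleAdj_id (hk : 2 ≤ k) : IsDicycle (CycleAdj k) k id :=
  ⟨hk, Function.injective_id, fun _ => rfl⟩

lemma length_eq_of_isDicycle_cycleAdj [NeZero k] {ℓ : ℕ} {c : ZMod ℓ → ZMod k}
    (hc : IsDicycle (CycleAdj k) ℓ c) : ℓ = k := by
  have := hc.neZero
  have hstep (t : ℕ) : c t = c 0 + t := by
    induction t with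
    | zero => simp
    | succ t ih => rw [Nat.cast_succ, hc.2.2, ih, Nat.cast_succ, add_assoc]
  have hdvd : k ∣ ℓ := by
    simpa [ZMod.natCast_eq_zero_iff] using hstep ℓ
  have hle : ℓ ≤ k := by
    simpa [ZMod.card] using Fintype.card_le_of_injective c hc.2.1
  exact hle.antisymm (Nat.le_of_dvd (NeZero.pos ℓ) hdvd)

lemma isGirthTight_cycleAdj (hk : 2 ≤ k) : IsGirthTight (CycleAdj k) k 1 where
  irrefl v := by
    have : Fact (1 < k) := ⟨hk⟩
    simp [CycleAdj]
  not_hasAcyclicColoring := (isDicycle_cycleAdj_id hk).not_hasAcyclicColoring_one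
  le_length ℓ c hc := by
    have : NeZero k := ⟨by omega⟩
    exact (length_eq_of_isDicycle_cycleAdj hc).ge
  hasAcyclicColoring_of_le B hB hno := by
    have : NeZero k := ⟨by omega⟩
    refine hasAcyclicColoring_of_forall_not_isDicycle fun ℓ c hc => ?_
    obtain rfl := length_eq_of_isDicycle_cycleAdj (hc.mono hB)
    exact hno ⟨c, hc⟩

end DirectedCycle

section Blowup

variable {n : ℕ} {W : Type} {A : W → W → Prop}

/-- The position of a vertex of the blow-up on the directed `(n + 1)`-cycle: the single vertex
`none` sits at `0`, and the `i`-th copy of `W` at `i + 1`. -/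
def blowupPos : Option (Fin n × W) → Fin (n + 1)
  | none => 0
  | some (i, _) => i.succ

/-- The directed `(n + 1)`-cycle with all vertices but one replaced by copies of the digraph `A`.
The addition in `step` is modulo `n + 1`, so that the last copy is joined to `none`. -/
inductive BlowupAdj (A : W → W → Prop) : Option (Fin n × W) → Option (Fin n × W) → Prop
  | copy (i : Fin n) {w w' : W} (h : A w w') : BlowupAdj A (some (i, w)) (some (i, w'))
  | step {a b : Option (Fin n × W)} (h : blowupPos b = blowupPos a + 1) : BlowupAdj A a b

lemma some_mk_injective (i : Fin n) : Function.Injective fun w : W => some (i, w) :=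
  (Option.some_injective _).comp (Prod.mk_right_injective i)

lemma blowupAdj_some_some_iff {i : Fin n} {w w' : W} :
    BlowupAdj A (some (i, w)) (some (i, w')) ↔ A w w' := by
  refine ⟨fun h => ?_, .copy i⟩
  cases h with
  | copy _ h => exact h
  | step h =>
    have : NeZero n := ⟨i.pos.ne'⟩
    simp [blowupPos] at h

lemma BlowupAdj.val_blowupPos_le {a b : Option (Fin n × W)} (h : BlowupAdj A a b) :
    (blowupPos b : ℕ) ≤ blowupPos a + 1 := by
  cases h with
  | copy => simp [blowupPos]
  | step h =>
    rw [h, Fin.val_add_one]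
    split_ifs <;> omega

lemma BlowupAdj.blowupPos_le_some {a : Option (Fin n × W)} {p : Fin n × W}
    (h : BlowupAdj A a (some p)) : blowupPos a ≤ blowupPos (some p) := by
  cases h with
  | copy => rfl
  | step h =>
    have hlast : blowupPos a ≠ Fin.last n := by
      intro hlast
      rw [hlast, Fin.last_add_one] at h
      exact Fin.succ_ne_zero _ h
    rw [h, Fin.le_def, Fin.val_add_one, if_neg hlast]
    omega

lemma BlowupAdj.blowupPos_eq_last {a : Option (Fin n × W)} (h : BlowupAdj A a none) :
    blowupPos a = Fin.last n := by
  cases h with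
  | step h => exact add_right_cancel (h.symm.trans (Fin.last_add_one n).symm)

lemma BlowupAdj.irrefl (hn : n ≠ 0) (hA : ∀ w, ¬ A w w) (a : Option (Fin n × W)) :
    ¬ BlowupAdj A a a := by
  match a with
  | none => exact fun h => hn (Fin.zero_eq_last_iff.1 h.blowupPos_eq_last)
  | some (i, w) => exact blowupAdj_some_some_iff.not.mpr (hA w)

lemma IsDicycle.exists_eq_some_mk_of_forall_ne_none {ℓ : ℕ} {c : ZMod ℓ → Option (Fin n × W)}
    (hc : IsDicycle (BlowupAdj A) ℓ c) (hnone : ∀ j, c j ≠ none) :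
    ∃ (i : Fin n) (d : ZMod ℓ → W), c = (fun w => some (i, w)) ∘ d := by
  have := hc.neZero
  choose p hp using fun j => Option.ne_none_iff_exists'.1 (hnone j)
  obtain rfl : c = some ∘ p := funext hp
  have hpos (j : ZMod ℓ) : blowupPos (some (p j)) = blowupPos (some (p 0)) :=
    apply_eq_apply_of_forall_le_apply_add_one (g := fun j => blowupPos (some (p j)))
      (fun j => (hc.2.2 j).blowupPos_le_some) j 0
  refine ⟨(p 0).1, fun j => (p j).2, funext fun j => ?_⟩
  exact congrArg some (Prod.ext (Fin.succ_injective _ (hpos j)) rfl)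

lemma IsDicycle.lt_length_of_apply_eq_none {ℓ : ℕ} {c : ZMod ℓ → Option (Fin n × W)}
    (hc : IsDicycle (BlowupAdj A) ℓ c) {j : ZMod ℓ} (hj : c j = none) : n < ℓ := by
  have hpos (t : ℕ) : (blowupPos (c (j + t)) : ℕ) ≤ t := by
    induction t with
    | zero => simp [hj, blowupPos]
    | succ t ih =>
      rw [Nat.cast_succ, ← add_assoc]
      exact (hc.2.2 (j + t)).val_blowupPos_le.trans (by omega)
  obtain ⟨m, rfl⟩ : ∃ m, ℓ = m + 1 := Nat.exists_eq_succ_of_ne_zero hc.neZero.ne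
  have hreturn : j + m + 1 = j := by
    rw [add_assoc, ← Nat.cast_succ, ZMod.natCast_self, add_zero]
  have hlast := hc.2.2 (j + m)
  rw [hreturn, hj] at hlast
  have := hpos m
  rw [hlast.blowupPos_eq_last, Fin.val_last] at this
  omega

lemma IsDicycle.succ_le_length_of_blowupAdj
    (hA : ∀ (ℓ : ℕ) (c : ZMod ℓ → W), IsDicycle A ℓ c → n + 1 ≤ ℓ)
    {ℓ : ℕ} {c : ZMod ℓ → Option (Fin n × W)} (hc : IsDicycle (BlowupAdj A) ℓ c) : n + 1 ≤ ℓ := by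
  by_cases hnone : ∀ j, c j ≠ none
  · obtain ⟨i, d, rfl⟩ := hc.exists_eq_some_mk_of_forall_ne_none hnone
    exact hA ℓ d (hc.of_comp.mono fun _ _ => blowupAdj_some_some_iff.1)
  · push Not at hnone
    obtain ⟨j, hj⟩ := hnone
    exact hc.lt_length_of_apply_eq_none hj

/-- The vertices `none` and `w i` in the `i`-th copy, in the order of their positions: the
transversal dicycle of the blow-up. -/
def blowupTransversal (w : Fin n → W) : ZMod (n + 1) → Option (Fin n × W) :=
  Fin.cases none fun i => some (i, w i)

lemma blowupPos_blowupTransversal (w : Fin n → W) (j : ZMod (n + 1)) :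
    blowupPos (blowupTransversal w j) = j := by
  cases j using Fin.cases <;> rfl

lemma isDicycle_blowupTransversal (hn : n ≠ 0) (w : Fin n → W) :
    IsDicycle (BlowupAdj A) (n + 1) (blowupTransversal w) := by
  refine ⟨by omega, Function.LeftInverse.injective (blowupPos_blowupTransversal w), fun j => ?_⟩
  refine .step ?_
  rw [blowupPos_blowupTransversal, blowupPos_blowupTransversal]
  rfl

lemma IsAcyclicColoring.exists_apply_some_mk_eq {r : ℕ} (hA : ¬ HasAcyclicColoring A r)
    {f : Option (Fin n × W) → Fin (r + 1)} (hf : IsAcyclicColoring (BlowupAdj A) f) (i : Fin n)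
    (x : Fin (r + 1)) : ∃ w, f (some (i, w)) = x := by
  by_contra! hx
  have hcopy := hf.comap (some_mk_injective i) fun _ _ => BlowupAdj.copy (A := A) i
  exact hA (hcopy.hasAcyclicColoring_of_forall_ne hx)

lemma not_hasAcyclicColoring_blowupAdj (hn : n ≠ 0) {r : ℕ} (hA : ¬ HasAcyclicColoring A r) :
    ¬ HasAcyclicColoring (BlowupAdj (n := n) A) (r + 1) := by
  rintro ⟨f, hf⟩
  choose w hw using fun i => IsAcyclicColoring.exists_apply_some_mk_eq hA hf i (f none)
  have hmono (j : ZMod (n + 1)) : f (blowupTransversal w j) = f none := by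
    cases j using Fin.cases with
    | zero => rfl
    | succ i => exact hw i
  obtain ⟨i, j, hij⟩ := hf _ _ (isDicycle_blowupTransversal hn w)
  exact hij ((hmono i).trans (hmono j).symm)

lemma hasAcyclicColoring_succ_of_forall_copy {r : ℕ}
    {B : Option (Fin n × W) → Option (Fin n × W) → Prop} (hB : B ≤ BlowupAdj A)
    (hcopy : ∀ i, HasAcyclicColoring (fun w w' => B (some (i, w)) (some (i, w'))) r) :
    HasAcyclicColoring B (r + 1) := by
  choose g hg using hcopy
  let f : Option (Fin n × W) → Fin (r + 1)
    | none => 0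
    | some (i, w) => (g i w).succ
  refine ⟨f, fun ℓ c hc => ?_⟩
  by_cases hnone : ∀ j, c j ≠ none
  · obtain ⟨i, d, rfl⟩ := (hc.mono hB).exists_eq_some_mk_of_forall_ne_none hnone
    obtain ⟨j, j', hjj'⟩ := hg i ℓ d hc.of_comp
    exact ⟨j, j', (Fin.succ_injective _).ne hjj'⟩
  · push Not at hnone
    obtain ⟨j, hj⟩ := hnone
    have hnext : c (j + 1) ≠ none := hj ▸ (hc.apply_ne_apply_add_one j).symm
    obtain ⟨⟨i, w⟩, hp⟩ := Option.ne_none_iff_exists'.1 hnext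
    refine ⟨j + 1, j, ?_⟩
    rw [hp, hj]
    exact Fin.succ_ne_zero _

lemma IsGirthTight.blowupAdj (hn : n ≠ 0) {r : ℕ} (hA : IsGirthTight A (n + 1) r) :
    IsGirthTight (BlowupAdj (n := n) A) (n + 1) (r + 1) where
  irrefl := BlowupAdj.irrefl hn hA.irrefl
  not_hasAcyclicColoring := not_hasAcyclicColoring_blowupAdj hn hA.not_hasAcyclicColoring
  le_length _ _ hc := hc.succ_le_length_of_blowupAdj hA.le_length
  hasAcyclicColoring_of_le B hB hno := by
    refine hasAcyclicColoring_succ_of_forall_copy hB fun i => ?_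
    refine hA.hasAcyclicColoring_of_le _ (fun _ _ h => blowupAdj_some_some_iff.1 (hB _ _ h)) ?_
    rintro ⟨c, hc⟩
    exact hno ⟨_, hc.map (some_mk_injective i) fun _ _ h => h⟩

lemma card_option_fin_prod_le_pow_succ [Fintype W] {r : ℕ}
    (hW : Fintype.card W ≤ (n + 1) ^ r) :
    Fintype.card (Option (Fin n × W)) ≤ (n + 1) ^ (r + 1) := by
  calc Fintype.card (Option (Fin n × W)) = n * Fintype.card W + 1 := by simp
    _ ≤ n * (n + 1) ^ r + (n + 1) ^ r := by gcongr; exact Nat.one_le_pow' r n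
    _ = (n + 1) ^ (r + 1) := by ring

end Blowup

theorem exists_isGirthTight (r k : ℕ) (hr : 1 ≤ r) (hk : 2 ≤ k) :
    ∃ (V : Type) (_ : Fintype V) (A : V → V → Prop),
      Fintype.card V ≤ k ^ r ∧ IsGirthTight A k r := by
  obtain ⟨n, rfl⟩ : ∃ n, k = n + 1 := ⟨k - 1, by omega⟩
  induction r, hr using Nat.le_induction with
  | base => exact ⟨ZMod (n + 1), inferInstance, CycleAdj (n + 1), by simp, isGirthTight_cycleAdj hk⟩
  | succ r _ ih =>
    obtain ⟨W, _, A, hcard, hA⟩ := ih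
    exact ⟨Option (Fin n × W), inferInstance, BlowupAdj A,
      card_option_fin_prod_le_pow_succ hcard, hA.blowupAdj (by omega)⟩

theorem exists_critical_digraph_general (r k : ℕ) (hr : 1 ≤ r) (hk : 2 ≤ k) :
    ∃ (V : Type) (_ : Fintype V) (Adj : V → V → Prop),
      (∀ v : V, ¬ Adj v v) ∧
      Fintype.card V ≤ k ^ r ∧
      ¬ HasAcyclicColoring Adj r ∧
      (∀ u v : V, Adj u v →
        HasAcyclicColoring (fun a b => Adj a b ∧ ¬(a = u ∧ b = v)) r) ∧
      (∃ c : ZMod k → V, IsDicycle Adj k c) ∧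
      (∀ (ℓ : ℕ) (c : ZMod ℓ → V), IsDicycle Adj ℓ c → k ≤ ℓ) := by
  obtain ⟨V, hV, A, hcard, hA⟩ := exists_isGirthTight r k hr hk
  obtain ⟨B, hBA, hB, hcrit⟩ := exists_critical_subdigraph hA.not_hasAcyclicColoring
  have hcycle : ∃ c : ZMod k → V, IsDicycle B k c := by
    by_contra hno
    exact hB (hA.hasAcyclicColoring_of_le B hBA hno)
  exact ⟨V, hV, B, fun v h => hA.irrefl v (hBA v v h), hcard, hB, hcrit, hcycle,
    fun ℓ c hc => hA.le_length ℓ c (hc.mono hBA)⟩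

/-- For every `r ≥ 1` and `k ≥ 3` there is a digraph `H` with at most `k ^ r`
vertices, no acyclic `r`-coloring, such that deleting any arc yields a digraph
with an acyclic `r`-coloring, and whose directed girth is exactly `k`. -/
theorem exists_critical_digraph (r k : ℕ) (hr : 1 ≤ r) (hk : 3 ≤ k) :
    ∃ (V : Type) (_ : Fintype V) (Adj : V → V → Prop),
      (∀ v : V, ¬ Adj v v) ∧
      Fintype.card V ≤ k ^ r ∧
      ¬ HasAcyclicColoring Adj r ∧
      (∀ u v : V, Adj u v →
        HasAcyclicColoring (fun a b => Adj a b ∧ ¬(a = u ∧ b = v)) r) ∧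
      (∃ c : ZMod k → V, IsDicycle Adj k c) ∧
      (∀ (ℓ : ℕ) (c : ZMod ℓ → V), IsDicycle Adj ℓ c → k ≤ ℓ) :=
  exists_critical_digraph_general r k hr (by omega)
end

section
/- For all integers r and k with 3 ≤ k ≤ r, there exists a finite digraph H with at most k^{⌈k(1 + ln(r/k))⌉} vertices such that: H has no acyclic r-coloring; for every arc uv of H, the digraph obtained from H by deleting the arc uv has an acyclic r-coloring; and the directed girth of H is exactly k. -/
open Relation

/-! ### Walks and girth -/

section Walk

variable {V : Type*} {R S : V → V → Prop} {a b c : V} {m n k : ℕ}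

/-- `HasWalk R a n b`: the digraph `R` has a directed walk with `n` arcs from `a` to `b`. This is
`Relation.ReflTransGen` graded by length; vertices and arcs may be repeated. -/
inductive HasWalk (R : V → V → Prop) (a : V) : ℕ → V → Prop
  | refl : HasWalk R a 0 a
  | tail {n : ℕ} {b c : V} : HasWalk R a n b → R b c → HasWalk R a (n + 1) c

theorem HasWalk.single (h : R a b) : HasWalk R a 1 b :=
  .tail .refl h

theorem HasWalk.trans (hab : HasWalk R a m b) (hbc : HasWalk R b n c) : HasWalk R a (m + n) c := by
  induction hbc with
  | refl => exact hab
  | tail _ h ih => exact ih.tail h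

theorem HasWalk.mono (h : R ≤ S) (hab : HasWalk R a n b) : HasWalk S a n b := by
  induction hab with
  | refl => exact .refl
  | tail _ hbc ih => exact ih.tail (h _ _ hbc)

theorem hasWalk_of_seq {p : ℕ → V} (hp : ∀ i < n, R (p i) (p (i + 1))) :
    HasWalk R (p 0) n (p n) := by
  induction n with
  | zero => exact .refl
  | succ n ih => exact (ih fun i hi => hp i (by omega)).tail (hp n n.lt_succ_self)

theorem HasWalk.exists_seq (h : HasWalk R a n b) :
    ∃ p : ℕ → V, p 0 = a ∧ p n = b ∧ ∀ i < n, R (p i) (p (i + 1)) := by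
  induction h with
  | refl => exact ⟨fun _ => a, rfl, rfl, by simp⟩
  | @tail n b c _ hbc ih =>
    obtain ⟨p, hp0, hpn, hp⟩ := ih
    refine ⟨Function.update p (n + 1) c, by simpa, by simp, fun i hi => ?_⟩
    rcases Nat.lt_succ_iff_lt_or_eq.1 hi with hi | rfl
    · simpa [Function.update_of_ne, hi.ne, show i ≠ n + 1 by omega] using hp i hi
    · simpa [hpn] using hbc

theorem transGen_iff_exists_hasWalk : TransGen R a b ↔ ∃ n, 0 < n ∧ HasWalk R a n b := by
  constructor
  · intro h
    induction h with
    | single h => exact ⟨1, one_pos, .single h⟩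
    | tail _ hbc ih =>
      obtain ⟨n, -, hn⟩ := ih
      exact ⟨n + 1, n.succ_pos, hn.tail hbc⟩
  · rintro ⟨n, hn, h⟩
    have reflTransGen {c : V} {m : ℕ} (h : HasWalk R a m c) : ReflTransGen R a c := by
      induction h with
      | refl => exact .refl
      | tail _ hbc ih => exact ih.tail hbc
    cases h with
    | refl => exact absurd hn (lt_irrefl 0)
    | tail h hbc => exact .tail' (reflTransGen h) hbc

/-- The directed girth of `R` is at least `k`. The bound is imposed on all closed walks rather than
on directed cycles: a shortest closed walk is a cycle, and closed walks of length one also exclude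
loops as soon as `2 ≤ k`. -/
def GirthGE (R : V → V → Prop) (k : ℕ) : Prop :=
  ∀ (n : ℕ) (a : V), 0 < n → HasWalk R a n a → k ≤ n

theorem GirthGE.anti (hR : GirthGE R k) (h : S ≤ R) : GirthGE S k :=
  fun n a hn hw => hR n a hn (hw.mono h)

theorem GirthGE.of_le (hR : GirthGE R k) (h : m ≤ k) : GirthGE R m :=
  fun n a hn hw => h.trans (hR n a hn hw)

theorem GirthGE.irrefl (hR : GirthGE R k) (hk : 2 ≤ k) (a : V) : ¬ R a a := fun h =>
  absurd (hR 1 a one_pos (.single h)) (by omega)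

end Walk

/-! ### Directed cycles and closed walks -/

section Dicycle

variable {V : Type} {R : V → V → Prop} {a : V} {ℓ n k r : ℕ}

theorem IsDicycle.length_pos {c : ZMod ℓ → V} (hc : IsDicycle R ℓ c) : 0 < ℓ :=
  two_pos.trans_le hc.1

theorem IsDicycle.hasWalk {c : ZMod ℓ → V} (hc : IsDicycle R ℓ c) : HasWalk R (c 0) ℓ (c 0) := by
  simpa using hasWalk_of_seq (p := fun i : ℕ => c i) (n := ℓ) fun i _ => by simpa using hc.2.2 i

theorem GirthGE.le_of_isDicycle {c : ZMod ℓ → V} (hR : GirthGE R k) (hc : IsDicycle R ℓ c) :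
    k ≤ ℓ :=
  hR ℓ (c 0) hc.length_pos hc.hasWalk

theorem GirthGE.exists_isDicycle (hR : GirthGE R n) (hn : 2 ≤ n) (hw : HasWalk R a n a) :
    ∃ c : ZMod n → V, IsDicycle R n c := by
  obtain ⟨p, hp0, hpn, hp⟩ := hw.exists_seq
  have : NeZero n := ⟨by omega⟩
  have : Fact (1 < n) := ⟨hn⟩
  -- A repeated vertex would cut out a shorter closed walk.
  have ne_of_lt (i j : ℕ) (hij : i < j) (hj : j < n) : p i ≠ p j := fun heq => by
    have hwalk := hasWalk_of_seq (R := R) (p := fun s => p (i + s)) (n := j - i)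
      fun s hs => hp (i + s) (by omega)
    simp only [add_zero, Nat.add_sub_cancel' hij.le, ← heq] at hwalk
    have := hR (j - i) _ (by omega) hwalk
    omega
  refine ⟨fun j => p j.val, hn, fun x y hxy => ZMod.val_injective n ?_, fun j => ?_⟩
  · rcases lt_trichotomy x.val y.val with h | h | h
    · exact absurd hxy (ne_of_lt _ _ h y.val_lt)
    · exact h
    · exact absurd hxy.symm (ne_of_lt _ _ h x.val_lt)
  · have harc := hp j.val j.val_lt
    simp only [ZMod.val_add, ZMod.val_one]
    rcases Nat.lt_or_ge (j.val + 1) n with h | h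
    · rwa [Nat.mod_eq_of_lt h]
    · have hlast : j.val + 1 = n := by have := j.val_lt; omega
      rw [hlast, hpn] at harc
      rwa [hlast, Nat.mod_self, hp0]

theorem GirthGE.succ (hR : GirthGE R k) (hk : 2 ≤ k) (hno : ¬ ∃ c, IsDicycle R k c) :
    GirthGE R (k + 1) := fun n a hn hw =>
  (hR n a hn hw).lt_of_ne fun h => hno (by subst h; exact hR.exists_isDicycle hk hw)

theorem forall_not_isDicycle_iff_forall_not_transGen (hR : ∀ v, ¬ R v v) :
    (∀ ℓ c, ¬ IsDicycle R ℓ c) ↔ ∀ v, ¬ TransGen R v v := by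
  classical
  constructor
  · intro h v hv
    have hclosed : ∃ n, 0 < n ∧ ∃ v, HasWalk R v n v :=
      (transGen_iff_exists_hasWalk.1 hv).imp fun n hn => ⟨hn.1, v, hn.2⟩
    obtain ⟨hpos, w, hw⟩ := Nat.find_spec hclosed
    have hgirth : GirthGE R (Nat.find hclosed) :=
      fun n a hn ha => Nat.find_min' hclosed ⟨hn, a, ha⟩
    have hne_one : Nat.find hclosed ≠ 1 := fun h1 => by
      rw [h1] at hw
      obtain ⟨p, rfl, hp1, hp⟩ := hw.exists_seq
      exact hR (p 0) (hp1 ▸ hp 0 one_pos)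
    obtain ⟨c, hc⟩ := hgirth.exists_isDicycle (by omega) hw
    exact h _ c hc
  · intro h ℓ c hc
    exact h (c 0) (transGen_iff_exists_hasWalk.2 ⟨ℓ, hc.length_pos, hc.hasWalk⟩)

/-- The subdigraph of `R` formed by the arcs whose two ends get the same colour under `f`. -/
def MonochromaticArc {C : Type*} (R : V → V → Prop) (f : V → C) : V → V → Prop :=
  fun a b => R a b ∧ f a = f b

theorem isDicycle_monochromaticArc_iff {C : Type*} {f : V → C} {c : ZMod ℓ → V} :
    IsDicycle (MonochromaticArc R f) ℓ c ↔ IsDicycle R ℓ c ∧ ∀ i j, f (c i) = f (c j) := by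
  refine ⟨fun hc => ⟨⟨hc.1, hc.2.1, fun j => (hc.2.2 j).1⟩, ?_⟩,
    fun ⟨hc, hf⟩ => ⟨hc.1, hc.2.1, fun j => ⟨hc.2.2 j, hf _ _⟩⟩⟩
  have hperiodic : Function.Periodic (f ∘ c) 1 := fun j => (hc.2.2 j).2.symm
  have hconst (i : ZMod ℓ) : f (c i) = f (c 0) := by
    obtain ⟨z, rfl⟩ := ZMod.intCast_surjective i
    simpa using hperiodic.int_mul_eq z
  exact fun i j => (hconst i).trans (hconst j).symm

theorem hasAcyclicColoring_iff_transGen (hR : ∀ v, ¬ R v v) :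
    HasAcyclicColoring R r ↔ ∃ f : V → Fin r, ∀ v, ¬ TransGen (MonochromaticArc R f) v v := by
  refine exists_congr fun f => ?_
  rw [← forall_not_isDicycle_iff_forall_not_transGen fun v h => hR v h.1]
  simp only [isDicycle_monochromaticArc_iff, not_and, not_forall, ne_eq]

theorem hasAcyclicColoring_card {C : Type*} [Fintype C] (f : V → C)
    (hf : ∀ ℓ c, IsDicycle R ℓ c → ∃ i j, f (c i) ≠ f (c j)) :
    HasAcyclicColoring R (Fintype.card C) :=
  ⟨Fintype.equivFin C ∘ f, fun ℓ c hc => by simpa using hf ℓ c hc⟩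

end Dicycle

/-! ### Cyclic blow-ups -/

/-- The cyclic blow-up of `R`: copies of `R` indexed by `ZMod k`, with all arcs from each copy to
the next one (the lexicographic product of the directed `k`-cycle with `R`). -/
def CyclicBlowup {V : Type*} (k : ℕ) (R : V → V → Prop) : ZMod k × V → ZMod k × V → Prop :=
  fun x y => y.1 = x.1 + 1 ∨ x.1 = y.1 ∧ R x.2 y.2

section BlowupGirth

variable {V : Type*} {R : V → V → Prop} {k n : ℕ}

theorem HasWalk.of_cyclicBlowup {a b : ZMod k × V}
    (h : HasWalk (CyclicBlowup k R) a n b) :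
    ∃ s ≤ n, b.1 = a.1 + s ∧ (s = 0 → HasWalk R a.2 n b.2) := by
  induction h with
  | refl => exact ⟨0, le_rfl, by simp, fun _ => .refl⟩
  | tail _ hbc ih =>
    obtain ⟨s, hs, hb, hwalk⟩ := ih
    rcases hbc with hnext | ⟨hsame, hbc⟩
    · exact ⟨s + 1, by omega, by rw [hnext, hb, Nat.cast_succ, add_assoc], by omega⟩
    · exact ⟨s, by omega, hsame ▸ hb, fun h0 => (hwalk h0).tail hbc⟩

theorem GirthGE.cyclicBlowup (hR : GirthGE R k) : GirthGE (CyclicBlowup k R) k := by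
  intro n a hn hw
  obtain ⟨s, hs, hsum, hwalk⟩ := hw.of_cyclicBlowup
  have hdvd : k ∣ s := (ZMod.natCast_eq_zero_iff s k).1 (by simpa using hsum)
  rcases s.eq_zero_or_pos with hs0 | hspos
  · exact hR n a.2 hn (hwalk hs0)
  · exact (Nat.le_of_dvd hspos hdvd).trans hs

end BlowupGirth

section BlowupColoring

variable {V : Type} {R : V → V → Prop} {ℓ k r : ℕ}

theorem isDicycle_cyclicBlowup_transversal (hk : 2 ≤ k) (p : ZMod k → V) :
    IsDicycle (CyclicBlowup k R) k fun j => (j, p j) :=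
  ⟨hk, fun _ _ h => congrArg Prod.fst h, fun _ => .inl rfl⟩

theorem IsDicycle.cyclicBlowup_layer {c : ZMod ℓ → V} (hc : IsDicycle R ℓ c) (i : ZMod k) :
    IsDicycle (CyclicBlowup k R) ℓ fun j => (i, c j) :=
  ⟨hc.1, (Prod.mk_right_injective i).comp hc.2.1, fun j => .inr ⟨rfl, hc.2.2 j⟩⟩

theorem exists_layer_forall_ne {C : Type*} (hk : 2 ≤ k) {f : ZMod k × V → C}
    (hf : ∀ ℓ c, IsDicycle (CyclicBlowup k R) ℓ c → ∃ i j, f (c i) ≠ f (c j)) (col : C) :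
    ∃ i, ∀ v, f (i, v) ≠ col := by
  by_contra! hall
  choose p hp using hall
  obtain ⟨i, j, hij⟩ := hf k _ (isDicycle_cyclicBlowup_transversal hk p)
  exact hij ((hp i).trans (hp j).symm)

theorem HasAcyclicColoring.of_cyclicBlowup (hk : 2 ≤ k)
    (h : HasAcyclicColoring (CyclicBlowup k R) r) :
    ∃ r', HasAcyclicColoring R r' ∧ k * r' ≤ (k - 1) * r := by
  obtain ⟨f, hf⟩ := h
  have : NeZero k := ⟨by omega⟩
  choose missing hmissing using exists_layer_forall_ne hk hf
  obtain ⟨i, hi⟩ := Fintype.exists_le_card_fiber_of_nsmul_le_card missing (b := (r / k : ℚ))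
    (by simp [field])
  have hfiber : r ≤ k * Fintype.card {col // missing col = i} := by
    rw [Fintype.card_subtype, mul_comm]
    exact_mod_cast (div_le_iff₀ (by exact_mod_cast NeZero.pos k)).1 hi
  have hlayer (v : V) : missing (f (i, v)) ≠ i := fun h => hmissing _ v (by rw [h])
  refine ⟨Fintype.card {col // missing col ≠ i},
    hasAcyclicColoring_card (fun v => ⟨f (i, v), hlayer v⟩) fun ℓ c hc => ?_, ?_⟩
  · simpa [Subtype.ext_iff] using hf ℓ _ (hc.cyclicBlowup_layer i)
  · rw [Fintype.card_subtype_compl, Fintype.card_fin, Nat.mul_sub, Nat.sub_one_mul]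
    omega

end BlowupColoring

/-! ### Growth of the number of colours -/

section ColorBound

variable {k r t : ℕ}

/-- A lower bound for the number of colours needed by the `t`-fold cyclic blow-up of a single
vertex: each blow-up multiplies the bound by `k / (k - 1)` and rounds up. -/
def blowupColorBound (k : ℕ) : ℕ → ℕ
  | 0 => 1
  | t + 1 => (k * blowupColorBound k t) ⌈/⌉ (k - 1)

theorem exists_girthGE_and_blowupColorBound_le (hk : 2 ≤ k) (t : ℕ) :
    ∃ (V : Type) (_ : Fintype V) (R : V → V → Prop), Fintype.card V = k ^ t ∧ GirthGE R k ∧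
      ∀ r, HasAcyclicColoring R r → blowupColorBound k t ≤ r := by
  induction t with
  | zero =>
    refine ⟨Unit, inferInstance, fun _ _ => False, by simp, fun n a hn hw => ?_, ?_⟩
    · cases hw with
      | refl => exact absurd hn (lt_irrefl 0)
      | tail _ h => exact h.elim
    · rintro r ⟨f, -⟩
      exact (f ()).pos
  | succ t ih =>
    obtain ⟨V, _, R, hcard, hgirth, hcolor⟩ := ih
    have : NeZero k := ⟨by omega⟩
    refine ⟨ZMod k × V, inferInstance, CyclicBlowup k R, ?_, hgirth.cyclicBlowup, fun r hr => ?_⟩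
    · rw [Fintype.card_prod, ZMod.card, hcard, pow_succ']
    · obtain ⟨r', hr', hle⟩ := hr.of_cyclicBlowup hk
      exact (ceilDiv_le_iff_le_mul (by omega)).2 ((Nat.mul_le_mul_left k (hcolor r' hr')).trans hle)

theorem mul_blowupColorBound_le (hk : 2 ≤ k) (t : ℕ) :
    k * blowupColorBound k t ≤ (k - 1) * blowupColorBound k (t + 1) :=
  (ceilDiv_le_iff_le_mul (by omega)).1 le_rfl

theorem lt_blowupColorBound_self (hk : 2 ≤ k) (t : ℕ) : t < blowupColorBound k t := by
  induction t with
  | zero => exact one_pos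
  | succ t ih =>
    have hstep : blowupColorBound k t < blowupColorBound k (t + 1) := by
      by_contra! hle
      have := (mul_blowupColorBound_le hk t).trans (Nat.mul_le_mul_left (k - 1) hle)
      have := Nat.le_of_mul_le_mul_right this (by omega)
      omega
    omega

theorem pow_mul_blowupColorBound_le (hk : 2 ≤ k) (t s : ℕ) :
    k ^ s * blowupColorBound k t ≤ (k - 1) ^ s * blowupColorBound k (t + s) := by
  induction s with
  | zero => simp
  | succ s ih =>
    calc k ^ (s + 1) * blowupColorBound k t
        = k * (k ^ s * blowupColorBound k t) := by ring
      _ ≤ k * ((k - 1) ^ s * blowupColorBound k (t + s)) := by gcongr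
      _ = (k - 1) ^ s * (k * blowupColorBound k (t + s)) := by ring
      _ ≤ (k - 1) ^ s * ((k - 1) * blowupColorBound k (t + s + 1)) :=
        Nat.mul_le_mul_left _ (mul_blowupColorBound_le hk (t + s))
      _ = (k - 1) ^ (s + 1) * blowupColorBound k (t + (s + 1)) := by rw [pow_succ, mul_assoc]; rfl

theorem sub_one_pow_mul_lt_pow_mul {k r : ℝ} {s : ℕ} (hk : 1 ≤ k) (hr : 0 < r)
    (hs : k * Real.log (r / k) < s) : (k - 1) ^ s * r < k ^ s * k := by
  have hk0 : 0 < k := one_pos.trans_le hk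
  have hbase : k - 1 ≤ k * Real.exp (-(1 / k)) :=
    calc k - 1 = k * (1 - 1 / k) := by field_simp
      _ ≤ k * Real.exp (-(1 / k)) := by gcongr; exact Real.one_sub_le_exp_neg _
  have hexp : Real.exp (-(s / k)) < k / r := by
    rw [← Real.lt_log_iff_exp_lt (by positivity), ← inv_div r k, Real.log_inv, neg_lt_neg_iff,
      lt_div_iff₀' hk0]
    exact hs
  calc (k - 1) ^ s * r ≤ (k * Real.exp (-(1 / k))) ^ s * r := by gcongr
    _ = k ^ s * Real.exp (-(s / k)) * r := by
      rw [mul_pow, ← Real.exp_nat_mul, mul_neg, mul_one_div]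
    _ < k ^ s * (k / r) * r := by gcongr
    _ = k ^ s * k := by field_simp

theorem lt_blowupColorBound (hk : 2 ≤ k) (hr : 0 < r) (hkt : k - 1 ≤ t)
    (ht : (k : ℝ) * (1 + Real.log (r / k)) ≤ t) : r < blowupColorBound k t := by
  obtain ⟨s, rfl⟩ := Nat.exists_eq_add_of_le hkt
  rw [Nat.cast_add, Nat.cast_pred (by omega)] at ht
  have hpow : (k - 1) ^ s * r < k ^ s * k := by
    have := sub_one_pow_mul_lt_pow_mul (k := k) (r := r) (s := s)
      (by exact_mod_cast one_le_two.trans hk) (by exact_mod_cast hr) (by linarith)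
    rw [← Nat.cast_pred (by omega)] at this
    exact_mod_cast this
  have hstart : k ≤ blowupColorBound k (k - 1) := by
    have := lt_blowupColorBound_self hk (k - 1)
    omega
  refine lt_of_mul_lt_mul_left' (a := (k - 1) ^ s) ?_
  calc (k - 1) ^ s * r < k ^ s * k := hpow
    _ ≤ k ^ s * blowupColorBound k (k - 1) := by gcongr
    _ ≤ (k - 1) ^ s * blowupColorBound k (k - 1 + s) := pow_mul_blowupColorBound_le hk _ s

theorem lt_blowupColorBound_ceil (hk : 2 ≤ k) (hkr : k ≤ r) :
    r < blowupColorBound k ⌈(k : ℝ) * (1 + Real.log ((r : ℝ) / (k : ℝ)))⌉₊ := by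
  have hlog : 0 ≤ Real.log ((r : ℝ) / k) :=
    Real.log_nonneg ((one_le_div (by positivity)).2 (by exact_mod_cast hkr))
  have hle : (k : ℝ) ≤ k * (1 + Real.log ((r : ℝ) / k)) :=
    le_mul_of_one_le_right k.cast_nonneg (by linarith)
  have hceil := Nat.le_ceil ((k : ℝ) * (1 + Real.log ((r : ℝ) / k)))
  have hkt : k ≤ ⌈(k : ℝ) * (1 + Real.log ((r : ℝ) / k))⌉₊ := by
    exact_mod_cast hle.trans hceil
  exact lt_blowupColorBound hk (by omega) (by omega) hceil

end ColorBound

/-! ### Bypassing a vertex -/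

section Bypass

variable {V : Type*} {R : V → V → Prop} {x : V}

/-- The digraph obtained from `R` by deleting the vertex `x` and adding an arc `a → b` for all
arcs `a → x` and `x → b`. -/
def Bypass (R : V → V → Prop) (x : V) : {v // v ≠ x} → {v // v ≠ x} → Prop :=
  fun a b => R a b ∨ R a x ∧ R x b

/-- Between its first and its last visit to `x`, a walk can be shortcut; this is why a single extra
arc suffices however many arcs of the walk bypass `x`. -/
theorem HasWalk.of_bypass {a b : {v // v ≠ x}} {n : ℕ} (h : HasWalk (Bypass R x) a n b) :
    HasWalk R a n b ∨ ∃ i j, 0 < i ∧ i + j ≤ n + 1 ∧ HasWalk R a i x ∧ HasWalk R x j b := by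
  induction h with
  | refl => exact .inl .refl
  | @tail n b c _ hbc ih =>
    rcases ih, hbc with ⟨hab | ⟨i, j, hi, hij, hax, hxb⟩, hbc | ⟨hbx, hxc⟩⟩
    · exact .inl (hab.tail hbc)
    · exact .inr ⟨n + 1, 1, n.succ_pos, le_rfl, hab.tail hbx, .single hxc⟩
    · exact .inr ⟨i, j + 1, hi, by omega, hax, hxb.tail hbc⟩
    · exact .inr ⟨i, 1, hi, by omega, hax, .single hxc⟩

theorem GirthGE.bypass {k : ℕ} (hR : GirthGE R (k + 1)) (x : V) : GirthGE (Bypass R x) k := by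
  intro n a hn hw
  rcases hw.of_bypass with hw | ⟨i, j, hi, hij, hax, hxa⟩
  · exact (Nat.le_succ k).trans (hR n a hn hw)
  · have := hR (i + j) a (by omega) (hax.trans hxa)
    omega

theorem transGen_bypass (hx : ¬ R x x) {a : {v // v ≠ x}} {v : V} (h : TransGen R a v)
    {c : {v // v ≠ x}} (hc : v = c ∨ v = x ∧ R x c) : TransGen (Bypass R x) a c := by
  induction h generalizing c with
  | single h =>
    rcases hc with rfl | ⟨rfl, hxc⟩
    · exact .single (.inl h)
    · exact .single (.inr ⟨h, hxc⟩)
  | @tail u v _ huv ih =>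
    by_cases hu : u = x
    · subst hu
      rcases hc with rfl | ⟨rfl, -⟩
      · exact ih (.inr ⟨rfl, huv⟩)
      · exact absurd huv hx
    · have hau := ih (c := ⟨u, hu⟩) (.inl rfl)
      rcases hc with rfl | ⟨rfl, hxc⟩
      · exact hau.tail (.inl huv)
      · exact hau.tail (.inr ⟨huv, hxc⟩)

theorem not_transGen_of_bypass (hx : ¬ R x x) (h : ∀ a, ¬ TransGen (Bypass R x) a a) (v : V) :
    ¬ TransGen R v v := by
  intro hv
  by_cases hvx : v = x
  · subst hvx
    obtain ⟨y, hvy, hyv⟩ := TransGen.head'_iff.1 hv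
    have hy : y ≠ v := by rintro rfl; exact hx hvy
    have hyv : TransGen R y v := (reflTransGen_iff_eq_or_transGen.1 hyv).resolve_left hy.symm
    exact h ⟨y, hy⟩ (transGen_bypass hx hyv (.inr ⟨rfl, hvy⟩))
  · exact h ⟨v, hvx⟩ (transGen_bypass hx hv (.inl rfl))

end Bypass

theorem HasAcyclicColoring.of_bypass {V : Type} {R : V → V → Prop} {r : ℕ} (hr : 0 < r)
    (hR : GirthGE R 3) (x : V) (h : HasAcyclicColoring (Bypass R x) r) :
    HasAcyclicColoring R r := by
  have hirrefl := hR.irrefl (by norm_num)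
  rw [hasAcyclicColoring_iff_transGen ((hR.bypass x).irrefl le_rfl)] at h
  rw [hasAcyclicColoring_iff_transGen hirrefl]
  obtain ⟨f, hf⟩ := h
  let g : V → Fin r := Function.extend Subtype.val f fun _ => ⟨0, hr⟩
  have hg (a : {v // v ≠ x}) : g a = f a := Subtype.val_injective.extend_apply f _ a
  refine ⟨g, not_transGen_of_bypass (x := x) (fun h => hirrefl x h.1) fun a ha =>
    hf a (TransGen.mono ?_ _ _ ha)⟩
  rintro b c (⟨hbc, hcol⟩ | ⟨⟨hbx, hcol⟩, hxc, hcol'⟩)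
  · exact ⟨.inl hbc, by rw [← hg, ← hg, hcol]⟩
  · exact ⟨.inr ⟨hbx, hxc⟩, by rw [← hg, ← hg, hcol, hcol']⟩

/-! ### Critical digraphs -/

theorem exists_arc_critical_le {V : Type} [Finite V] {R : V → V → Prop} {r : ℕ}
    (hR : ¬ HasAcyclicColoring R r) :
    ∃ S ≤ R, ¬ HasAcyclicColoring S r ∧
      ∀ u v, S u v → HasAcyclicColoring (fun a b => S a b ∧ ¬(a = u ∧ b = v)) r := by
  obtain ⟨S, hSR, hS⟩ :=
    exists_minimal_le_of_wellFoundedLT (fun S => ¬ HasAcyclicColoring S r) R hR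
  refine ⟨S, hSR, hS.prop, fun u v huv => ?_⟩
  by_contra hdel
  exact (hS.le_of_le hdel (fun _ _ h => h.1) u v huv).2 ⟨rfl, rfl⟩

theorem exists_critical_digraph_card_le {r k : ℕ} (hk : 2 ≤ k) (hr : 0 < r) {V : Type} [Fintype V]
    {R : V → V → Prop} (hgirth : GirthGE R k) (hR : ¬ HasAcyclicColoring R r) :
    ∃ (W : Type) (_ : Fintype W) (S : W → W → Prop), Fintype.card W ≤ Fintype.card V ∧
      GirthGE S k ∧ ¬ HasAcyclicColoring S r ∧
      (∀ u v, S u v → HasAcyclicColoring (fun a b => S a b ∧ ¬(a = u ∧ b = v)) r) ∧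
      ∃ c : ZMod k → W, IsDicycle S k c := by
  classical
  induction hcard : Fintype.card V using Nat.strong_induction_on generalizing V with
  | _ n ih =>
    obtain ⟨S, hSR, hS, hcrit⟩ := exists_arc_critical_le hR
    have hgirthS := hgirth.anti hSR
    by_cases hcycle : ∃ c : ZMod k → V, IsDicycle S k c
    · exact ⟨V, inferInstance, S, hcard.le, hgirthS, hS, hcrit, hcycle⟩
    have hgirth_succ := hgirthS.succ hk hcycle
    obtain ⟨x⟩ : Nonempty V := by
      by_contra hempty
      rw [not_nonempty_iff] at hempty
      exact hS ⟨isEmptyElim, fun _ c _ => isEmptyElim (c 0)⟩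
    have hlt : Fintype.card {v // v ≠ x} < n :=
      hcard ▸ Fintype.card_subtype_lt (x := x) (by simp)
    obtain ⟨W, hW, S', hcardW, hprops⟩ := ih _ hlt (hgirth_succ.bypass x)
      (fun h => hS (h.of_bypass hr (hgirth_succ.of_le (by omega)) x)) rfl
    exact ⟨W, hW, S', hcardW.trans hlt.le, hprops⟩

theorem exists_small_critical_digraph_general {r k t : ℕ} (hk : 2 ≤ k) (hr : 0 < r)
    (ht : r < blowupColorBound k t) :
    ∃ (V : Type) (_ : Fintype V) (Adj : V → V → Prop),
      (∀ v : V, ¬ Adj v v) ∧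
      Fintype.card V ≤ k ^ t ∧
      ¬ HasAcyclicColoring Adj r ∧
      (∀ u v : V, Adj u v →
        HasAcyclicColoring (fun a b => Adj a b ∧ ¬(a = u ∧ b = v)) r) ∧
      (∃ c : ZMod k → V, IsDicycle Adj k c) ∧
      (∀ (ℓ : ℕ) (c : ZMod ℓ → V), IsDicycle Adj ℓ c → k ≤ ℓ) := by
  obtain ⟨V, _, R, hcard, hgirthR, hcolor⟩ := exists_girthGE_and_blowupColorBound_le hk t
  obtain ⟨W, hW, S, hcardW, hgirth, hS, hcrit, hcycle⟩ :=
    exists_critical_digraph_card_le hk hr hgirthR fun h => (hcolor r h).not_gt ht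
  exact ⟨W, hW, S, hgirth.irrefl hk, hcard ▸ hcardW, hS, hcrit, hcycle,
    fun _ _ => hgirth.le_of_isDicycle⟩

/-- For `3 ≤ k ≤ r` there is a digraph `H` with at most
`k ^ ⌈k (1 + ln (r / k))⌉` vertices, no acyclic `r`-coloring, such that
deleting any arc yields an acyclically `r`-colorable digraph, and whose
directed girth is exactly `k`. -/
theorem exists_small_critical_digraph (r k : ℕ) (hk : 3 ≤ k) (hkr : k ≤ r) :
    ∃ (V : Type) (_ : Fintype V) (Adj : V → V → Prop),
      (∀ v : V, ¬ Adj v v) ∧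
      Fintype.card V ≤ k ^ (⌈(k : ℝ) * (1 + Real.log ((r : ℝ) / (k : ℝ)))⌉₊) ∧
      ¬ HasAcyclicColoring Adj r ∧
      (∀ u v : V, Adj u v →
        HasAcyclicColoring (fun a b => Adj a b ∧ ¬(a = u ∧ b = v)) r) ∧
      (∃ c : ZMod k → V, IsDicycle Adj k c) ∧
      (∀ (ℓ : ℕ) (c : ZMod ℓ → V), IsDicycle Adj ℓ c → k ≤ ℓ) :=
  exists_small_critical_digraph_general (by omega) (by omega)
    (lt_blowupColorBound_ceil (by omega) hkr)
end

section
/- For all integers r ≥ 3 and k ≥ 3, there exists a finite simple graph G whose girth is at least k and whose chromatic number is greater than r (i.e., G is not r-colorable). -/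
/-!
Sample a sequence `e` of `2cn` unordered pairs of vertices, out of `n = rs` vertices. A labelled
copy of an `l`-cycle is determined by `l` vertices and `l` positions in `e`, and each of the `l`
pairs at these positions is then forced; as the number of positions is linear in `n`, the expected
number of copies of cycles shorter than `k` is bounded independently of `n`. For a suitable constant
`c`, each entry of `e` falls inside a given set of `s` vertices with probability at least `1 / c`,
so that this set is independent with probability at most `(1 - 1 / c) ^ (2cn) ≤ 4 ^ (-n)`, which
beats the `2 ^ n` choices of the set. For large `s` some sample therefore has fewer than `s` short
cycles and no independent set of size `s`. Deleting a vertex from every short cycle leaves more than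
`(r - 1) s` vertices, too many for `r - 1` independent sets.
-/

open Finset SimpleGraph

section Colorings

variable {V : Type*} [Fintype V]

lemma card_le_mul_indepNum_of_colorable {G : SimpleGraph V} {r : ℕ} (hG : G.Colorable r) :
    Fintype.card V ≤ r * G.indepNum := by
  classical
  obtain ⟨C⟩ := hG
  have card_fiber_le (i : Fin r) : #{v | C v = i} ≤ G.indepNum := by
    refine IsIndepSet.card_le_indepNum ?_
    rw [coe_filter_univ]
    exact C.isIndepSet_colorClass i
  simpa [mul_comm] using
    card_le_mul_card_image_of_maps_to (fun v _ ↦ mem_univ (C v)) _ fun i _ ↦ card_fiber_le i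

lemma indepNum_induce_le {V : Type*} [Finite V] (G : SimpleGraph V) (S : Set V) :
    (G.induce S).indepNum ≤ G.indepNum := by
  have := Fintype.ofFinite V
  obtain ⟨T, hT⟩ := (G.induce S).exists_isNIndepSet_indepNum
  have hT' : G.IsIndepSet (T.map (Function.Embedding.subtype (· ∈ S))) := by
    rw [coe_map]
    exact Set.Pairwise.image hT.isIndepSet
  simpa only [card_map, hT.card_eq] using hT'.card_le_indepNum

lemma indepNum_lt_of_indepSetFinset_eq_empty [DecidableEq V] {G : SimpleGraph V}
    [DecidableRel G.Adj] {s : ℕ} (hG : G.indepSetFinset s = ∅) : G.indepNum < s := by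
  by_contra! hs
  obtain ⟨S, hS⟩ := G.exists_isNIndepSet_indepNum
  obtain ⟨T, hTS, hT⟩ := exists_subset_card_eq (hs.trans_eq hS.card_eq.symm)
  have : T ∈ G.indepSetFinset s :=
    mem_indepSetFinset_iff.mpr ⟨hS.isIndepSet.mono (coe_subset.mpr hTS), hT⟩
  simp [hG] at this

end Colorings

section ShortCycles

lemma labelledCopyCount_eq_natCard {V W : Type*} [Fintype V] [Fintype W] (G : SimpleGraph V)
    (H : SimpleGraph W) : G.labelledCopyCount H = Nat.card (Copy H G) := by
  classical
  rw [labelledCopyCount, Nat.card_eq_fintype_card]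

lemma add_three_le_egirth_iff {V : Type*} {G : SimpleGraph V} {k : ℕ} :
    ((k + 3 : ℕ) : ℕ∞) ≤ G.egirth ↔ ∀ l < k, (cycleGraph (l + 3)).Free G := by
  rw [le_egirth]
  constructor
  · intro hG l hl hcopy
    obtain ⟨v, p, hp, hpl⟩ := (cycleGraph_isContained_iff (by lia)).mp hcopy
    have := Nat.cast_le.mp (hG v p hp)
    lia
  · intro hG v p hp
    rw [Nat.cast_le]
    by_contra! hpk
    have := hp.three_le_length
    exact hG (p.length - 3) (by lia)
      ((cycleGraph_isContained_iff (by lia)).mpr ⟨v, p, hp, by lia⟩)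

lemma exists_finset_forall_free_induce_compl {V J : Type*} [Fintype V] (G : SimpleGraph V)
    (s : Finset J) {W : J → Type*} [∀ j, Fintype (W j)] [∀ j, Nonempty (W j)]
    (H : ∀ j, SimpleGraph (W j)) :
    ∃ T : Finset V, #T ≤ ∑ j ∈ s, G.labelledCopyCount (H j) ∧
      ∀ j ∈ s, (H j).Free (G.induce (T : Set V)ᶜ) := by
  classical
  let w (j : J) : W j := Classical.arbitrary (W j)
  refine ⟨s.biUnion fun j ↦ univ.image fun f : Copy (H j) G ↦ f (w j), ?_, ?_⟩
  · refine card_biUnion_le.trans (sum_le_sum fun j _ ↦ ?_)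
    exact card_image_le
  · rintro j hj ⟨f⟩
    refine (f (w j)).2 (mem_biUnion.mpr ⟨j, hj, mem_image.mpr ?_⟩)
    exact ⟨(Copy.induce G _).comp f, mem_univ _, rfl⟩

lemma card_edgeFinset_cycleGraph (l : ℕ) : #(cycleGraph (l + 3)).edgeFinset = l + 3 := by
  have := (cycleGraph (l + 3)).sum_degrees_eq_twice_card_edges
  simp only [cycleGraph_degree_three_le, sum_const, card_univ, Fintype.card_fin,
    smul_eq_mul] at this
  lia

end ShortCycles

section SampledGraph

variable {V ι : Type*}

/-- The simple graph whose edges are the entries of a sequence of unordered pairs; repeated entries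
and diagonal ones are allowed, but the latter do not contribute. With `e` ranging over all
sequences, this is the random graph obtained from independent uniform pairs. -/
def sampledGraph (e : ι → Sym2 V) : SimpleGraph V := fromEdgeSet (Set.range e)

lemma isIndepSet_sampledGraph_iff [DecidableEq V] {e : ι → Sym2 V} {S : Finset V} :
    (sampledGraph e).IsIndepSet S ↔ ∀ i, e i ∉ S.offDiag.image Sym2.mk.uncurry := by
  simp only [isIndepSet_iff, sampledGraph, fromEdgeSet_adj, Set.mem_range, Set.Pairwise,
    mem_coe, mem_image, mem_offDiag, Prod.exists, Function.uncurry_apply_pair]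
  grind

lemma exists_injective_position {W : Type*} {H : SimpleGraph W} {e : ι → Sym2 V}
    (f : Copy H (sampledGraph e)) :
    ∃ σ : H.edgeSet → ι, Function.Injective σ ∧ ∀ a, e (σ a) = Sym2.map f a := by
  have mem_range (a : H.edgeSet) : ∃ i, e i = Sym2.map f a := by
    have : Sym2.map f a ∈ (fromEdgeSet (Set.range e)).edgeSet := (f.mapEdgeSet a).2
    rw [edgeSet_fromEdgeSet] at this
    exact this.1
  choose σ hσ using mem_range
  refine ⟨σ, fun a b hab ↦ Subtype.ext (Sym2.map.injective f.injective ?_), hσ⟩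
  exact (hσ a).symm.trans (hab ▸ hσ b)

variable [Fintype V] [Fintype ι] [DecidableEq ι]

/- Resampling the entries of `e` that represent the edges of a copy of `H` loses no information: the
copy and the positions of these entries determine what they were. -/
lemma sum_labelledCopyCount_sampledGraph_mul_le {W : Type*} [Fintype W] (H : SimpleGraph W)
    [Fintype H.edgeSet] :
    (∑ e : ι → Sym2 V, (sampledGraph e).labelledCopyCount H) *
        Fintype.card (Sym2 V) ^ #H.edgeFinset ≤
      Fintype.card V ^ Fintype.card W * Fintype.card ι ^ #H.edgeFinset *
        Fintype.card (ι → Sym2 V) := by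
  choose σ σ_injective e_σ using
    fun (e : ι → Sym2 V) (f : Copy H (sampledGraph e)) ↦ exists_injective_position f
  let resample : (Σ e : ι → Sym2 V, Copy H (sampledGraph e)) × (H.edgeSet → Sym2 V) →
      ((W → V) × (H.edgeSet → ι)) × (ι → Sym2 V) :=
    fun p ↦ ((p.1.2, σ p.1.1 p.1.2), Function.extend (σ p.1.1 p.1.2) p.2 p.1.1)
  have resample_injective : Function.Injective resample := by
    rintro ⟨⟨e, f⟩, g⟩ ⟨⟨e', f'⟩, g'⟩ heq
    simp only [resample, Prod.mk.injEq] at heq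
    obtain ⟨⟨hf, hσ⟩, hext⟩ := heq
    have hg : g = g' := by
      ext1 a
      have := congrFun hext (σ e f a)
      rwa [(σ_injective e f).extend_apply, hσ, (σ_injective e' f').extend_apply] at this
    have he : e = e' := by
      ext1 i
      by_cases hi : ∃ a, σ e f a = i
      · obtain ⟨a, rfl⟩ := hi
        rw [e_σ e f, hσ, e_σ e' f', hf]
      · have := congrFun hext i
        rwa [Function.extend_apply' _ _ _ hi, Function.extend_apply' _ _ _ (hσ ▸ hi)] at this
    subst he hg
    rw [DFunLike.coe_injective hf]
  have (e : ι → Sym2 V) : Finite (Copy H (sampledGraph e)) := DFunLike.finite _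
  have card_le := Nat.card_le_card_of_injective resample resample_injective
  simpa only [Nat.card_prod, Nat.card_sigma, Nat.card_fun, ← labelledCopyCount_eq_natCard,
    Nat.card_eq_fintype_card, ← edgeFinset_card] using card_le

lemma sum_labelledCopyCount_cycleGraph_sampledGraph_le [Nonempty V] {D : ℕ}
    (hD : Fintype.card V * Fintype.card ι ≤ D * Fintype.card (Sym2 V)) (l : ℕ) :
    ∑ e : ι → Sym2 V, (sampledGraph e).labelledCopyCount (cycleGraph (l + 3)) ≤
      D ^ (l + 3) * Fintype.card (ι → Sym2 V) := by
  have : Nonempty (Sym2 V) := ‹Nonempty V›.map Sym2.diag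
  refine Nat.le_of_mul_le_mul_right ?_ (pow_pos (Fintype.card_pos (α := Sym2 V)) (l + 3))
  calc _ ≤ (Fintype.card V * Fintype.card ι) ^ (l + 3) * Fintype.card (ι → Sym2 V) := by
        simpa only [card_edgeFinset_cycleGraph, Fintype.card_fin, mul_pow] using
          sum_labelledCopyCount_sampledGraph_mul_le (V := V) (ι := ι) (cycleGraph (l + 3))
    _ ≤ (D * Fintype.card (Sym2 V)) ^ (l + 3) * Fintype.card (ι → Sym2 V) := by gcongr
    _ = _ := by ring

variable [DecidableEq V]

instance (e : ι → Sym2 V) : DecidableRel (sampledGraph e).Adj :=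
  inferInstanceAs (DecidableRel (fromEdgeSet (Set.range e)).Adj)

lemma card_filter_isIndepSet_sampledGraph (S : Finset V) :
    #{e : ι → Sym2 V | (sampledGraph e).IsIndepSet S} =
      (Fintype.card (Sym2 V) - (#S).choose 2) ^ Fintype.card ι := by
  have : ({e : ι → Sym2 V | (sampledGraph e).IsIndepSet S} : Finset (ι → Sym2 V)) =
      Fintype.piFinset fun _ ↦ (S.offDiag.image Sym2.mk.uncurry)ᶜ := by
    ext e
    simp only [mem_filter_univ, isIndepSet_sampledGraph_iff, Fintype.mem_piFinset, mem_compl]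
  rw [this, Fintype.card_piFinset, prod_const, card_univ, card_compl, Sym2.card_image_offDiag]

lemma sum_card_indepSetFinset_sampledGraph (s : ℕ) :
    ∑ e : ι → Sym2 V, #((sampledGraph e).indepSetFinset s) =
      (Fintype.card V).choose s *
        (Fintype.card (Sym2 V) - s.choose 2) ^ Fintype.card ι := by
  have indepSetFinset_eq (e : ι → Sym2 V) : (sampledGraph e).indepSetFinset s =
      (powersetCard s univ).filter fun S : Finset V ↦ (sampledGraph e).IsIndepSet S := by
    ext S
    simp [isNIndepSet_iff, and_comm]
  calc ∑ e : ι → Sym2 V, #((sampledGraph e).indepSetFinset s)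
      = ∑ S ∈ powersetCard s (univ : Finset V),
          #{e : ι → Sym2 V | (sampledGraph e).IsIndepSet S} := by
        simp_rw [indepSetFinset_eq]
        exact sum_card_bipartiteAbove_eq_sum_card_bipartiteBelow _
    _ = ∑ _S ∈ powersetCard s (univ : Finset V),
          (Fintype.card (Sym2 V) - s.choose 2) ^ Fintype.card ι := by
        refine sum_congr rfl fun S hS ↦ ?_
        rw [card_filter_isIndepSet_sampledGraph, (mem_powersetCard.mp hS).2]
    _ = _ := by rw [sum_const, card_powersetCard, card_univ, smul_eq_mul]

lemma two_mul_pow_le_add_pow {R : Type*} [CommSemiring R] [LinearOrder R] [IsOrderedRing R]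
    [ExistsAddOfLE R] {a b : R} {n : ℕ} (ha : 0 ≤ a) (hb : 0 ≤ b) (hn : n ≠ 0) (hab : a ≤ n * b) :
    2 * a ^ n ≤ (a + b) ^ n :=
  calc 2 * a ^ n = a ^ n + a ^ (n - 1) * a := by rw [pow_sub_one_mul hn, two_mul]
    _ ≤ a ^ n + a ^ (n - 1) * (n * b) := by gcongr
    _ = a ^ n + n * a ^ (n - 1) * b := by ring
    _ ≤ (a + b) ^ n := pow_add_mul_le_add_pow ha (add_nonneg (mul_nonneg zero_le_two ha) hb) n

lemma two_pow_mul_sum_card_indepSetFinset_sampledGraph_le {s c : ℕ} (hs : s ≤ Fintype.card V)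
    (hc : c ≠ 0) (hsc : Fintype.card (Sym2 V) ≤ c * s.choose 2)
    (hι : Fintype.card ι = c * (2 * Fintype.card V)) :
    2 ^ Fintype.card V * ∑ e : ι → Sym2 V, #((sampledGraph e).indepSetFinset s) ≤
      Fintype.card (ι → Sym2 V) := by
  set n := Fintype.card V
  set M := Fintype.card (Sym2 V) with hM
  have hsM : s.choose 2 ≤ M := by
    rw [hM, Sym2.card]
    exact Nat.choose_le_choose 2 (by lia)
  calc 2 ^ n * ∑ e : ι → Sym2 V, #((sampledGraph e).indepSetFinset s)
      = 2 ^ n * (n.choose s * (M - s.choose 2) ^ (c * (2 * n))) := by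
        rw [sum_card_indepSetFinset_sampledGraph, hι]
    _ ≤ 2 ^ n * (2 ^ n * (M - s.choose 2) ^ (c * (2 * n))) := by
        gcongr
        exact Nat.choose_le_two_pow n s
    _ = (2 * (M - s.choose 2) ^ c) ^ (2 * n) := by ring
    _ ≤ (((M - s.choose 2) + s.choose 2) ^ c) ^ (2 * n) := by
        gcongr
        exact two_mul_pow_le_add_pow (by positivity) (by positivity) hc
          (tsub_le_self.trans hsc)
    _ = Fintype.card (ι → Sym2 V) := by
        rw [Nat.sub_add_cancel hsM, ← pow_mul, Fintype.card_fun, hι]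

end SampledGraph

lemma add_one_choose_two_mul_two (n : ℕ) : (n + 1).choose 2 * 2 = (n + 1) * n := by
  rw [← Nat.add_one_mul_choose_eq n 1, Nat.choose_one_right]

lemma choose_two_mul_add_one_le {r s : ℕ} (hs : 2 ≤ s) :
    (r * s + 1).choose 2 ≤ 4 * r ^ 2 * s.choose 2 := by
  obtain ⟨t, rfl⟩ := Nat.exists_eq_add_of_le' hs
  refine Nat.le_of_mul_le_mul_right ?_ two_pos
  rw [mul_assoc, add_one_choose_two_mul_two, add_one_choose_two_mul_two]
  rcases r.eq_zero_or_pos with rfl | hr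
  · simp
  calc (r * (t + 2) + 1) * (r * (t + 2)) ≤ (4 * (r * (t + 1))) * (r * (t + 2)) := by
        gcongr
        nlinarith [hr]
    _ = 4 * r ^ 2 * ((t + 2) * (t + 1)) := by ring

lemma exists_lt_and_eq_zero_of_sum_le {α : Type*} [Fintype α] [Nonempty α] {X Y : α → ℕ} {C s : ℕ}
    (hs : 2 * C < s) (hX : ∑ a, X a ≤ C * Fintype.card α) (hY : 2 * ∑ a, Y a ≤ Fintype.card α) :
    ∃ a, X a < s ∧ Y a = 0 := by
  have sum_lt : ∑ a, 2 * (X a + s * Y a) < ∑ _a : α, 2 * s := by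
    calc ∑ a, 2 * (X a + s * Y a) = 2 * ∑ a, X a + s * (2 * ∑ a, Y a) := by
          rw [← mul_sum, sum_add_distrib, ← mul_sum]
          ring
      _ ≤ 2 * (C * Fintype.card α) + s * Fintype.card α := by gcongr
      _ = (2 * C + s) * Fintype.card α := by ring
      _ < (s + s) * Fintype.card α := by gcongr
      _ = ∑ _a : α, 2 * s := by
          rw [sum_const, card_univ, smul_eq_mul]
          ring
  obtain ⟨a, -, ha⟩ := exists_lt_of_sum_lt sum_lt
  exact ⟨a, by lia, Nat.lt_one_iff.mp (Nat.lt_of_mul_lt_mul_left (a := s) (by lia))⟩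

lemma exists_sum_labelledCopyCount_cycleGraph_lt_and_indepNum_lt (k : ℕ) {r : ℕ} (hr : r ≠ 0) :
    ∃ (s : ℕ) (G : SimpleGraph (Fin (r * s))),
      ∑ l ∈ range k, G.labelledCopyCount (cycleGraph (l + 3)) < s ∧ G.indepNum < s := by
  let c := 4 * r ^ 2
  let C := ∑ l ∈ range k, (4 * c) ^ (l + 3)
  let s := 2 * C + 2
  let n := r * s
  let ι := Fin (c * (2 * n))
  have : NeZero n := ⟨mul_ne_zero hr (by lia)⟩
  have card_sym2 : Fintype.card (Sym2 (Fin n)) = (n + 1).choose 2 := by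
    rw [Sym2.card, Fintype.card_fin]
  have sum_cycles : ∑ e : ι → Sym2 (Fin n), ∑ l ∈ range k,
      (sampledGraph e).labelledCopyCount (cycleGraph (l + 3)) ≤
        C * Fintype.card (ι → Sym2 (Fin n)) := by
    rw [sum_comm, sum_mul]
    refine sum_le_sum fun l _ ↦ sum_labelledCopyCount_cycleGraph_sampledGraph_le ?_ l
    rw [card_sym2, Fintype.card_fin, Fintype.card_fin]
    nlinarith [add_one_choose_two_mul_two n]
  have sum_indepSets : 2 * ∑ e : ι → Sym2 (Fin n), #((sampledGraph e).indepSetFinset s) ≤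
      Fintype.card (ι → Sym2 (Fin n)) := by
    refine le_trans ?_ (two_pow_mul_sum_card_indepSetFinset_sampledGraph_le (c := c) ?_
      (by positivity) (card_sym2.trans_le (choose_two_mul_add_one_le (by lia))) ?_)
    · gcongr
      exact le_self_pow₀ one_le_two Fintype.card_ne_zero
    · rw [Fintype.card_fin]
      exact Nat.le_mul_of_pos_left s hr.pos
    · simp only [Fintype.card_fin, ι]
  obtain ⟨e, hcycles, hindep⟩ :=
    exists_lt_and_eq_zero_of_sum_le (s := s) (by lia) sum_cycles sum_indepSets
  exact ⟨s, sampledGraph e, hcycles,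
    indepNum_lt_of_indepSetFinset_eq_empty (card_eq_zero.mp hindep)⟩

theorem exists_high_girth_high_chromatic_general (r k : ℕ) :
    ∃ (V : Type) (_ : Fintype V) (G : SimpleGraph V),
      (k : ℕ∞) ≤ G.egirth ∧ r * G.indepNum < Fintype.card V := by
  obtain ⟨s, G, hcycles, hindep⟩ :=
    exists_sum_labelledCopyCount_cycleGraph_lt_and_indepNum_lt k r.succ_ne_zero
  obtain ⟨T, hT, hfree⟩ :=
    exists_finset_forall_free_induce_compl G (range k) fun l ↦ cycleGraph (l + 3)
  refine ⟨_, inferInstance, G.induce (T : Set _)ᶜ, ?_, ?_⟩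
  · calc (k : ℕ∞) ≤ (k + 3 : ℕ) := by exact_mod_cast Nat.le_add_right k 3
      _ ≤ _ := add_three_le_egirth_iff.mpr fun l hl ↦ hfree l (mem_range.mpr hl)
  · calc r * (G.induce (T : Set _)ᶜ).indepNum ≤ r * s := by
          gcongr
          exact (indepNum_induce_le G _).trans hindep.le
      _ < (r + 1) * s - #T := by lia
      _ = Fintype.card ((T : Set (Fin ((r + 1) * s)))ᶜ : Set _) := by
          rw [Fintype.card_compl_set, Fintype.card_fin]
          simp

/-- For all `r ≥ 3` and `k ≥ 3` there is a finite simple graph with girth at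
least `k` which is not `r`-colorable. -/
theorem exists_high_girth_high_chromatic (r k : ℕ) (hr : 3 ≤ r) (hk : 3 ≤ k) :
    ∃ (V : Type) (_ : Fintype V) (G : SimpleGraph V),
      (k : ℕ∞) ≤ G.egirth ∧ ¬ G.Colorable r := by
  obtain ⟨V, _, G, hgirth, hindep⟩ := exists_high_girth_high_chromatic_general r k
  exact ⟨V, inferInstance, G, hgirth, fun hG ↦ hindep.not_ge (card_le_mul_indepNum_of_colorable hG)⟩
end

section
/- For all integers r ≥ 3 and k ≥ 3, there exists a finite digraph G whose directed girth is at least k (every directed cycle of G has length at least k, and G contains at least one directed cycle) and which admits no acyclic r-coloring. -/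
/-!
The digraph is built by induction on the number of colors, starting from the directed cycle `C`
of length `k` and passing from a digraph `H` to the lexicographic product of `C` with `H`.

* A directed cycle of the product projects to a closed walk in `ℤ/k` with steps `0` and `1`.
  Either all steps are `0` and the cycle lies in one copy of `H`, or the number of unit steps is a
  positive multiple of `k`.
* If `H` has no acyclic `r`-coloring, then in an acyclic `(r + 1)`-coloring of the product every
  copy of `H` uses every color. Choosing a vertex of color `0` in each copy gives a monochromatic
  directed cycle.
-/

section ClosedWalk

variable {k ℓ : ℕ}

theorem eq_apply_zero_of_periodic_one {α : Type*} {a : ZMod ℓ → α} (ha : Function.Periodic a 1)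
    (j : ZMod ℓ) : a j = a 0 := by
  obtain ⟨n, rfl⟩ := ZMod.intCast_surjective j
  simpa using ha.int_mul_eq n

theorem dvd_card_unit_steps [NeZero ℓ] {a : ZMod ℓ → ZMod k}
    (ha : ∀ j, a (j + 1) = a j + 1 ∨ a (j + 1) = a j) :
    k ∣ Finset.card {j | a (j + 1) = a j + 1} := by
  have step_eq (j : ZMod ℓ) : a (j + 1) - a j = if a (j + 1) = a j + 1 then 1 else 0 := by
    grind
  have sum_steps : ∑ j, (a (j + 1) - a j) = 0 := by
    rw [Finset.sum_sub_distrib, sub_eq_zero]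
    exact Equiv.sum_comp (Equiv.addRight 1) a
  rwa [Finset.sum_congr rfl fun j _ ↦ step_eq j, Finset.sum_boole,
    ZMod.natCast_eq_zero_iff] at sum_steps

theorem le_of_unit_step [NeZero ℓ] {a : ZMod ℓ → ZMod k}
    (ha : ∀ j, a (j + 1) = a j + 1 ∨ a (j + 1) = a j) {j : ZMod ℓ} (hj : a (j + 1) = a j + 1) :
    k ≤ ℓ :=
  calc
    k ≤ Finset.card {j | a (j + 1) = a j + 1} :=
      Nat.le_of_dvd (Finset.card_pos.2 ⟨j, by simpa using hj⟩) (dvd_card_unit_steps ha)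
    _ ≤ Fintype.card (ZMod ℓ) := Finset.card_le_univ _
    _ = ℓ := ZMod.card ℓ

end ClosedWalk

section DirectedCycle

variable {k ℓ : ℕ}

/-- The arc relation of the directed cycle of length `k`, with vertex set `ℤ/k`, the outer
factor in the iterated lexicographic product. For `k = 1` it is a loop, and for `k = 0` a two-way
infinite directed path. -/
def directedCycle (k : ℕ) (i j : ZMod k) : Prop := j = i + 1

theorem directedCycle_irrefl (hk : k ≠ 1) (i : ZMod k) : ¬ directedCycle k i i := by
  have : Nontrivial (ZMod k) := ZMod.nontrivial_iff.2 hk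
  simp [directedCycle]

theorem isDicycle_directedCycle (hk : 2 ≤ k) : IsDicycle (directedCycle k) k id :=
  ⟨hk, Function.injective_id, fun _ ↦ rfl⟩

theorem IsDicycle.le_length_of_directedCycle {c : ZMod ℓ → ZMod k}
    (hc : IsDicycle (directedCycle k) ℓ c) : k ≤ ℓ := by
  obtain ⟨hℓ, -, hadj⟩ := hc
  have : NeZero ℓ := ⟨by lia⟩
  exact le_of_unit_step (fun j ↦ .inl (hadj j)) (hadj 0)

end DirectedCycle

section LexProduct

variable {U V : Type} {B : U → U → Prop} {A : V → V → Prop} {m r k ℓ : ℕ}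

theorem IsDicycle.prodLex_right {c : ZMod ℓ → V} (hc : IsDicycle A ℓ c) (u : U) :
    IsDicycle (Prod.Lex B A) ℓ fun j ↦ (u, c j) :=
  ⟨hc.1, (Prod.mk_right_injective u).comp hc.2.1, fun j ↦ .right u (hc.2.2 j)⟩

theorem IsDicycle.prodLex_left {b : ZMod m → U} (hb : IsDicycle B m b) (x : ZMod m → V) :
    IsDicycle (Prod.Lex B A) m fun i ↦ (b i, x i) :=
  ⟨hb.1, fun _ _ h ↦ hb.2.1 (Prod.ext_iff.1 h).1, fun i ↦ .left _ _ (hb.2.2 i)⟩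

theorem le_length_of_isDicycle_prodLex_directedCycle
    (hA : ∀ (ℓ : ℕ) (c : ZMod ℓ → V), IsDicycle A ℓ c → k ≤ ℓ) {c : ZMod ℓ → ZMod k × V}
    (hc : IsDicycle (Prod.Lex (directedCycle k) A) ℓ c) : k ≤ ℓ := by
  obtain ⟨hℓ, hinj, hlex⟩ := hc
  have : NeZero ℓ := ⟨by lia⟩
  have hadj (j : ZMod ℓ) : (c (j + 1)).1 = (c j).1 + 1 ∨
      (c j).1 = (c (j + 1)).1 ∧ A (c j).2 (c (j + 1)).2 := Prod.lex_def.1 (hlex j)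
  by_cases hunit : ∃ j, (c (j + 1)).1 = (c j).1 + 1
  · obtain ⟨j, hj⟩ := hunit
    exact le_of_unit_step (a := fun j ↦ (c j).1) (fun j ↦ (hadj j).imp_right fun h ↦ h.1.symm) hj
  · have hfiber (j : ZMod ℓ) := (hadj j).resolve_left fun h ↦ hunit ⟨j, h⟩
    have hconst : ∀ j, (c j).1 = (c 0).1 :=
      eq_apply_zero_of_periodic_one (a := fun j ↦ (c j).1) fun j ↦ (hfiber j).1.symm
    refine hA ℓ (fun j ↦ (c j).2) ⟨hℓ, fun i j hij ↦ hinj ?_, fun j ↦ (hfiber j).2⟩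
    exact Prod.ext ((hconst i).trans (hconst j).symm) hij

theorem hasAcyclicColoring_of_forall_ne {f : V → Fin (r + 1)} {p : Fin (r + 1)}
    (hf : ∀ (ℓ : ℕ) (c : ZMod ℓ → V), IsDicycle A ℓ c → ∃ i j, f (c i) ≠ f (c j))
    (hp : ∀ v, f v ≠ p) : HasAcyclicColoring A r := by
  choose g hg using fun v ↦ Fin.exists_succAbove_eq (hp v)
  refine ⟨g, fun ℓ c hc ↦ ?_⟩
  obtain ⟨i, j, hij⟩ := hf ℓ c hc
  exact ⟨i, j, fun h ↦ hij (by rw [← hg, ← hg, h])⟩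

theorem not_hasAcyclicColoring_prodLex_succ {b : ZMod m → U} (hb : IsDicycle B m b)
    (hA : ¬ HasAcyclicColoring A r) : ¬ HasAcyclicColoring (Prod.Lex B A) (r + 1) := by
  rintro ⟨f, hf⟩
  have exists_color_zero (u : U) : ∃ v, f (u, v) = 0 := by
    by_contra! hne
    exact hA <| hasAcyclicColoring_of_forall_ne (fun ℓ c hc ↦ hf ℓ _ (hc.prodLex_right u)) hne
  choose x hx using exists_color_zero
  obtain ⟨i, j, hij⟩ := hf m _ (hb.prodLex_left fun i ↦ x (b i))
  exact hij ((hx _).trans (hx _).symm)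

end LexProduct

theorem exists_high_girth_high_dichromatic_general (r k : ℕ) (hk : 2 ≤ k) :
    ∃ (V : Type) (_ : Fintype V) (Adj : V → V → Prop),
      (∀ v : V, ¬ Adj v v) ∧
      (∃ c : ZMod k → V, IsDicycle Adj k c) ∧
      (∀ (ℓ : ℕ) (c : ZMod ℓ → V), IsDicycle Adj ℓ c → k ≤ ℓ) ∧
      ¬ HasAcyclicColoring Adj r := by
  have : NeZero k := ⟨by lia⟩
  induction r with
  | zero =>
    exact ⟨ZMod k, inferInstance, directedCycle k, directedCycle_irrefl (by lia),
      ⟨id, isDicycle_directedCycle hk⟩, fun _ _ hc ↦ hc.le_length_of_directedCycle,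
      fun ⟨f, _⟩ ↦ (f 0).elim0⟩
  | succ r ih =>
    obtain ⟨V, _, Adj, hirrefl, ⟨c, hc⟩, hgirth, hcolor⟩ := ih
    have : Std.Irrefl (directedCycle k) := ⟨directedCycle_irrefl (by lia)⟩
    have : Std.Irrefl Adj := ⟨hirrefl⟩
    exact ⟨ZMod k × V, inferInstance, Prod.Lex (directedCycle k) Adj,
      fun _ ↦ irrefl _, ⟨_, hc.prodLex_right 0⟩,
      fun _ _ ↦ le_length_of_isDicycle_prodLex_directedCycle hgirth,
      not_hasAcyclicColoring_prodLex_succ (isDicycle_directedCycle hk) hcolor⟩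

/-- For all `r ≥ 3` and `k ≥ 3` there is a finite digraph with directed girth
at least `k` (containing at least one directed cycle) which has no acyclic
`r`-coloring. -/
theorem exists_high_girth_high_dichromatic (r k : ℕ) (hr : 3 ≤ r) (hk : 3 ≤ k) :
    ∃ (V : Type) (_ : Fintype V) (Adj : V → V → Prop),
      (∀ v : V, ¬ Adj v v) ∧
      (∃ (ℓ : ℕ) (c : ZMod ℓ → V), IsDicycle Adj ℓ c) ∧
      (∀ (ℓ : ℕ) (c : ZMod ℓ → V), IsDicycle Adj ℓ c → k ≤ ℓ) ∧
      ¬ HasAcyclicColoring Adj r := by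
  obtain ⟨V, hV, Adj, hirrefl, hcycle, h⟩ := exists_high_girth_high_dichromatic_general r k (by lia)
  exact ⟨V, hV, Adj, hirrefl, ⟨k, hcycle⟩, h⟩
end

section
/- For all integers r ≥ 3 and k ≥ 3, there exists a finite set X and a family E of k-element subsets of X such that: (1) for every function f : X → {1, …, r} there is a member e ∈ E on which f is constant (i.e., the instance of r-valued not-all-equal k-satisfiability has no solution); and (2) the instance has girth at least k, meaning there is no integer ℓ with 2 ≤ ℓ < k, distinct elements y_0, …, y_{ℓ-1} of X, and distinct members e_0, …, e_{ℓ-1} of E with {y_j, y_{j+1}} ⊆ e_j for every j (indices modulo ℓ). -/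
/-!
A family of edges is a forest when each nonempty subfamily has a leaf, an edge meeting the other
edges in at most one vertex. The edges of a cycle have no leaf, so girth larger than `p` follows
once every subfamily of at most `p` edges has a leaf.

Families with this property and without solution come from the partite construction of Nešetřil and
Rödl, by induction on `p`. Start with disjoint edges, one for each `k`-subset of a set of parts so
large that, by the pigeonhole principle, a colouring constant on every part is constant on some
edge. Then release the parts one at a time. To release a part with `s` vertices, take an unsolvable
`s`-uniform family `H` that is a forest up to `p` edges, and glue one copy of the current family to
each edge of `H` along this part. Some edge of `H` is monochromatic, so the copy glued to it is
coloured as if the part had not been released. As for leaves, consider at most `p + 1` edges of the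
result. If they lie in distinct copies, they meet each other only in the glued part, where each has
at most one vertex. Otherwise they use at most `p` copies, so the edges of `H` carrying these copies
have a leaf; the copy there meets the others in at most one vertex, and it has a leaf even when this
vertex is counted as shared.
-/

open Finset

section Forest

variable {V ι : Type*} {E : ι → Finset V} {p : ℕ}

/-- The vertices of the edge `e` that lie on another edge of the subfamily `F`. Families are
indexed, so distinct indices count as distinct edges even when they carry the same set. -/
def sharedVertices (E : ι → Finset V) (F : Finset ι) (e : ι) : Set V :=
  {x | x ∈ E e ∧ ∃ e' ∈ F, e' ≠ e ∧ x ∈ E e'}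

/-- Every nonempty subfamily of at most `p` edges has a leaf, i.e. an edge with at most one shared
vertex. This is the form in which lower bounds on the girth are carried through the construction. -/
def IsForestUpTo (p : ℕ) (E : ι → Finset V) : Prop :=
  ∀ F : Finset ι, F.Nonempty → #F ≤ p → ∃ e ∈ F, (sharedVertices E F e).Subsingleton

theorem isForestUpTo_zero (E : ι → Finset V) : IsForestUpTo 0 E :=
  fun _ hF hF0 => absurd hF0 (Nat.not_le.2 hF.card_pos)

theorem isForestUpTo_of_pairwise_disjoint (p : ℕ) (hE : Pairwise (Function.onFun Disjoint E)) :
    IsForestUpTo p E := by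
  rintro F ⟨e, he⟩ -
  refine ⟨e, he, ?_⟩
  rintro x ⟨hx, e', -, hne, hx'⟩
  exact absurd hx (Finset.disjoint_left.1 (hE hne) hx')

theorem IsForestUpTo.exists_subsingleton_inter_union_sharedVertices (hE : IsForestUpTo p E)
    {F : Finset ι} (hF : F.Nonempty) (hFp : #F ≤ p) {D : Set V} (hD : D.Subsingleton) :
    ∃ e ∈ F, (↑(E e) ∩ D ∪ sharedVertices E F e).Subsingleton := by
  classical
  induction F using Finset.strongInduction generalizing D with
  | H F ih =>
    obtain ⟨a, ha, hleaf⟩ := hE F hF hFp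
    by_cases hDa : ↑(E a) ∩ D ⊆ sharedVertices E F a
    · exact ⟨a, ha, by rwa [Set.union_eq_right.2 hDa]⟩
    obtain ⟨x, ⟨hxa, hxD⟩, hx⟩ := Set.not_subset.1 hDa
    obtain h_erase | h_erase := (F.erase a).eq_empty_or_nonempty
    · refine ⟨a, ha, hD.anti (Set.union_subset Set.inter_subset_right ?_)⟩
      rintro z ⟨-, e', he', hne, -⟩
      exact absurd (mem_erase.2 ⟨hne, he'⟩) (by simp [h_erase])
    -- No other edge contains `x`, so `a` can be removed and its only shared vertex takes the
    -- place of `D`.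
    · obtain ⟨e, he, hs⟩ := ih (F.erase a) (erase_ssubset ha) h_erase
        (card_erase_le.trans hFp) hleaf
      obtain ⟨hea, heF⟩ := mem_erase.1 he
      refine ⟨e, heF, hs.anti ?_⟩
      rintro z (⟨hze, hzD⟩ | ⟨hze, e', he', hne, hze'⟩)
      · obtain rfl := hD hxD hzD
        exact absurd ⟨hxa, e, heF, hea, hze⟩ hx
      · obtain rfl | hne_a := eq_or_ne e' a
        · exact .inl ⟨hze, hze', e, heF, hea, hze⟩
        · exact .inr ⟨hze, e', mem_erase.2 ⟨hne_a, he'⟩, hne, hze'⟩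

theorem IsForestUpTo.lt_length_of_cycle (hE : IsForestUpTo p E) {ℓ : ℕ} (hℓ : 2 ≤ ℓ)
    {y : ZMod ℓ → V} {u : ZMod ℓ → ι} (hy : Function.Injective y) (hu : Function.Injective u)
    (hmem : ∀ j, y j ∈ E (u j) ∧ y (j + 1) ∈ E (u j)) : p < ℓ := by
  have : NeZero ℓ := ⟨by omega⟩
  have : Fact (1 < ℓ) := ⟨hℓ⟩
  by_contra! hp
  obtain ⟨e, he, hleaf⟩ := hE (univ.map ⟨u, hu⟩) (univ_nonempty.map) (by simpa [ZMod.card])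
  obtain ⟨j, -, rfl⟩ := mem_map.1 he
  have hu_mem (i : ZMod ℓ) : u i ∈ univ.map ⟨u, hu⟩ := mem_map_of_mem ⟨u, hu⟩ (mem_univ i)
  have shared_left : y j ∈ sharedVertices E (univ.map ⟨u, hu⟩) (u j) :=
    ⟨(hmem j).1, u (j - 1), hu_mem _, hu.ne (by simp), by simpa using (hmem (j - 1)).2⟩
  have shared_right : y (j + 1) ∈ sharedVertices E (univ.map ⟨u, hu⟩) (u j) :=
    ⟨(hmem j).2, u (j + 1), hu_mem _, hu.ne (by simp), (hmem (j + 1)).1⟩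
  exact absurd (hy (hleaf shared_left shared_right)) (by simp)

end Forest

section Amalgam

variable {V W ι κ : Type*} {q : V → Prop} [DecidablePred q]

/-- The inclusion of the `j`-th copy of `V` into the vertex set of the amalgam, which consists of
`W` and one copy of the vertices outside `q` for each `j`: the vertices in `q` are glued to `W`
along `φ j`. -/
def copyEmbedding (φ : κ → {x // q x} ↪ W) (j : κ) : V ↪ W ⊕ κ × {x // ¬ q x} :=
  (Equiv.sumCompl q).symm.toEmbedding.trans ((φ j).sumMap (.sectR j _))

/-- One copy of the family `E` for each `j : κ`, the copies being glued along `q` as prescribed by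
`φ`: the amalgamation of the partite construction. -/
def amalgam (φ : κ → {x // q x} ↪ W) (E : ι → Finset V) :
    κ × ι → Finset (W ⊕ κ × {x // ¬ q x}) :=
  fun e => (E e.2).map (copyEmbedding φ e.1)

variable {φ : κ → {x // q x} ↪ W} {E : ι → Finset V} {H : κ → Finset W} {p : ℕ}

theorem copyEmbedding_of_pos (j : κ) {x : V} (hx : q x) :
    copyEmbedding φ j x = .inl (φ j ⟨x, hx⟩) := by
  simp [copyEmbedding, hx]

theorem copyEmbedding_of_neg (j : κ) {x : V} (hx : ¬ q x) :
    copyEmbedding φ j x = .inr (j, ⟨x, hx⟩) := by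
  simp [copyEmbedding, hx]

theorem exists_glued_of_copyEmbedding_eq {j j' : κ} {x x' : V} (hne : j' ≠ j)
    (h : copyEmbedding φ j' x' = copyEmbedding φ j x) :
    ∃ (hx : q x) (hx' : q x'), φ j' ⟨x', hx'⟩ = φ j ⟨x, hx⟩ := by
  by_cases hx : q x <;> by_cases hx' : q x' <;>
    simp_all [copyEmbedding_of_pos, copyEmbedding_of_neg]

/-- The vertices of the `j`-th copy through which the subfamily `F` of the amalgam attaches to other
copies, as vertices of `V`. -/
def attachingVertices (φ : κ → {x // q x} ↪ W) (E : ι → Finset V) (F : Finset (κ × ι)) (j : κ) :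
    Set V :=
  {x | ∃ e ∈ F, e.1 ≠ j ∧ copyEmbedding φ j x ∈ amalgam φ E e}

theorem exists_glued_of_mem_attachingVertices {F : Finset (κ × ι)} {j : κ} {x : V}
    (hx : x ∈ attachingVertices φ E F j) :
    ∃ (hqx : q x), ∃ e ∈ F, e.1 ≠ j ∧ ∃ x', φ e.1 x' = φ j ⟨x, hqx⟩ := by
  obtain ⟨e, heF, hne, hxe⟩ := hx
  obtain ⟨x', -, heq⟩ := mem_map.1 hxe
  obtain ⟨hqx, hqx', hφ⟩ := exists_glued_of_copyEmbedding_eq hne heq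
  exact ⟨hqx, e, heF, hne, ⟨x', hqx'⟩, hφ⟩

theorem subsingleton_attachingVertices [DecidableEq κ] (hφ : ∀ j x, φ j x ∈ H j)
    {F : Finset (κ × ι)} {j : κ} (hj : (sharedVertices H (F.image Prod.fst) j).Subsingleton) :
    (attachingVertices φ E F j).Subsingleton := by
  have glued_shared {x : V} (hx : x ∈ attachingVertices φ E F j) :
      ∃ hqx : q x, φ j ⟨x, hqx⟩ ∈ sharedVertices H (F.image Prod.fst) j := by
    obtain ⟨hqx, e, heF, hne, x', hx'⟩ := exists_glued_of_mem_attachingVertices hx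
    exact ⟨hqx, hφ _ _, e.1, mem_image_of_mem _ heF, hne, hx' ▸ hφ _ _⟩
  intro x hx y hy
  obtain ⟨hqx, hx⟩ := glued_shared hx
  obtain ⟨hqy, hy⟩ := glued_shared hy
  exact congrArg Subtype.val ((φ j).injective (hj hx hy))

theorem sharedVertices_amalgam_subset (F : Finset (κ × ι)) (j : κ) (e : ι) :
    sharedVertices (amalgam φ E) F (j, e) ⊆ copyEmbedding φ j ''
      (↑(E e) ∩ attachingVertices φ E F j ∪
        sharedVertices E (F.preimage (Prod.mk j) (Prod.mk_right_injective j).injOn) e) := by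
  rintro _ ⟨hz, ⟨j', e'⟩, heF, hne, hz'⟩
  obtain ⟨x, hx, rfl⟩ := mem_map.1 hz
  refine ⟨x, ?_, rfl⟩
  obtain rfl | hj := eq_or_ne j' j
  · exact .inr ⟨hx, e', mem_preimage.2 heF, fun h => hne (by rw [h]), by simpa [amalgam] using hz'⟩
  · exact .inl ⟨hx, (j', e'), heF, hj, hz'⟩

theorem IsForestUpTo.amalgam (hE : IsForestUpTo (p + 1) E) (hH : IsForestUpTo p H)
    (hq : ∀ e, {x | x ∈ E e ∧ q x}.Subsingleton) (hφ : ∀ j x, φ j x ∈ H j) :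
    IsForestUpTo (p + 1) (amalgam φ E) := by
  classical
  intro F hF hFp
  suffices ∃ j e, (j, e) ∈ F ∧ (↑(E e) ∩ attachingVertices φ E F j ∪ sharedVertices E
      (F.preimage (Prod.mk j) (Prod.mk_right_injective j).injOn) e).Subsingleton by
    obtain ⟨j, e, heF, hs⟩ := this
    exact ⟨(j, e), heF, (hs.image _).anti (sharedVertices_amalgam_subset F j e)⟩
  by_cases hinj : Set.InjOn Prod.fst (F : Set (κ × ι))
  · obtain ⟨⟨j, e⟩, heF⟩ := hF
    refine ⟨j, e, heF, (hq e).anti (Set.union_subset ?_ ?_)⟩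
    · rintro x ⟨hxe, hx⟩
      exact ⟨hxe, (exists_glued_of_mem_attachingVertices hx).1⟩
    · rintro x ⟨-, e', he', hne, -⟩
      exact absurd (Prod.ext_iff.1 (hinj (mem_preimage.1 he') heF rfl)).2 hne
  · have card_copies : #(F.image Prod.fst) < #F :=
      card_image_le.lt_of_ne fun h => hinj (card_image_iff.1 h)
    obtain ⟨j, hj, hleaf⟩ := hH (F.image Prod.fst) (hF.image _) (by omega)
    obtain ⟨⟨_, e₀⟩, he₀, rfl⟩ := mem_image.1 hj
    obtain ⟨e, he, hs⟩ := hE.exists_subsingleton_inter_union_sharedVertices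
      ⟨e₀, mem_preimage.2 he₀⟩
      ((card_le_card_of_injOn _ (fun _ => mem_preimage.1)
        (Prod.mk_right_injective _).injOn).trans hFp)
      (subsingleton_attachingVertices (E := E) hφ hleaf)
    exact ⟨_, e, mem_preimage.1 he, hs⟩

end Amalgam

section Unsolvable

/-- The not-all-equal instance with constraints `E` has no solution with values in `C`. -/
def IsUnsolvable (C : Type*) {V ι : Type*} (E : ι → Finset V) : Prop :=
  ∀ f : V → C, ∃ e c, ∀ x ∈ E e, f x = c

/-- A stage of the partite construction: a `k`-uniform family, forest up to `p` edges, whose edges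
meet each part (fibre of `π`) at most once, and which has no solution among the assignments that
are constant on every part outside `T`, with value `c i` on the part `i`. The set `T` consists of
the parts already released. -/
structure IsPartiteSystem (C : Type*) {V ι α : Type*} (k p : ℕ) (T : Set α) (π : V → α)
    (E : ι → Finset V) : Prop where
  card_eq : ∀ e, #(E e) = k
  injOn : ∀ e, Set.InjOn π (E e)
  unsolvable : ∀ (f : V → C) (c : α → C), (∀ x, π x ∉ T → f x = c (π x)) →
    ∃ e d, ∀ x ∈ E e, f x = d
  isForestUpTo : IsForestUpTo p E

theorem exists_card_eq_forall_eq {α C : Type*} [Fintype α] [Fintype C] [Nonempty C] {k : ℕ}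
    (h : Fintype.card C * k ≤ Fintype.card α) (f : α → C) :
    ∃ (s : Finset α) (c : C), #s = k ∧ ∀ x ∈ s, f x = c := by
  classical
  obtain ⟨c, hc⟩ := Fintype.exists_le_card_fiber_of_mul_le_card f h
  obtain ⟨s, hs, hsk⟩ := exists_subset_card_eq hc
  exact ⟨s, c, hsk, fun x hx => (mem_filter.1 (hs hx)).2⟩

/-- Pairwise disjoint edges, one over each `k`-element subset of `α`. -/
def disjointEdges (α : Type*) (k : ℕ) (s : {s : Finset α // #s = k}) :
    Finset ({s : Finset α // #s = k} × α) :=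
  s.1.map (.sectR s α)

theorem isPartiteSystem_disjointEdges {α C : Type*} [Fintype α] [Fintype C] [Nonempty C] {k : ℕ}
    (h : Fintype.card C * k ≤ Fintype.card α) (p : ℕ) :
    IsPartiteSystem C k p ∅ Prod.snd (disjointEdges α k) where
  card_eq s := by simp [disjointEdges, s.2]
  injOn s := by
    rintro x hx y hy hxy
    obtain ⟨i, -, rfl⟩ := mem_map.1 hx
    obtain ⟨j, -, rfl⟩ := mem_map.1 hy
    exact Prod.ext rfl hxy
  unsolvable f c hf := by
    obtain ⟨s, d, hs, hd⟩ := exists_card_eq_forall_eq h c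
    refine ⟨⟨s, hs⟩, d, fun x hx => ?_⟩
    obtain ⟨i, hi, rfl⟩ := mem_map.1 hx
    exact (hf _ (Set.notMem_empty _)).trans (hd i hi)
  isForestUpTo := isForestUpTo_of_pairwise_disjoint p fun s t hst =>
    Finset.disjoint_left.2 fun x hs ht => hst <| by
      obtain ⟨i, -, rfl⟩ := mem_map.1 hs
      obtain ⟨j, -, hj⟩ := mem_map.1 ht
      exact (Prod.ext_iff.1 hj).1.symm

theorem IsPartiteSystem.amalgam {C V W ι κ α : Type*} [DecidableEq α] {k p : ℕ} {T : Set α}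
    {π : V → α} {E : ι → Finset V} {H : κ → Finset W} {i : α}
    {φ : κ → {x // π x = i} ↪ W} (hE : IsPartiteSystem C k (p + 1) T π E)
    (hH : IsUnsolvable C H) (hHp : IsForestUpTo p H) (hφ : ∀ j x, φ j x ∈ H j) :
    IsPartiteSystem C k (p + 1) (insert i T) (Sum.elim (fun _ => i) fun z => π z.2)
      (amalgam φ E) := by
  have part_copy (j : κ) (x : V) :
      Sum.elim (fun _ => i) (fun z => π z.2) (copyEmbedding φ j x) = π x := by
    by_cases hx : π x = i
    · rw [copyEmbedding_of_pos (q := (π · = i)) j hx, Sum.elim_inl, hx]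
    · rw [copyEmbedding_of_neg (q := (π · = i)) j hx, Sum.elim_inr]
  refine ⟨fun e => (card_map _).trans (hE.card_eq _), ?_, ?_,
    hE.isForestUpTo.amalgam hHp ?_ hφ⟩
  · rintro ⟨j, e⟩ x hx y hy hxy
    obtain ⟨x, hxe, rfl⟩ := mem_map.1 hx
    obtain ⟨y, hye, rfl⟩ := mem_map.1 hy
    rw [part_copy, part_copy] at hxy
    rw [hE.injOn e hxe hye hxy]
  · intro f c hf
    obtain ⟨j, d, hd⟩ := hH (f ∘ Sum.inl)
    obtain ⟨e, b, hb⟩ := hE.unsolvable (f ∘ copyEmbedding φ j) (Function.update c i d) <| by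
      intro x hxT
      by_cases hx : π x = i
      · rw [hx, Function.update_self, Function.comp_apply,
          copyEmbedding_of_pos (q := (π · = i)) j hx]
        exact hd _ (hφ _ _)
      · rw [Function.update_of_ne hx, Function.comp_apply, hf _ (by simp [part_copy, hx, hxT]),
          part_copy]
    exact ⟨(j, e), b, forall_mem_map.2 hb⟩
  · rintro e x ⟨hxe, hx⟩ y ⟨hye, hy⟩
    exact hE.injOn e hxe hye (hx.trans hy.symm)

theorem exists_isPartiteSystem {C α : Type} [Fintype C] [Nonempty C] [Fintype α] {p k : ℕ}
    (hH : ∀ s, ∃ (W κ : Type) (_ : Finite W) (_ : Finite κ) (H : κ → Finset W),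
      (∀ e, #(H e) = s) ∧ IsUnsolvable C H ∧ IsForestUpTo p H)
    (hα : Fintype.card C * k ≤ Fintype.card α) (T : Finset α) :
    ∃ (V ι : Type) (_ : Finite V) (_ : Finite ι) (π : V → α) (E : ι → Finset V),
      IsPartiteSystem C k (p + 1) T π E := by
  classical
  induction T using Finset.induction_on with
  | empty =>
    exact ⟨_, _, inferInstance, inferInstance, _, _, by
      simpa using isPartiteSystem_disjointEdges hα (p + 1)⟩
  | insert i T _ ih =>
    obtain ⟨V, ι, _, _, π, E, hE⟩ := ih
    obtain ⟨W, κ, _, _, H, hs, hunsolvable, hforest⟩ := hH (Nat.card {x // π x = i})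
    have e (j : κ) : {x // π x = i} ≃ H j := (Finite.card_eq.1 (by simp [hs])).some
    have glued := hE.amalgam (φ := fun j => (e j).toEmbedding.trans (.subtype _)) hunsolvable
      hforest fun j x => (e j x).2
    rw [coe_insert]
    exact ⟨_, _, inferInstance, inferInstance, _, _, glued⟩

theorem exists_uniform_isUnsolvable_isForestUpTo (C : Type) [Finite C] [Nonempty C] (p k : ℕ) :
    ∃ (V ι : Type) (_ : Finite V) (_ : Finite ι) (E : ι → Finset V),
      (∀ e, #(E e) = k) ∧ IsUnsolvable C E ∧ IsForestUpTo p E := by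
  have := Fintype.ofFinite C
  have hα (k : ℕ) : Fintype.card C * k ≤ Fintype.card (C × Fin k) := by simp
  induction p generalizing k with
  | zero =>
    refine ⟨C × Fin k, {s : Finset (C × Fin k) // #s = k}, inferInstance, inferInstance,
      Subtype.val, Subtype.prop, fun f => ?_, isForestUpTo_zero _⟩
    obtain ⟨s, c, hs, hc⟩ := exists_card_eq_forall_eq (hα k) f
    exact ⟨⟨s, hs⟩, c, hc⟩
  | succ p ih =>
    obtain ⟨V, ι, hV, hι, π, E, hE⟩ := exists_isPartiteSystem ih (hα k) univ
    refine ⟨V, ι, hV, hι, E, hE.card_eq, fun f => ?_, hE.isForestUpTo⟩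
    exact hE.unsolvable f (fun _ => Classical.arbitrary C) (by simp)

end Unsolvable

theorem exists_high_girth_nae_instance_general (r k g : ℕ) (hr : 0 < r) :
    ∃ (X : Type) (_ : Fintype X) (E : Finset (Finset X)),
      (∀ e ∈ E, e.card = k) ∧
      (∀ f : X → Fin r, ∃ e ∈ E, ∀ x ∈ e, ∀ y ∈ e, f x = f y) ∧
      ¬ ∃ (ℓ : ℕ), 2 ≤ ℓ ∧ ℓ < g ∧
        ∃ (y : ZMod ℓ → X) (e : ZMod ℓ → Finset X),
          Function.Injective y ∧ Function.Injective e ∧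
          (∀ j : ZMod ℓ, e j ∈ E) ∧
          (∀ j : ZMod ℓ, y j ∈ e j ∧ y (j + 1) ∈ e j) := by
  have : Nonempty (Fin r) := ⟨⟨0, hr⟩⟩
  obtain ⟨X, ι, _, _, E, hk, hunsolvable, hforest⟩ :=
    exists_uniform_isUnsolvable_isForestUpTo (Fin r) g k
  refine ⟨X, .ofFinite X, (Set.finite_range E).toFinset, by simpa using hk, fun f => ?_, ?_⟩
  · obtain ⟨e, c, hc⟩ := hunsolvable f
    exact ⟨E e, by simp, fun x hx y hy => (hc x hx).trans (hc y hy).symm⟩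
  · rintro ⟨ℓ, hℓ, hℓg, y, e, hy, he, heE, hmem⟩
    choose u hu using fun j => (Set.finite_range E).mem_toFinset.1 (heE j)
    obtain rfl : E ∘ u = e := funext hu
    exact hℓg.not_gt (hforest.lt_length_of_cycle hℓ hy he.of_comp hmem)

/-- For all `r ≥ 3` and `k ≥ 3` there is an instance of `r`-valued
not-all-equal `k`-satisfiability with girth at least `k` and no solution. -/
theorem exists_high_girth_nae_instance (r k : ℕ) (hr : 3 ≤ r) (hk : 3 ≤ k) :
    ∃ (X : Type) (_ : Fintype X) (E : Finset (Finset X)),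
      (∀ e ∈ E, e.card = k) ∧
      (∀ f : X → Fin r, ∃ e ∈ E, ∀ x ∈ e, ∀ y ∈ e, f x = f y) ∧
      ¬ ∃ (ℓ : ℕ), 2 ≤ ℓ ∧ ℓ < k ∧
        ∃ (y : ZMod ℓ → X) (e : ZMod ℓ → Finset X),
          Function.Injective y ∧ Function.Injective e ∧
          (∀ j : ZMod ℓ, e j ∈ E) ∧
          (∀ j : ZMod ℓ, y j ∈ e j ∧ y (j + 1) ∈ e j) :=
  exists_high_girth_nae_instance_general r k k (by omega)
end

section
/- For all integers r ≥ 3 and k ≥ 3, there exists a finite simple graph G whose girth is at least k (and which contains at least one cycle) and which admits no acyclic r-coloring. -/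
/-- An acyclic `r`-coloring of a simple graph: an assignment of `r` colors to
the vertices such that no cycle is monochromatic (each color class induces a
forest). -/
def HasAcyclicGraphColoring {V : Type} (G : SimpleGraph V) (r : ℕ) : Prop :=
  ∃ f : V → Fin r, ∀ (v : V) (w : G.Walk v v), w.IsCycle →
    ∃ x ∈ w.support, f x ≠ f v

/-! Splitting each color class of an acyclic `r`-coloring into the two sides of a bipartite forest
gives a proper `2 * r`-coloring, so it suffices to find graphs of large girth and large chromatic
number. These are built greedily: edges are added one at a time between vertices that are far apart
and not yet of maximal degree, which keeps the girth large. Among all pairs of vertices, a fraction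
of at least `1 / R` is monochromatic under any given `R`-coloring, while few pairs are excluded, so
averaging over the proper `R`-colorings gives an edge whose addition destroys a fraction of at least
`1 / (2 * R)` of them. After `C * n` additions fewer than one of the `R ^ n` colorings is left. -/

section Girth

open Finset SimpleGraph

variable {V : Type*} {G : SimpleGraph V} {u v : V}

lemma edist_deleteEdges_add_one_le_length {a : V} {c : G.Walk a a} (hc : c.IsTrail)
    (huv : s(u, v) ∈ c.edges) : (G.deleteEdges {s(u, v)}).edist u v + 1 ≤ c.length := by
  wlog hsub : (c.adj_of_mem_edges huv).toWalk.IsSubwalk c generalizing u v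
  · have hsub' := ((Walk.isSubwalk_toWalk_iff_mem_edges _).2 huv).resolve_left hsub
    rw [Sym2.eq_swap] at huv ⊢
    rw [edist_comm]
    exact this huv hsub'
  obtain ⟨p, q, hc_eq⟩ := hsub
  have hnodup := hc.edges_nodup
  have havoid : ∀ e ∈ (q.append p).edges, e ∉ ({s(u, v)} : Set (Sym2 V)) := by
    simp only [hc_eq, Walk.edges_append, List.nodup_append, Adj.toWalk, Walk.edges_cons,
      Walk.edges_nil] at hnodup ⊢
    grind
  rw [edist_comm]
  calc (G.deleteEdges {s(u, v)}).edist v u + 1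
      ≤ ((q.append p).toDeleteEdges _ havoid).length + 1 := by gcongr; exact edist_le _
    _ = c.length := by
        rw [hc_eq]
        simp only [Walk.toDeleteEdges, Walk.length_transfer, Walk.length_append, Adj.toWalk,
          Walk.length_cons, Walk.length_nil]
        norm_cast
        omega

lemma min_egirth_edist_add_one_le_egirth_sup_edge (G : SimpleGraph V) (u v : V) :
    min G.egirth (G.edist u v + 1) ≤ (G ⊔ edge u v).egirth := by
  have hdel : (G ⊔ edge u v).deleteEdges {s(u, v)} ≤ G := by
    intro x y hxy
    simp only [deleteEdges_adj, sup_adj, adj_edge, Set.mem_singleton_iff] at hxy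
    grind
  rw [le_egirth]
  intro a c hc
  by_cases huv : s(u, v) ∈ c.edges
  · calc min G.egirth (G.edist u v + 1) ≤ G.edist u v + 1 := min_le_right _ _
      _ ≤ ((G ⊔ edge u v).deleteEdges {s(u, v)}).edist u v + 1 := by gcongr
      _ ≤ c.length := edist_deleteEdges_add_one_le_length hc.isTrail huv
  · have hc' := (hc.toDeleteEdges _ ({s(u, v)} : Set (Sym2 V)) fun e he h ↦ huv (h ▸ he)).mapLe hdel
    calc min G.egirth (G.edist u v + 1) ≤ G.egirth := min_le_left _ _
      _ ≤ _ := egirth_le_length hc'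
      _ = c.length := by simp

lemma ball_add_one_subset (G : SimpleGraph V) (u : V) (j : ℕ) :
    G.ball u (j + 1) ⊆ insert u (⋃ x ∈ G.ball u j, G.neighborSet x) := by
  intro v hv
  obtain ⟨w, hw⟩ := exists_walk_of_edist_ne_top (ne_top_of_lt (mem_ball.1 hv))
  have hlt : w.length < j + 1 := by
    have := mem_ball.1 hv
    rw [← hw] at this
    exact_mod_cast this
  cases w with
  | nil => exact Set.mem_insert _ _
  | @cons _ x _ hvx w =>
    refine Set.mem_insert_of_mem _ (Set.mem_biUnion (x := x) ?_ hvx.symm)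
    rw [Walk.length_cons] at hlt
    exact mem_ball.2 (w.edist_le.trans_lt (by exact_mod_cast Nat.lt_of_succ_lt_succ hlt))

lemma encard_ball_le {D : ℕ} (hD : ∀ v, (G.neighborSet v).encard ≤ D) (u : V) (j : ℕ) :
    (G.ball u j).encard ≤ (D + 1) ^ j := by
  induction j with
  | zero => simp
  | succ j ih =>
    have hfin : (G.ball u j).Finite :=
      Set.finite_of_encard_le_coe (k := (D + 1) ^ j) (by exact_mod_cast ih)
    have hone : (1 : ℕ∞) ≤ (D + 1) ^ j := one_le_pow_of_one_le' le_add_self j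
    calc (G.ball u (j + 1 : ℕ)).encard
        ≤ (insert u (⋃ x ∈ G.ball u j, G.neighborSet x)).encard :=
          Set.encard_le_encard (by exact_mod_cast ball_add_one_subset G u j)
      _ ≤ (⋃ x ∈ hfin.toFinset, G.neighborSet x).encard + 1 := by
          simpa using Set.encard_insert_le _ _
      _ ≤ ∑ x ∈ hfin.toFinset, (G.neighborSet x).encard + 1 := by
          gcongr; exact Finset.set_encard_biUnion_le _ _
      _ ≤ #hfin.toFinset * D + 1 := by
          gcongr
          simpa using Finset.sum_le_card_nsmul hfin.toFinset _ _ fun x _ ↦ hD x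
      _ ≤ (D + 1) ^ j * D + (D + 1) ^ j := by
          gcongr
          rwa [← Set.encard_coe_eq_coe_finsetCard, hfin.coe_toFinset]
      _ = (D + 1) ^ (j + 1) := by ring

end Girth

section Averaging

open Finset

variable {ι V κ : Type*} [Fintype ι] [Fintype V] [Fintype κ] [DecidableEq κ]

lemma card_sq_le_card_mul_card_monochromatic (f : V → κ) :
    Fintype.card V ^ 2 ≤ Fintype.card κ * #{p : V × V | f p.1 = f p.2} := by
  have hfiber (c : κ) : #{p ∈ ({p : V × V | f p.1 = f p.2} : Finset _) | f p.1 = c} =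
      #{v | f v = c} ^ 2 := by
    rw [sq, ← card_product]
    congr 1
    ext p
    simp only [mem_filter, mem_product]
    grind
  calc Fintype.card V ^ 2 = (∑ c : κ, #{v | f v = c}) ^ 2 := by
        rw [← card_univ, card_eq_sum_card_fiberwise (f := f) (t := univ) (by simp)]
    _ ≤ Fintype.card κ * ∑ c : κ, #{v | f v = c} ^ 2 := sq_sum_le_card_mul_sum_sq
    _ = Fintype.card κ * #{p : V × V | f p.1 = f p.2} := by
        rw [card_eq_sum_card_fiberwise (f := fun p ↦ f p.1) (t := univ) (by simp)]
        simp only [hfiber]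

lemma card_sq_le_two_mul_card_mul_card_monochromatic [DecidableEq V] {A : Finset (V × V)}
    (hA : 2 * Fintype.card κ * #Aᶜ ≤ Fintype.card V ^ 2) (f : V → κ) :
    Fintype.card V ^ 2 ≤ 2 * Fintype.card κ * #{p ∈ A | f p.1 = f p.2} := by
  have hsplit : #{p : V × V | f p.1 = f p.2} ≤ #{p ∈ A | f p.1 = f p.2} + #Aᶜ := by
    refine (card_le_card fun p hp ↦ ?_).trans (card_union_le _ _)
    simp only [mem_union, mem_filter, mem_compl] at hp ⊢
    tauto
  have hmono := card_sq_le_card_mul_card_monochromatic f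
  nlinarith [Nat.mul_le_mul_left (2 * Fintype.card κ) hsplit]

lemma exists_card_le_two_mul_card_mul_card_monochromatic [DecidableEq V] [Nonempty V] [Nonempty κ]
    {A : Finset (V × V)} (hA : 2 * Fintype.card κ * #Aᶜ ≤ Fintype.card V ^ 2) (F : ι → V → κ) :
    ∃ p ∈ A, Fintype.card ι ≤ 2 * Fintype.card κ * #{i | F i p.1 = F i p.2} := by
  have hne : A.Nonempty := by
    by_contra hA_empty
    have := card_sq_le_two_mul_card_mul_card_monochromatic hA fun _ ↦ Classical.arbitrary κ
    simp [not_nonempty_iff_eq_empty.1 hA_empty] at this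
  refine exists_le_of_sum_le hne ?_
  calc ∑ _p ∈ A, Fintype.card ι = ∑ _i : ι, #A := by simp [mul_comm]
    _ ≤ ∑ i : ι, 2 * Fintype.card κ * #{p ∈ A | F i p.1 = F i p.2} := by
        gcongr with i
        refine (card_le_univ A).trans ?_
        rw [Fintype.card_prod, ← sq]
        exact card_sq_le_two_mul_card_mul_card_monochromatic hA (F i)
    _ = ∑ p ∈ A, 2 * Fintype.card κ * #{i | F i p.1 = F i p.2} := by
        rw [← mul_sum, ← mul_sum]
        exact congrArg _ (sum_card_bipartiteAbove_eq_sum_card_bipartiteBelow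
          fun i (p : V × V) ↦ F i p.1 = F i p.2)

end Averaging

section Greedy

open Finset SimpleGraph

variable {V : Type*} {G : SimpleGraph V} {u v : V} {k D m : ℕ}

lemma degree_sup_edge_le_add_one (G : SimpleGraph V) (u v w : V) [Fintype (G.neighborSet w)]
    [Fintype ((G ⊔ edge u v).neighborSet w)] : (G ⊔ edge u v).degree w ≤ G.degree w + 1 := by
  classical
  have hsub : (G ⊔ edge u v).neighborFinset w ⊆
      insert (if w = u then v else u) (G.neighborFinset w) := by
    intro x
    simp only [mem_neighborFinset, sup_adj, edge_adj, mem_insert]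
    grind
  exact (card_le_card hsub).trans (card_insert_le _ _)

lemma degree_sup_edge_of_ne {w : V} [Fintype (G.neighborSet w)]
    [Fintype ((G ⊔ edge u v).neighborSet w)] (hu : w ≠ u) (hv : w ≠ v) :
    (G ⊔ edge u v).degree w = G.degree w := by
  refine congrArg card ?_
  ext x
  simp only [mem_neighborFinset, sup_adj, edge_adj]
  tauto

lemma card_edgeFinset_sup_edge_le_add_one (G : SimpleGraph V) (u v : V) [Fintype G.edgeSet]
    [Fintype (G ⊔ edge u v).edgeSet] : #(G ⊔ edge u v).edgeFinset ≤ #G.edgeFinset + 1 := by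
  classical
  have hsub : (G ⊔ edge u v).edgeFinset ⊆ insert s(u, v) G.edgeFinset := by
    intro e
    simp only [mem_edgeFinset, edgeSet_sup, edgeSet_edge, mem_insert]
    grind
  exact (card_le_card hsub).trans (card_insert_le _ _)

variable [Fintype V]

lemma mul_card_le_degree_le_two_mul_card_edgeFinset (G : SimpleGraph V) [DecidableRel G.Adj]
    (D : ℕ) : D * #{v | D ≤ G.degree v} ≤ 2 * #G.edgeFinset := by
  rw [← G.sum_degrees_eq_twice_card_edges, mul_comm, ← smul_eq_mul]
  exact (card_nsmul_le_sum _ _ _ fun v hv ↦ (mem_filter.1 hv).2).trans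
    (sum_le_sum_of_subset (subset_univ _))

open Classical in
lemma card_edist_lt_le [DecidableRel G.Adj] (hD : ∀ v, G.degree v ≤ D) (k : ℕ) :
    #{p : V × V | G.edist p.1 p.2 < k} ≤ Fintype.card V * (D + 1) ^ k := by
  have hball (v : V) : #{u | G.edist u v < k} ≤ (D + 1) ^ k := by
    have hdeg (u : V) : (G.neighborSet u).encard ≤ D := by
      rw [← Set.coe_fintypeCard, card_neighborSet_eq_degree]
      exact_mod_cast hD u
    have hcard : (#{u | G.edist u v < k} : ℕ∞) ≤ (D + 1) ^ k := by
      simpa [← Set.coe_fintypeCard] using encard_ball_le hdeg v k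
    exact_mod_cast hcard
  rw [card_eq_sum_card_fiberwise (f := Prod.snd) (t := univ) (by simp), ← card_univ, ← smul_eq_mul]
  refine sum_le_card_nsmul _ _ _ fun v _ ↦ le_trans ?_ (hball v)
  refine card_le_card_of_injOn Prod.fst (fun p hp ↦ ?_) fun p hp q hq hpq ↦ ?_
  · simp only [mem_coe, mem_filter, mem_univ, true_and] at hp ⊢
    exact hp.2 ▸ hp.1
  · exact Prod.ext hpq ((mem_filter.1 hp).2.trans (mem_filter.1 hq).2.symm)

open Classical in
/-- The invariant of the greedy construction: girth at least `k`, maximum degree at most `D` and at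
most `m` edges. -/
structure IsSparse (G : SimpleGraph V) (k D m : ℕ) : Prop where
  le_egirth : (k : ℕ∞) ≤ G.egirth
  degree_le : ∀ v, G.degree v ≤ D
  card_edgeFinset_le : #G.edgeFinset ≤ m

lemma isSparse_bot (k D m : ℕ) : IsSparse (⊥ : SimpleGraph V) k D m where
  le_egirth := by simp
  degree_le v := by simp
  card_edgeFinset_le := by simp [edgeFinset]

open Classical in
/-- The pairs of vertices that may be joined without destroying the invariant `IsSparse`: both ends
have degree less than `D` and their distance is at least `k`. -/
noncomputable def admissiblePairs (G : SimpleGraph V) (k D : ℕ) : Finset (V × V) :=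
  {p | G.degree p.1 < D ∧ G.degree p.2 < D ∧ (k : ℕ∞) ≤ G.edist p.1 p.2}

lemma IsSparse.sup_edge (hG : IsSparse G k D m) (huv : (u, v) ∈ admissiblePairs G k D) :
    IsSparse (G ⊔ edge u v) k D (m + 1) := by
  classical
  obtain ⟨hu, hv, hdist⟩ := (mem_filter_univ _).1 huv
  refine ⟨?_, fun w ↦ ?_, ?_⟩
  · exact (le_min hG.le_egirth (hdist.trans le_self_add)).trans
      (min_egirth_edist_add_one_le_egirth_sup_edge G u v)
  · by_cases hw : w = u ∨ w = v
    · have hlt : G.degree w < D := by obtain rfl | rfl := hw <;> assumption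
      convert Nat.le_trans (degree_sup_edge_le_add_one G u v w) hlt
    · rw [not_or] at hw
      convert (degree_sup_edge_of_ne hw.1 hw.2).trans_le (hG.degree_le w)
  · convert Nat.le_trans (card_edgeFinset_sup_edge_le_add_one G u v)
      (Nat.add_le_add_right hG.card_edgeFinset_le 1)

open Classical in
lemma card_compl_admissiblePairs_le (G : SimpleGraph V) (k D : ℕ) :
    #(admissiblePairs G k D)ᶜ ≤ 2 * (Fintype.card V * #{v | D ≤ G.degree v}) +
      #{p : V × V | G.edist p.1 p.2 < k} := by
  set S : Finset V := {v | D ≤ G.degree v}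
  set N : Finset (V × V) := {p | G.edist p.1 p.2 < k}
  have hsub : (admissiblePairs G k D)ᶜ ⊆ S ×ˢ univ ∪ univ ×ˢ S ∪ N := by
    intro p hp
    simp only [admissiblePairs, mem_compl, mem_filter_univ, mem_union, mem_product, mem_univ,
      and_true, true_and, S, N] at hp ⊢
    grind
  calc #(admissiblePairs G k D)ᶜ
      ≤ #(S ×ˢ univ) + #(univ ×ˢ S) + #N :=
        (card_le_card hsub).trans <| (card_union_le _ _).trans <|
          Nat.add_le_add_right (card_union_le _ _) _
    _ = 2 * (Fintype.card V * #S) + #N := by simp only [card_product, card_univ]; ring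

open Classical in
lemma IsSparse.two_mul_card_compl_admissiblePairs_le {R : ℕ} (hG : IsSparse G k D m) (hD : 0 < D)
    (hm : 16 * R * m ≤ D * Fintype.card V) (hn : 4 * R * (D + 1) ^ k ≤ Fintype.card V) :
    2 * R * #(admissiblePairs G k D)ᶜ ≤ Fintype.card V ^ 2 := by
  set S : Finset V := {v | D ≤ G.degree v}
  have hS : 8 * R * #S ≤ Fintype.card V := by
    refine Nat.le_of_mul_le_mul_left ?_ hD
    calc D * (8 * R * #S) = 8 * R * (D * #S) := by ring
      _ ≤ 8 * R * (2 * #G.edgeFinset) :=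
          Nat.mul_le_mul_left _ (mul_card_le_degree_le_two_mul_card_edgeFinset G D)
      _ ≤ 8 * R * (2 * m) := by grw [hG.card_edgeFinset_le]
      _ = 16 * R * m := by ring
      _ ≤ D * Fintype.card V := hm
  calc 2 * R * #(admissiblePairs G k D)ᶜ
      ≤ 2 * R * (2 * (Fintype.card V * #S) + Fintype.card V * (D + 1) ^ k) := by
        grw [card_compl_admissiblePairs_le, card_edist_lt_le hG.degree_le]
    _ ≤ Fintype.card V ^ 2 := by
        nlinarith [Nat.mul_le_mul_left (Fintype.card V) hS, Nat.mul_le_mul_left (Fintype.card V) hn]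

variable {κ : Type*} [Fintype κ]

lemma card_coloring_sup_edge_add_le [DecidableEq κ] (G : SimpleGraph V) (huv : u ≠ v) :
    Fintype.card ((G ⊔ edge u v).Coloring κ) + #{c : G.Coloring κ | c u = c v} ≤
      Fintype.card (G.Coloring κ) := by
  have hadj : (G ⊔ edge u v).Adj u v := by simp [edge_adj, huv]
  have hinj : Fintype.card ((G ⊔ edge u v).Coloring κ) ≤ #{c : G.Coloring κ | ¬ c u = c v} := by
    rw [← card_univ]
    refine card_le_card_of_injOn (fun c ↦ c.comap (.ofLE le_sup_left)) (fun c _ ↦ ?_) ?_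
    · simpa using c.valid hadj
    · intro c _ d _ hcd
      ext x
      exact DFunLike.congr_fun hcd x
  have hsplit := card_filter_add_card_filter_not (s := univ) fun c : G.Coloring κ ↦ c u = c v
  rw [card_univ] at hsplit
  lia

lemma IsSparse.exists_card_coloring_sup_edge_le [Nonempty V] [Nonempty κ]
    (hG : IsSparse G k D m) (hk : 0 < k) (hD : 0 < D)
    (hm : 16 * Fintype.card κ * m ≤ D * Fintype.card V)
    (hn : 4 * Fintype.card κ * (D + 1) ^ k ≤ Fintype.card V) :
    ∃ u v, (u, v) ∈ admissiblePairs G k D ∧ (Fintype.card ((G ⊔ edge u v).Coloring κ) : ℝ) ≤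
      (1 - 1 / (2 * Fintype.card κ)) * Fintype.card (G.Coloring κ) := by
  classical
  obtain ⟨⟨u, v⟩, huv, hmono⟩ := exists_card_le_two_mul_card_mul_card_monochromatic
    (hG.two_mul_card_compl_admissiblePairs_le hD hm hn) fun c : G.Coloring κ ↦ c
  have hne : u ≠ v := by
    rintro rfl
    simp [admissiblePairs, hk.ne'] at huv
  have hκ : (0 : ℝ) < 2 * Fintype.card κ := by exact_mod_cast Nat.mul_pos two_pos Fintype.card_pos
  have hmono' : Fintype.card (G.Coloring κ) / (2 * Fintype.card κ : ℝ) ≤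
      #{c : G.Coloring κ | c u = c v} := by
    rw [div_le_iff₀' hκ]
    exact_mod_cast hmono
  have hadd : (Fintype.card ((G ⊔ edge u v).Coloring κ) + #{c : G.Coloring κ | c u = c v} : ℝ) ≤
      Fintype.card (G.Coloring κ) := mod_cast card_coloring_sup_edge_add_le G hne
  refine ⟨u, v, huv, ?_⟩
  rw [sub_mul, one_mul, one_div_mul_eq_div]
  linarith

variable (V κ) in
lemma exists_isSparse_card_coloring_le [Nonempty V] [Nonempty κ] (hk : 0 < k) (hD : 0 < D)
    (hn : 4 * Fintype.card κ * (D + 1) ^ k ≤ Fintype.card V) :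
    ∀ m, 16 * Fintype.card κ * m ≤ D * Fintype.card V → ∃ G : SimpleGraph V, IsSparse G k D m ∧
      (Fintype.card (G.Coloring κ) : ℝ) ≤
        (1 - 1 / (2 * Fintype.card κ)) ^ m * Fintype.card κ ^ Fintype.card V
  | 0, _ => by
    classical
    refine ⟨⊥, isSparse_bot k D 0, ?_⟩
    rw [pow_zero, one_mul, ← Nat.cast_pow, ← Fintype.card_fun, Nat.cast_le]
    exact Fintype.card_le_of_injective _ DFunLike.coe_injective
  | m + 1, hm => by
    have hm' : 16 * Fintype.card κ * m ≤ D * Fintype.card V :=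
      (Nat.mul_le_mul_left _ m.le_succ).trans hm
    obtain ⟨G, hG, hcard⟩ := exists_isSparse_card_coloring_le hk hD hn m hm'
    obtain ⟨u, v, huv, hstep⟩ := hG.exists_card_coloring_sup_edge_le hk hD hm' hn
    have hnonneg : (0 : ℝ) ≤ 1 - 1 / (2 * Fintype.card κ) := by
      have hκ : (1 : ℝ) ≤ 2 * Fintype.card κ := by
        exact_mod_cast Nat.one_le_of_lt (Nat.mul_pos two_pos Fintype.card_pos)
      exact sub_nonneg.2 (div_le_one_of_le₀ hκ (zero_le_one.trans hκ))
    refine ⟨G ⊔ edge u v, hG.sup_edge huv, ?_⟩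
    grw [hstep, hcard, pow_succ', mul_assoc]

end Greedy

section Erdos

open SimpleGraph

lemma exists_le_egirth_not_colorable (k c : ℕ) :
    ∃ (n : ℕ) (G : SimpleGraph (Fin n)), (k : ℕ∞) ≤ G.egirth ∧ ¬ G.Colorable c := by
  set R := c + 1
  set q : ℝ := 1 - 1 / (2 * R)
  have hR : (1 : ℝ) ≤ R := mod_cast c.succ_pos
  have hq₀ : 0 ≤ q := sub_nonneg.2 (div_le_one_of_le₀ (by linarith) (by positivity))
  have hq₁ : q < 1 := sub_lt_self _ (by positivity)
  obtain ⟨C, hC⟩ : ∃ C : ℕ, q ^ C < 1 / R := exists_pow_lt_of_lt_one (by positivity) hq₁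
  set D := 16 * R * C + 1
  set n := 4 * R * (D + 1) ^ (k + 1)
  have hn : 0 < n := by positivity
  have : NeZero n := ⟨hn.ne'⟩
  obtain ⟨G, hG, hcard⟩ := exists_isSparse_card_coloring_le (Fin n) (Fin R) (D := D) k.succ_pos
    (by positivity) (by simp [n]) (C * n) (by simp only [Fintype.card_fin, D]; lia)
  refine ⟨n, G, le_trans (by simp) hG.le_egirth, fun hcol ↦ ?_⟩
  obtain ⟨f⟩ := hcol.mono c.le_succ
  have hpos : (1 : ℝ) ≤ Fintype.card (G.Coloring (Fin R)) := by
    exact_mod_cast Fintype.card_pos_iff.2 ⟨f⟩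
  have hlt : q ^ (C * n) * (R : ℝ) ^ n < 1 := by
    rw [pow_mul, ← mul_pow]
    exact pow_lt_one₀ (by positivity) ((lt_div_iff₀ (by positivity)).1 hC) hn.ne'
  simp only [Fintype.card_fin] at hcard
  linarith

end Erdos

section AcyclicColoring

open SimpleGraph

variable {V κ : Type*} {G : SimpleGraph V} {f : V → κ}

/-- The spanning subgraph of `G` consisting of the edges whose ends receive the same color under
`f`: the disjoint union of the subgraphs induced by the color classes. -/
def monochromaticSubgraph (G : SimpleGraph V) (f : V → κ) : SimpleGraph V where
  Adj x y := G.Adj x y ∧ f x = f y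
  symm := ⟨fun _ _ h ↦ ⟨h.1.symm, h.2.symm⟩⟩
  loopless := ⟨fun _ h ↦ h.1.ne rfl⟩

lemma monochromaticSubgraph_le (G : SimpleGraph V) (f : V → κ) : monochromaticSubgraph G f ≤ G :=
  fun _ _ h ↦ h.1

lemma eq_of_mem_support_monochromaticSubgraph {a b x : V}
    (w : (monochromaticSubgraph G f).Walk a b) (hx : x ∈ w.support) : f x = f a := by
  induction w with
  | nil => rw [Walk.mem_support_nil_iff.1 hx]
  | cons hadj w ih =>
    rcases List.mem_cons.1 hx with rfl | hx
    · rfl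
    · exact (ih hx).trans hadj.2.symm

lemma isAcyclic_monochromaticSubgraph
    (hf : ∀ (v : V) (w : G.Walk v v), w.IsCycle → ∃ x ∈ w.support, f x ≠ f v) :
    (monochromaticSubgraph G f).IsAcyclic := by
  intro v w hw
  obtain ⟨x, hx, hne⟩ := hf v _ (hw.mapLe (monochromaticSubgraph_le G f))
  rw [Walk.support_mapLe_eq_support] at hx
  exact hne (eq_of_mem_support_monochromaticSubgraph w hx)

lemma colorable_card_mul_of_monochromaticSubgraph [Fintype κ] {n : ℕ}
    (h : (monochromaticSubgraph G f).Colorable n) : G.Colorable (Fintype.card κ * n) := by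
  obtain ⟨c⟩ := h
  have hvalid {x y : V} (hxy : G.Adj x y) : (f x, c x) ≠ (f y, c y) := fun heq ↦
    c.valid ⟨hxy, congrArg Prod.fst heq⟩ (congrArg Prod.snd heq)
  simpa using (Coloring.mk (fun x ↦ (f x, c x)) hvalid).colorable

lemma HasAcyclicGraphColoring.colorable {V : Type} {G : SimpleGraph V} {r : ℕ}
    (h : HasAcyclicGraphColoring G r) : G.Colorable (r * 2) := by
  obtain ⟨f, hf⟩ := h
  simpa using colorable_card_mul_of_monochromaticSubgraph
    (isAcyclic_monochromaticSubgraph hf).colorable_two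

end AcyclicColoring

/-- For all `r ≥ 3` and `k ≥ 3` there is a finite simple graph with girth at
least `k` (containing at least one cycle) which has no acyclic `r`-coloring. -/
theorem exists_high_girth_high_arboricity (r k : ℕ) (hr : 3 ≤ r) (hk : 3 ≤ k) :
    ∃ (V : Type) (_ : Fintype V) (G : SimpleGraph V),
      (k : ℕ∞) ≤ G.egirth ∧ G.egirth ≠ ⊤ ∧
      ¬ HasAcyclicGraphColoring G r := by
  obtain ⟨n, G, hgirth, hcol⟩ := exists_le_egirth_not_colorable k (r * 2)
  refine ⟨Fin n, inferInstance, G, hgirth, fun htop ↦ hcol ?_, fun h ↦ hcol h.colorable⟩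
  exact (SimpleGraph.egirth_eq_top.1 htop).colorable_two.mono (by omega)
end

section
/- Every tournament T on n ≥ 1 vertices contains a transitive subtournament on ⌈log₂(n+1)⌉ vertices; that is, there is a set S of vertices with |S| = ⌈log₂(n+1)⌉ such that the tournament relation restricted to S is transitive. -/
/-!
Fix a vertex `v` of a tournament. By pigeonhole its out-neighbours or its in-neighbours make up at
least half of the other vertices, and putting `v` first or last extends a transitive
subtournament of that half. So the largest transitive subtournament grows by at least one vertex
each time the number of vertices goes from `m` to `2 * m + 1`.
-/

open Finset

variable {V : Type*} {T : V → V → Prop}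

/-- `T` restricted to `s` is a tournament: exactly one of the arcs `T u v`, `T v u` is present for
distinct `u v ∈ s`. Loops are not excluded. -/
def IsTournamentOn (T : V → V → Prop) (s : Set V) : Prop :=
  s.Pairwise fun u v ↦ T u v ↔ ¬ T v u

/-- `T` restricted to `s` is a transitive relation; the unbundled counterpart on a set of
`IsTrans`. -/
def IsTransOn (T : V → V → Prop) (s : Set V) : Prop :=
  ∀ a ∈ s, ∀ b ∈ s, ∀ c ∈ s, T a b → T b c → T a c

theorem IsTournamentOn.mono {s t : Set V} (ht : IsTournamentOn T t) (hst : s ⊆ t) :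
    IsTournamentOn T s :=
  Set.Pairwise.mono hst ht

theorem IsTournamentOn.or_of_ne {s : Set V} {u v : V} (hT : IsTournamentOn T s) (hu : u ∈ s)
    (hv : v ∈ s) (huv : u ≠ v) : T u v ∨ T v u :=
  or_iff_not_imp_right.mpr (hT hu hv huv).mpr

theorem IsTransOn.mono {s t : Set V} (ht : IsTransOn T t) (hst : s ⊆ t) : IsTransOn T s :=
  fun a ha b hb c hc ↦ ht a (hst ha) b (hst hb) c (hst hc)

theorem IsTransOn.swap {s : Set V} (hs : IsTransOn T s) : IsTransOn (Function.swap T) s :=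
  fun a ha b hb c hc hba hcb ↦ hs c hc b hb a ha hcb hba

theorem IsTransOn.insert_source {s : Set V} {v : V} (hs : IsTransOn T s)
    (hvs : ∀ w ∈ s, T v w) (hsv : ∀ w ∈ s, ¬ T w v) : IsTransOn T (insert v s) := by
  rintro a (rfl | ha) b (rfl | hb) c (rfl | hc) hab hbc
  · exact hab
  · exact hbc
  · exact absurd hbc (hsv b hb)
  · exact hvs c hc
  · exact hab
  · exact absurd hab (hsv a ha)
  · exact absurd hbc (hsv b hb)
  · exact hs a ha b hb c hc hab hbc

theorem IsTransOn.insert_sink {s : Set V} {v : V} (hs : IsTransOn T s)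
    (hsv : ∀ w ∈ s, T w v) (hvs : ∀ w ∈ s, ¬ T v w) : IsTransOn T (insert v s) :=
  (hs.swap.insert_source hsv hvs).swap

theorem IsTournamentOn.isTransOn_insert {s : Set V} {v : V}
    (hT : IsTournamentOn T (insert v s)) (hv : v ∉ s) (hs : IsTransOn T s)
    (h : (∀ w ∈ s, T v w) ∨ ∀ w ∈ s, T w v) : IsTransOn T (insert v s) := by
  have arc_iff (w : V) (hw : w ∈ s) : T v w ↔ ¬ T w v :=
    hT (Set.mem_insert v s) (Set.mem_insert_of_mem v hw) (ne_of_mem_of_not_mem hw hv).symm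
  rcases h with hvs | hsv
  · exact hs.insert_source hvs fun w hw ↦ (arc_iff w hw).mp (hvs w hw)
  · exact hs.insert_sink hsv fun w hw hvw ↦ (arc_iff w hw).mp hvw (hsv w hw)

theorem exists_subset_forall_or_forall_of_forall_or {α : Type*} {s : Finset α} {p q : α → Prop}
    (h : ∀ a ∈ s, p a ∨ q a) :
    ∃ t ⊆ s, #s ≤ 2 * #t ∧ ((∀ a ∈ t, p a) ∨ ∀ a ∈ t, q a) := by
  classical
  have card_le : #s ≤ #{a ∈ s | p a} + #{a ∈ s | q a} := by
    calc #s = #{a ∈ s | p a ∨ q a} := by rw [filter_true_of_mem h]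
      _ = #({a ∈ s | p a} ∪ {a ∈ s | q a}) := by rw [filter_or]
      _ ≤ #{a ∈ s | p a} + #{a ∈ s | q a} := card_union_le _ _
  rcases le_total #{a ∈ s | q a} #{a ∈ s | p a} with hqp | hpq
  · exact ⟨{a ∈ s | p a}, filter_subset _ s, by lia, .inl fun a ha ↦ (mem_filter.mp ha).2⟩
  · exact ⟨{a ∈ s | q a}, filter_subset _ s, by lia, .inr fun a ha ↦ (mem_filter.mp ha).2⟩

theorem clog_le_clog_add_one_of_le_mul {b m n : ℕ} (hb : 1 < b) (h : n ≤ b * m) :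
    Nat.clog b n ≤ Nat.clog b m + 1 := by
  refine Nat.clog_le_of_le_pow ?_
  calc n ≤ b * m := h
    _ ≤ b * b ^ Nat.clog b m := by gcongr; exact Nat.le_pow_clog hb m
    _ = b ^ (Nat.clog b m + 1) := (pow_succ' b _).symm

theorem IsTournamentOn.exists_isTransOn_clog_le_card {s : Finset V} (hT : IsTournamentOn T s) :
    ∃ t ⊆ s, Nat.clog 2 (#s + 1) ≤ #t ∧ IsTransOn T t := by
  classical
  induction s using Finset.strongInduction with
  | H s ih =>
    obtain rfl | ⟨v, hv⟩ := s.eq_empty_or_nonempty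
    · exact ⟨∅, subset_rfl, by simp, by simp [IsTransOn]⟩
    have arc_or : ∀ w ∈ s.erase v, T v w ∨ T w v := fun w hw ↦
      hT.or_of_ne hv (mem_of_mem_erase hw) (ne_of_mem_erase hw).symm
    obtain ⟨u, hu, card_le, h_dom⟩ := exists_subset_forall_or_forall_of_forall_or arc_or
    have hus : u ⊂ s := hu.trans_ssubset (erase_ssubset hv)
    obtain ⟨t, htu, ht_card, ht⟩ := ih u hus (hT.mono (coe_subset.mpr hus.subset))
    have hvt : v ∉ t := fun h ↦ notMem_erase v s (hu (htu h))
    have h_insert : insert v t ⊆ s := insert_subset hv (htu.trans hus.subset)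
    refine ⟨insert v t, h_insert, ?_, ?_⟩
    · have h_erase : #(s.erase v) + 1 = #s := card_erase_add_one hv
      calc Nat.clog 2 (#s + 1) ≤ Nat.clog 2 (#u + 1) + 1 :=
            clog_le_clog_add_one_of_le_mul one_lt_two (by lia)
        _ ≤ #t + 1 := by gcongr
        _ = #(insert v t) := (card_insert_of_notMem hvt).symm
    · have ht_dom : (∀ w ∈ t, T v w) ∨ ∀ w ∈ t, T w v :=
        h_dom.imp (fun h w hw ↦ h w (htu hw)) fun h w hw ↦ h w (htu hw)
      have hT_insert : IsTournamentOn T (insert v (t : Set V)) := hT.mono (mod_cast h_insert)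
      exact_mod_cast hT_insert.isTransOn_insert hvt ht ht_dom

theorem tournament_transitive_subtournament_general {s : Finset V} (hT : IsTournamentOn T s) :
    ∃ t ⊆ s, #t = Nat.clog 2 (#s + 1) ∧ IsTransOn T t := by
  obtain ⟨u, hus, card_le, hu⟩ := hT.exists_isTransOn_clog_le_card
  obtain ⟨t, htu, ht_card⟩ := exists_subset_card_eq card_le
  exact ⟨t, htu.trans hus, ht_card, hu.mono (coe_subset.mpr htu)⟩

/-- Every tournament on `n ≥ 1` vertices contains a transitive subtournament
on `⌈log₂ (n + 1)⌉` vertices. -/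
theorem tournament_transitive_subtournament (n : ℕ) (hn : 1 ≤ n)
    (V : Type) [Fintype V] (hV : Fintype.card V = n)
    (T : V → V → Prop) (hirr : ∀ v : V, ¬ T v v)
    (htot : ∀ u v : V, u ≠ v → (T u v ↔ ¬ T v u)) :
    ∃ S : Finset V, S.card = Nat.clog 2 (n + 1) ∧
      ∀ a ∈ S, ∀ b ∈ S, ∀ c ∈ S, T a b → T b c → T a c := by
  obtain ⟨S, -, hS, hS_trans⟩ := tournament_transitive_subtournament_general (s := univ)
    (T := T) fun u _ v _ huv ↦ htot u v huv
  exact ⟨S, by rw [hS, card_univ, hV], hS_trans⟩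
end

section
/- For every real ε with 0 < ε < 1 and every integer n ≥ 2, every tournament T on n vertices admits an acyclic coloring with at most n/((1−ε)·log₂ n) + n^{1−ε} colors; that is, the vertex set of T can be partitioned into at most that many parts, each of which induces a transitive (acyclic) subtournament. -/
/-!
Each vertex dominates, or is dominated by, at least half of the remaining vertices, so recursing
into the larger side gives every set of `s` vertices a transitive subset of more than `log₂ s`
vertices. Fix a threshold `M` and remove such subsets while more than `M` vertices remain: each has
more than `log₂ M` vertices, so there are at most `n / log₂ M` of them, and the at most `M`
leftover vertices get one color each. The bound is the case `M = n ^ (1 - ε)`.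
-/

open Finset

section TransOn

variable {V : Type*} {T : V → V → Prop} {s : Set V}

/-- The relation `T` is transitive on `s`; when `T` is the arc relation of a tournament, this says
that `s` induces an acyclic subtournament. -/
def TransOn (T : V → V → Prop) (s : Set V) : Prop :=
  ∀ a ∈ s, ∀ b ∈ s, ∀ c ∈ s, T a b → T b c → T a c

theorem transOn_empty (T : V → V → Prop) : TransOn T ∅ := fun _ ha ↦ ha.elim

theorem transOn_singleton (T : V → V → Prop) (v : V) : TransOn T {v} := by
  rintro a rfl b rfl c rfl hab -
  exact hab

theorem TransOn.flip (hs : TransOn T s) : TransOn (flip T) s :=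
  fun a ha b hb c hc hab hbc ↦ hs c hc b hb a ha hbc hab

theorem TransOn.insert_of_forall_left {v : V} (hs : TransOn T s) (hout : ∀ u ∈ s, T v u)
    (hin : ∀ u ∈ s, ¬ T u v) : TransOn T (insert v s) := by
  rintro a (rfl | ha) b (rfl | hb) c (rfl | hc) hab hbc
  · exact hab
  · exact hbc
  · exact (hin b hb hbc).elim
  · exact hout c hc
  · exact hab
  · exact (hin a ha hab).elim
  · exact (hin b hb hbc).elim
  · exact hs a ha b hb c hc hab hbc

theorem TransOn.insert_of_forall_right {v : V} (hs : TransOn T s) (hin : ∀ u ∈ s, T u v)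
    (hout : ∀ u ∈ s, ¬ T v u) : TransOn T (insert v s) :=
  (hs.flip.insert_of_forall_left hin hout).flip

end TransOn

section Tournament

variable {V : Type*} {T : V → V → Prop}

theorem exists_subset_transOn_card_lt_two_pow (hT : Pairwise fun u v ↦ (T u v ↔ ¬ T v u))
    (S : Finset V) : ∃ A ⊆ S, #S < 2 ^ #A ∧ TransOn T A := by
  classical
  induction S using Finset.strongInduction with
  | H S ih =>
    obtain rfl | ⟨v, hv⟩ := S.eq_empty_or_nonempty
    · exact ⟨∅, subset_rfl, by simp, by simpa only [coe_empty] using transOn_empty T⟩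
    have extend {W : Finset V} (hWS : W ⊆ S.erase v) (hcard : #S ≤ 2 * #W + 1)
        (hins : ∀ A ⊆ W, TransOn T A → TransOn T (insert v A : Finset V)) :
        ∃ A ⊆ S, #S < 2 ^ #A ∧ TransOn T A := by
      obtain ⟨A, hAW, hWA, hA⟩ := ih W (hWS.trans_ssubset (erase_ssubset hv))
      have hAS : A ⊆ S.erase v := hAW.trans hWS
      refine ⟨insert v A, insert_subset hv (hAS.trans (erase_subset v S)), ?_, hins A hAW hA⟩
      rw [card_insert_of_notMem fun hvA ↦ notMem_erase v S (hAS hvA), pow_succ]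
      lia
    have hhalf : #S ≤ 2 * #{u ∈ S.erase v | T v u} + 1 ∨
        #S ≤ 2 * #{u ∈ S.erase v | ¬ T v u} + 1 := by
      have := card_filter_add_card_filter_not (s := S.erase v) (T v)
      have := card_erase_add_one hv
      lia
    obtain hout | hin := hhalf
    · refine extend (filter_subset _ _) hout fun A hA hAT ↦ ?_
      have hvA {u : V} (hu : u ∈ A) : u ≠ v ∧ T v u :=
        ⟨ne_of_mem_erase (mem_filter.1 (hA hu)).1, (mem_filter.1 (hA hu)).2⟩
      rw [coe_insert]
      exact hAT.insert_of_forall_left (fun u hu ↦ (hvA hu).2)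
        fun u hu ↦ (hT (hvA hu).1.symm).1 (hvA hu).2
    · refine extend (filter_subset _ _) hin fun A hA hAT ↦ ?_
      have hvA {u : V} (hu : u ∈ A) : u ≠ v ∧ ¬ T v u :=
        ⟨ne_of_mem_erase (mem_filter.1 (hA hu)).1, (mem_filter.1 (hA hu)).2⟩
      rw [coe_insert]
      exact hAT.insert_of_forall_right (fun u hu ↦ (hT (hvA hu).1).2 (hvA hu).2)
        fun u hu ↦ (hvA hu).2

theorem exists_subset_transOn_logb_le_card (hT : Pairwise fun u v ↦ (T u v ↔ ¬ T v u)) {M : ℝ}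
    (hM : 0 < M) {S : Finset V} (hS : M ≤ #S) : ∃ A ⊆ S, Real.logb 2 M ≤ #A ∧ TransOn T A := by
  obtain ⟨A, hAS, hcard, hA⟩ := exists_subset_transOn_card_lt_two_pow hT S
  refine ⟨A, hAS, (Real.logb_le_iff_le_rpow one_lt_two hM).2 ?_, hA⟩
  rw [Real.rpow_natCast]
  exact hS.trans (mod_cast hcard.le)

end Tournament

section Greedy

variable {α : Type*} [DecidableEq α]

theorem exists_finpartition_card_parts_le {K : Type*} [Field K] [LinearOrder K]
    [IsStrictOrderedRing K] {P : Finset α → Prop} {L M : K} (hL : 0 < L) (hsingle : ∀ a, P {a})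
    (hlarge : ∀ S : Finset α, M < #S → ∃ A ⊆ S, L ≤ #A ∧ P A) (S : Finset α) :
    ∃ Q : Finpartition S, (#Q.parts : K) ≤ #S / L + M ∧ ∀ A ∈ Q.parts, P A := by
  induction S using Finset.strongInduction with
  | H S ih =>
    obtain hSM | hMS := le_or_gt (#S : K) M
    · refine ⟨⊥, ?_, fun A hA ↦ ?_⟩
      · rw [Finpartition.card_bot]
        exact le_add_of_nonneg_of_le (by positivity) hSM
      · obtain ⟨a, -, rfl⟩ := Finpartition.mem_bot_iff.1 hA
        exact hsingle a
    · obtain ⟨A, hAS, hLA, hPA⟩ := hlarge S hMS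
      have hA : A.Nonempty := card_pos.1 (mod_cast hL.trans_le hLA)
      obtain ⟨Q, hcard, hQ⟩ := ih (S \ A) (sdiff_ssubset hAS hA)
      refine ⟨Q.extend hA.ne_empty sdiff_disjoint (sdiff_union_of_subset hAS), ?_,
        (forall_mem_insert _ _ _).2 ⟨hPA, hQ⟩⟩
      rw [Finpartition.card_extend, Nat.cast_succ]
      calc (#Q.parts + 1 : K)
          ≤ #(S \ A) / L + M + #A / L := add_le_add hcard ((one_le_div hL).2 hLA)
        _ = (#(S \ A) + #A) / L + M := by ring
        _ = #S / L + M := by rw [← Nat.cast_add, card_sdiff_add_card_eq_card hAS]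

theorem exists_fin_coloring_part_eq [Fintype α] (Q : Finpartition (univ : Finset α)) :
    ∃ f : α → Fin #Q.parts, ∀ a b, f a = f b ↔ Q.part a = Q.part b :=
  ⟨fun a ↦ Q.parts.equivFin ⟨Q.part a, Q.part_mem.2 (mem_univ a)⟩, fun _ _ ↦ by
    rw [EmbeddingLike.apply_eq_iff_eq, Subtype.mk_eq_mk]⟩

end Greedy

theorem tournament_acyclic_coloring_general {V : Type*} [Fintype V] {T : V → V → Prop}
    (hT : Pairwise fun u v ↦ (T u v ↔ ¬ T v u)) {M : ℝ} (hM : 1 < M) :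
    ∃ (m : ℕ) (f : V → Fin m), (m : ℝ) ≤ Fintype.card V / Real.logb 2 M + M ∧
      ∀ a b c : V, f a = f b → f b = f c → T a b → T b c → T a c := by
  classical
  obtain ⟨Q, hcard, hQ⟩ := exists_finpartition_card_parts_le (P := fun A ↦ TransOn T A)
    (Real.logb_pos one_lt_two hM) (by simpa only [coe_singleton] using transOn_singleton T)
    (fun _ hS ↦ exists_subset_transOn_logb_le_card hT (one_pos.trans hM) hS.le) univ
  obtain ⟨f, hf⟩ := exists_fin_coloring_part_eq Q
  refine ⟨#Q.parts, f, hcard, fun a b c hab hbc ↦ ?_⟩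
  have ha : a ∈ Q.part b := (hf a b).1 hab ▸ Q.mem_part (mem_univ a)
  have hc : c ∈ Q.part b := (hf b c).1 hbc ▸ Q.mem_part (mem_univ c)
  exact hQ _ (Q.part_mem.2 (mem_univ b)) a ha b (Q.mem_part (mem_univ b)) c hc

/-- Every tournament on `n ≥ 2` vertices can be partitioned into at most
`n / ((1 - ε) log₂ n) + n ^ (1 - ε)` parts, each inducing a transitive
(acyclic) subtournament. -/
theorem tournament_acyclic_coloring (ε : ℝ) (hε0 : 0 < ε) (hε1 : ε < 1)
    (n : ℕ) (hn : 2 ≤ n)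
    (V : Type) [Fintype V] (hV : Fintype.card V = n)
    (T : V → V → Prop) (hirr : ∀ v : V, ¬ T v v)
    (htot : ∀ u v : V, u ≠ v → (T u v ↔ ¬ T v u)) :
    ∃ (m : ℕ) (f : V → Fin m),
      (m : ℝ) ≤ (n : ℝ) / ((1 - ε) * Real.logb 2 n) + (n : ℝ) ^ (1 - ε) ∧
      ∀ a b c : V, f a = f b → f b = f c → T a b → T b c → T a c := by
  simpa only [hV, Real.logb_rpow_eq_mul_logb_of_pos (Nat.cast_pos.2 (two_pos.trans_le hn))] using
    tournament_acyclic_coloring_general (fun u v ↦ htot u v)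
      (Real.one_lt_rpow (Nat.one_lt_cast.2 hn) (sub_pos.2 hε1))
end

section
/- Let n ≥ 2 and let m = ⌊3·log₂ n⌋. The number of tournaments on the vertex set {1, …, n} that contain a transitive subtournament on m vertices is at most n^m · 2^{n(n−1)/2 − m(m−1)/2}. (Consequently, since the total number of tournaments on n labeled vertices is 2^{n(n−1)/2}, the proportion of tournaments containing a transitive subtournament on m vertices is at most n^m · 2^{−m(m−1)/2}, which tends to 0 as n → ∞.) -/
/-! A transitive subtournament on `m` vertices is a chain of `m` distinct vertices in which every
vertex beats all later ones, so it suffices to fix the chain `f` and take a union bound over `f`.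
Relative to a reference tournament, a tournament is determined by the graph of the pairs on which
the two disagree. If both contain the chain `f`, this graph has no edge inside the range of `f`, so
only `n.choose 2 - m.choose 2` pairs remain free. -/

theorem nonempty_fin_lt_relIso {α : Type*} [Fintype α] {m : ℕ} (r : α → α → Prop)
    [IsStrictTotalOrder α r] (hm : Fintype.card α = m) :
    Nonempty (((· < ·) : Fin m → Fin m → Prop) ≃r r) := by
  classical
  let _ : LinearOrder α := linearOrderOfSTO r
  exact ⟨(Fintype.orderIsoFinOfCardEq α hm).toRelIsoLT⟩

section Pairs

variable {V : Type*} [DecidableEq V]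

theorem sym2_mk_mem_image_offDiag {S : Finset V} {a b : V} :
    s(a, b) ∈ S.offDiag.image Sym2.mk.uncurry ↔ a ∈ S ∧ b ∈ S ∧ a ≠ b := by
  simp only [Finset.mem_image, Finset.mem_offDiag, Prod.exists, Function.uncurry, Sym2.eq_iff]
  grind

theorem card_image_offDiag_univ_sdiff [Fintype V] (S : Finset V) :
    (Finset.univ.offDiag.image Sym2.mk.uncurry \ S.offDiag.image Sym2.mk.uncurry).card =
      (Fintype.card V).choose 2 - S.card.choose 2 := by
  rw [Finset.card_sdiff_of_subset
      (Finset.image_subset_image (Finset.offDiag_mono S.subset_univ)),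
    Sym2.card_image_offDiag, Sym2.card_image_offDiag, Finset.card_univ]

end Pairs

section Tournament

variable {V : Type*} {t t' t₀ : V → V → Bool}

/-- The tournaments on `V`, encoded by their arcs: `t a b = true` means that `a` beats `b`. -/
def IsTournament (t : V → V → Bool) : Prop :=
  (∀ a, t a a = false) ∧ ∀ a b, a ≠ b → t a b = !t b a

/-- The arc relation of `t` is transitive on `S`, so that `S` induces a transitive
subtournament. -/
def IsTransitiveOn (t : V → V → Bool) (S : Finset V) : Prop :=
  ∀ a ∈ S, ∀ b ∈ S, ∀ c ∈ S, t a b = true → t b c = true → t a c = true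

/-- Each vertex `f i` beats all later vertices of the family `f`. This is the transitive
subtournament on the range of `f`, together with its linear order. -/
def IsChainAlong {ι : Type*} [LT ι] (t : V → V → Bool) (f : ι → V) : Prop :=
  ∀ ⦃i j⦄, i < j → t (f i) (f j) = true

/-- The pairs of vertices whose arc is oriented differently in `t₀` and `t`. It serves to encode
the tournament `t` relative to the reference tournament `t₀`. -/
def disagreementGraph (t₀ t : V → V → Bool) : SimpleGraph V :=
  SimpleGraph.fromRel fun a b => t a b ≠ t₀ a b

namespace IsTournament

theorem isStrictTotalOrder_of_isTransitiveOn {S : Finset V} (ht : IsTournament t)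
    (hS : IsTransitiveOn t S) : IsStrictTotalOrder S fun a b => t a b = true where
  trichotomous a b hab hba := by
    by_contra hne
    have := ht.2 a b (Subtype.coe_ne_coe.mpr hne)
    simp_all
  irrefl a := by simp [ht.1]
  trans a b c := hS a a.2 b b.2 c c.2

theorem exists_isChainAlong {S : Finset V} (ht : IsTournament t) (hS : IsTransitiveOn t S) :
    ∃ f : Fin S.card ↪ V, IsChainAlong t f := by
  have := ht.isStrictTotalOrder_of_isTransitiveOn hS
  obtain ⟨e⟩ := nonempty_fin_lt_relIso (fun a b : S => t a b = true) (Fintype.card_coe S)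
  exact ⟨e.toEquiv.toEmbedding.trans (Function.Embedding.subtype _),
    fun _ _ hij => e.map_rel_iff.mpr hij⟩

theorem apply_eq_of_isChainAlong {ι : Type*} [LinearOrder ι] {f : ι → V} (ht : IsTournament t)
    (ht' : IsTournament t') (hf : IsChainAlong t f) (hf' : IsChainAlong t' f) (i j : ι) :
    t (f i) (f j) = t' (f i) (f j) := by
  by_cases hne : f i = f j
  · rw [hne, ht.1, ht'.1]
  rcases lt_trichotomy i j with hij | rfl | hji
  · rw [hf hij, hf' hij]
  · exact absurd rfl hne
  · rw [ht.2 _ _ hne, ht'.2 _ _ hne, hf hji, hf' hji]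

theorem disagreementGraph_adj (ht₀ : IsTournament t₀) (ht : IsTournament t) {a b : V} :
    (disagreementGraph t₀ t).Adj a b ↔ t a b ≠ t₀ a b := by
  rw [disagreementGraph, SimpleGraph.fromRel_adj]
  by_cases hab : a = b
  · simp [hab, ht.1, ht₀.1]
  · simp [hab, ht.2 a b hab, ht₀.2 a b hab]

theorem injOn_disagreementGraph (ht₀ : IsTournament t₀) :
    Set.InjOn (disagreementGraph t₀) {t | IsTournament t} := by
  intro t ht t' ht' hgraph
  funext a b
  have hiff : t a b ≠ t₀ a b ↔ t' a b ≠ t₀ a b := by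
    rw [← disagreementGraph_adj ht₀ ht, ← disagreementGraph_adj ht₀ ht', hgraph]
  have eq_of_ne_iff_ne : ∀ x y z : Bool, (x ≠ z ↔ y ≠ z) → x = y := by decide
  exact eq_of_ne_iff_ne _ _ _ hiff

end IsTournament

theorem ncard_tournaments_eqOn_le [Fintype V] (ht₀ : IsTournament t₀) (S : Finset V) :
    {t | IsTournament t ∧ ∀ a ∈ S, ∀ b ∈ S, t a b = t₀ a b}.ncard ≤
      2 ^ ((Fintype.card V).choose 2 - S.card.choose 2) := by
  classical
  rw [← card_image_offDiag_univ_sdiff, ← Finset.card_powerset, ← Set.ncard_coe_finset]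
  refine Set.ncard_le_ncard_of_injOn (fun t => (disagreementGraph t₀ t).edgeFinset) ?_ ?_
  · rintro t ⟨ht, hS⟩
    refine Finset.mem_coe.mpr (Finset.mem_powerset.mpr fun e => ?_)
    induction e with | _ a b
    intro he
    have hadj : (disagreementGraph t₀ t).Adj a b := by simpa using he
    have hdis := (ht₀.disagreementGraph_adj ht).mp hadj
    rw [Finset.mem_sdiff, sym2_mk_mem_image_offDiag, sym2_mk_mem_image_offDiag]
    exact ⟨⟨Finset.mem_univ a, Finset.mem_univ b, hadj.ne⟩,
      fun ⟨ha, hb, _⟩ => hdis (hS a ha b hb)⟩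
  · intro t ht t' ht' hedges
    exact ht₀.injOn_disagreementGraph ht.1 ht'.1 (SimpleGraph.edgeFinset_inj.mp hedges)

theorem ncard_tournaments_isChainAlong_le [Fintype V] {ι : Type*} [LinearOrder ι] [Fintype ι]
    (f : ι ↪ V) :
    {t | IsTournament t ∧ IsChainAlong t f}.ncard ≤
      2 ^ ((Fintype.card V).choose 2 - (Fintype.card ι).choose 2) := by
  rcases Set.eq_empty_or_nonempty {t | IsTournament t ∧ IsChainAlong t f} with
    hempty | ⟨t₀, ht₀, hf₀⟩
  · simp [hempty]
  have hsub : {t | IsTournament t ∧ IsChainAlong t f} ⊆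
      {t | IsTournament t ∧ ∀ a ∈ Finset.univ.map f, ∀ b ∈ Finset.univ.map f,
        t a b = t₀ a b} := by
    rintro t ⟨ht, hf⟩
    simpa [ht] using ht.apply_eq_of_isChainAlong ht₀ hf hf₀
  simpa using (Set.ncard_le_ncard hsub).trans (ncard_tournaments_eqOn_le ht₀ (Finset.univ.map f))

theorem count_tournaments_with_transitive_subtournament_general (V : Type*) [Fintype V] (m : ℕ) :
    Nat.card {t : V → V → Bool //
        IsTournament t ∧ ∃ S : Finset V, S.card = m ∧ IsTransitiveOn t S} ≤
      (Fintype.card V).descFactorial m * 2 ^ ((Fintype.card V).choose 2 - m.choose 2) := by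
  classical
  have hcover : {t : V → V → Bool | IsTournament t ∧
        ∃ S : Finset V, S.card = m ∧ IsTransitiveOn t S} ⊆
      ⋃ f : Fin m ↪ V, {t | IsTournament t ∧ IsChainAlong t f} := by
    rintro t ⟨ht, S, rfl, hS⟩
    obtain ⟨f, hf⟩ := ht.exists_isChainAlong hS
    exact Set.mem_iUnion.mpr ⟨f, ht, hf⟩
  calc _ = {t : V → V → Bool | IsTournament t ∧
        ∃ S : Finset V, S.card = m ∧ IsTransitiveOn t S}.ncard := Nat.card_coe_set_eq _
    _ ≤ (⋃ f : Fin m ↪ V, {t | IsTournament t ∧ IsChainAlong t f}).ncard :=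
      Set.ncard_le_ncard hcover
    _ ≤ ∑ f : Fin m ↪ V, {t | IsTournament t ∧ IsChainAlong t f}.ncard :=
      Set.ncard_iUnion_le_of_fintype _
    _ ≤ ∑ _f : Fin m ↪ V, 2 ^ ((Fintype.card V).choose 2 - m.choose 2) :=
      Finset.sum_le_sum fun f _ => by simpa using ncard_tournaments_isChainAlong_le f
    _ = _ := by simp [Fintype.card_embedding_eq]

end Tournament

/-- The number of tournaments on the labeled vertex set `Fin n` (encoded as
functions `t : Fin n → Fin n → Bool` with `t i i = false` and
`t i j = !t j i` for `i ≠ j`) that contain a transitive subtournament on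
`m = ⌊3 log₂ n⌋` vertices is at most `n ^ m * 2 ^ (n(n-1)/2 - m(m-1)/2)`. -/
theorem count_tournaments_with_transitive_subtournament (n : ℕ) (hn : 2 ≤ n)
    (m : ℕ) (hm : m = ⌊3 * Real.logb 2 n⌋₊) :
    Nat.card {t : Fin n → Fin n → Bool //
        ((∀ i, t i i = false) ∧ ∀ i j, i ≠ j → t i j = !t j i) ∧
        ∃ S : Finset (Fin n), S.card = m ∧
          ∀ a ∈ S, ∀ b ∈ S, ∀ c ∈ S, t a b = true → t b c = true → t a c = true}
      ≤ n ^ m * 2 ^ (n * (n - 1) / 2 - m * (m - 1) / 2) := by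
  have hcount := count_tournaments_with_transitive_subtournament_general (Fin n) m
  rw [Fintype.card_fin, Nat.choose_two_right, Nat.choose_two_right] at hcount
  exact hcount.trans (Nat.mul_le_mul_right _ (Nat.descFactorial_le_pow n m))
end

section
/- Fix a real ε with 0 < ε < 1, let n ≥ 1, and let m = ⌈n^ε⌉. Consider orientations of the complete bipartite graph with parts U and V of size n each, i.e., functions assigning to each pair (u, v) ∈ U × V a direction (from u to v or from v to u). The number of such orientations for which there exist subsets U' ⊆ U and V' ⊆ V with |U'| = |V'| = m such that the digraph induced on U' ∪ V' is acyclic is at most n^{2m} · (m+1)^m · 2^{n² − m²}. (Since the total number of orientations is 2^{n²}, the probability that a uniformly random orientation contains such an acyclic pair is at most n^{2m} · (m+1)^m · 2^{−m²}, which tends to 0 as n → ∞.) -/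
/-- The arc relation of the digraph induced on `U' ∪ V'` by an orientation
`g` of the complete bipartite graph between copies of `Fin n`:
`g u v = true` means the edge `{u, v}` is oriented from `u ∈ U` to `v ∈ V`. -/
def BipAdj {n : ℕ} (g : Fin n → Fin n → Bool) (U' V' : Finset (Fin n)) :
    (Fin n ⊕ Fin n) → (Fin n ⊕ Fin n) → Prop
  | Sum.inl u, Sum.inr v => u ∈ U' ∧ v ∈ V' ∧ g u v = true
  | Sum.inr v, Sum.inl u => u ∈ U' ∧ v ∈ V' ∧ g u v = false
  | _, _ => False

/-!
An acyclic induced digraph has no directed 4-cycle, so the out-neighbourhoods of any two vertices of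
`U'` are nested. Sorting the vertices of `V'` by in-degree then turns the `m × m` matrix of arc
directions into a staircase, which is recorded by one threshold per row. There are at most
`n ^ (2 * m)` choices for the positions of the rows and columns and `(m + 1) ^ m` choices of
thresholds, and together they fix `m ^ 2` of the `n ^ 2` arc directions.
-/

open Finset Function

/-- A Boolean matrix is *Ferrers* if none of its `2 × 2` submatrices is the identity, for any order
of its rows and columns; equivalently, the supports of its rows are nested. For the matrix of an
orientation this says that there is no directed 4-cycle. -/
def IsFerrers {ι κ : Type*} (f : ι → κ → Bool) : Prop :=
  ∀ ⦃i i' j j'⦄, f i j = true → f i' j' = true → f i j' = true ∨ f i' j = true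

/-- The staircase matrix whose row `i` turns from `false` to `true` at column `k i`; the threshold
`⊤` encodes a row that is entirely `false`. -/
def staircase {ι κ : Type*} [LE κ] [DecidableLE κ] (k : ι → WithTop κ) (i : ι) (j : κ) : Bool :=
  decide (k i ≤ j)

theorem IsFerrers.comp {ι κ ι' κ' : Type*} {f : ι → κ → Bool} (hf : IsFerrers f) (a : ι' → ι)
    (b : κ' → κ) : IsFerrers fun i j => f (a i) (b j) :=
  fun _ _ _ _ h h' => hf h h'

theorem IsFerrers.le_of_card_le {ι κ : Type*} [Fintype ι] {f : ι → κ → Bool} (hf : IsFerrers f)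
    {j j' : κ} (hcard : #{i | f i j = true} ≤ #{i | f i j' = true}) (i : ι) : f i j ≤ f i j' := by
  rw [Bool.le_iff_imp]
  intro hij
  by_contra hij'
  have hsub : ({i | f i j' = true} : Finset ι) ⊂ ({i | f i j = true} : Finset ι) := by
    refine (ssubset_iff_of_subset fun i' hi' => ?_).2 ⟨i, by simpa using hij, by simpa using hij'⟩
    simp only [mem_filter_univ] at hi' ⊢
    exact (hf hij hi').resolve_left hij'
  exact (card_lt_card hsub).not_ge hcard

theorem IsFerrers.exists_perm_monotone {ι : Type*} [Finite ι] {t : ℕ} {f : ι → Fin t → Bool}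
    (hf : IsFerrers f) : ∃ σ : Equiv.Perm (Fin t), ∀ i, Monotone fun j => f i (σ j) := by
  have := Fintype.ofFinite ι
  let colCard (j : Fin t) : ℕ := #{i | f i j = true}
  exact ⟨Tuple.sort colCard, fun i _ _ hj =>
    hf.le_of_card_le (Tuple.monotone_sort colCard hj) i⟩

theorem exists_eq_decide_le_of_monotone {κ : Type*} [LinearOrder κ] [WellFoundedLT κ]
    {f : κ → Bool} (hf : Monotone f) : ∃ k : WithTop κ, ∀ j : κ, f j = decide (k ≤ j) := by
  by_cases h : ∃ j, f j = true
  · obtain ⟨k, hk⟩ := exists_minimal_of_wellFoundedLT (fun j => f j = true) h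
    refine ⟨k, fun j => ?_⟩
    rw [Bool.eq_iff_iff, decide_eq_true_iff, WithTop.coe_le_coe]
    exact ⟨fun hj => not_lt.1 fun hjk => hk.not_prop_of_lt hjk hj,
      fun hkj => Bool.le_iff_imp.1 (hf hkj) hk.prop⟩
  · exact ⟨⊤, by simpa using h⟩

theorem IsFerrers.exists_perm_eq_staircase {ι : Type*} [Finite ι] {t : ℕ} {f : ι → Fin t → Bool}
    (hf : IsFerrers f) :
    ∃ (σ : Equiv.Perm (Fin t)) (k : ι → WithTop (Fin t)), ∀ i j, f i (σ j) = staircase k i j := by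
  obtain ⟨σ, hσ⟩ := hf.exists_perm_monotone
  choose k hk using fun i => exists_eq_decide_le_of_monotone (hσ i)
  exact ⟨σ, k, hk⟩

theorem IsFerrers.exists_embedding_eq_staircase {α β : Type*} {g : α → β → Bool} {S : Finset α}
    {T : Finset β} (hg : IsFerrers fun (u : S) (v : T) => g u v) :
    ∃ (a : Fin #S ↪ α) (b : Fin #T ↪ β) (k : Fin #S → WithTop (Fin #T)),
      ∀ i j, g (a i) (b j) = staircase k i j := by
  obtain ⟨σ, k, hk⟩ := (hg.comp S.equivFin.symm T.equivFin.symm).exists_perm_eq_staircase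
  exact ⟨S.equivFin.symm.toEmbedding.trans (.subtype _),
    (σ.trans T.equivFin.symm).toEmbedding.trans (.subtype _), k, hk⟩

theorem card_comp_embedding_eq {ι κ γ : Type*} [Finite ι] (e : κ ↪ ι) (f : κ → γ) :
    Nat.card {h : ι → γ // h ∘ e = f} = Nat.card γ ^ (Nat.card ι - Nat.card κ) := by
  classical
  let r := Equiv.ofInjective e e.injective
  have hcomp (h : ι → γ) : h ∘ e = f ↔ h ∘ Subtype.val = f ∘ r.symm :=
    (r.eq_comp_symm (h ∘ Subtype.val) f).symm
  have hcompl : Nat.card {i // i ∉ Set.range e} = Nat.card ι - Nat.card κ := by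
    rw [Nat.card_congr r]
    exact Set.ncard_compl (Set.range e)
  rw [Nat.card_congr (Equiv.subtypeEquivRight hcomp),
    Nat.card_congr (Equiv.subtypePreimage (· ∈ Set.range e) (f ∘ r.symm)), Nat.card_fun, hcompl]

theorem card_submatrix_eq {α β ι κ γ : Type*} [Finite α] [Finite β] (a : ι ↪ α) (b : κ ↪ β)
    (f : ι → κ → γ) :
    Nat.card {g : α → β → γ // ∀ i j, g (a i) (b j) = f i j} =
      Nat.card γ ^ (Nat.card α * Nat.card β - Nat.card ι * Nat.card κ) := by
  have huncurry (g : α → β → γ) :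
      (∀ i j, g (a i) (b j) = f i j) ↔ uncurry g ∘ a.prodMap b = uncurry f := by
    simp [funext_iff]
  calc
    _ = Nat.card {h : α × β → γ // h ∘ a.prodMap b = uncurry f} :=
      Nat.card_congr ((Equiv.curry α β γ).symm.subtypeEquiv huncurry)
    _ = _ := by rw [card_comp_embedding_eq, Nat.card_prod, Nat.card_prod]

theorem card_exists_le_card_mul {α ι : Type*} [Finite α] [Fintype ι] {P : ι → α → Prop} {N : ℕ}
    (hP : ∀ i, Nat.card {x // P i x} ≤ N) :
    Nat.card {x // ∃ i, P i x} ≤ Fintype.card ι * N := by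
  let forgetIndex (x : Σ i, {x // P i x}) : {x // ∃ i, P i x} := ⟨x.2, x.1, x.2.2⟩
  have hsurj : Surjective forgetIndex := fun ⟨x, i, hx⟩ => ⟨⟨i, x, hx⟩, rfl⟩
  calc
    Nat.card {x // ∃ i, P i x} ≤ Nat.card (Σ i, {x // P i x}) :=
      Nat.card_le_card_of_surjective forgetIndex hsurj
    _ = ∑ i, Nat.card {x // P i x} := Nat.card_sigma
    _ ≤ Fintype.card ι * N := sum_le_card_nsmul univ _ N fun i _ => hP i

theorem card_staircase_parameters_le (α β : Type*) [Fintype α] [Fintype β] (s t : ℕ) :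
    Fintype.card ((Fin s ↪ α) × (Fin t ↪ β) × (Fin s → WithTop (Fin t))) ≤
      Fintype.card α ^ s * Fintype.card β ^ t * (t + 1) ^ s := by
  have hWithTop : Fintype.card (WithTop (Fin t)) = t + 1 :=
    Fintype.card_option.trans (congrArg (· + 1) (Fintype.card_fin t))
  simp only [Fintype.card_prod, Fintype.card_fun, Fintype.card_embedding_eq, Fintype.card_fin,
    hWithTop, ← mul_assoc]
  gcongr <;> exact Nat.descFactorial_le_pow _ _

theorem card_exists_isFerrers_le (α β : Type*) [Fintype α] [Fintype β] (s t : ℕ) :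
    Nat.card {g : α → β → Bool // ∃ (S : Finset α) (T : Finset β), #S = s ∧ #T = t ∧
        IsFerrers fun (u : S) (v : T) => g u v} ≤
      Fintype.card α ^ s * Fintype.card β ^ t * (t + 1) ^ s *
        2 ^ (Fintype.card α * Fintype.card β - s * t) := by
  let Parameters := (Fin s ↪ α) × (Fin t ↪ β) × (Fin s → WithTop (Fin t))
  let Fits (p : Parameters) (g : α → β → Bool) : Prop :=
    ∀ i j, g (p.1 i) (p.2.1 j) = staircase p.2.2 i j
  calc
    _ ≤ Nat.card {g // ∃ p, Fits p g} := by
      refine Nat.card_mono (Set.toFinite {g | ∃ p, Fits p g}) ?_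
      rintro g ⟨S, T, rfl, rfl, hg⟩
      obtain ⟨a, b, k, hk⟩ := hg.exists_embedding_eq_staircase
      exact ⟨(a, b, k), hk⟩
    _ ≤ Fintype.card Parameters * 2 ^ (Fintype.card α * Fintype.card β - s * t) :=
      card_exists_le_card_mul fun p => by simp [Fits, card_submatrix_eq]
    _ ≤ _ := Nat.mul_le_mul_right _ (card_staircase_parameters_le α β s t)

theorem isFerrers_of_forall_not_isDicycle_four {n : ℕ} {g : Fin n → Fin n → Bool}
    {U' V' : Finset (Fin n)} (h : ∀ c, ¬ IsDicycle (BipAdj g U' V') 4 c) :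
    IsFerrers fun (u : U') (v : V') => g u v := by
  rintro ⟨u, hu⟩ ⟨u', hu'⟩ ⟨v, hv⟩ ⟨v', hv'⟩ huv hu'v'
  by_contra! ⟨huv', hu'v⟩
  simp only [ne_eq, Bool.not_eq_true] at huv hu'v' huv' hu'v
  have huu' : u ≠ u' := by rintro rfl; simp_all
  have hvv' : v ≠ v' := by rintro rfl; simp_all
  let c : Fin 4 → Fin n ⊕ Fin n := ![.inl u, .inr v, .inl u', .inr v']
  have hinj : Injective c := by
    intro i j hij
    fin_cases i <;> fin_cases j <;> simp_all [c]
  have hadj (j : Fin 4) : BipAdj g U' V' (c j) (c (j + 1)) := by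
    fin_cases j
    exacts [⟨hu, hv, huv⟩, ⟨hu', hv, hu'v⟩, ⟨hu', hv', hu'v'⟩, ⟨hu, hv', huv'⟩]
  exact h c ⟨by norm_num, hinj, hadj⟩

theorem count_orientations_with_acyclic_pair_general (n s t : ℕ) :
    Nat.card {g : Fin n → Fin n → Bool //
        ∃ U' V' : Finset (Fin n), U'.card = s ∧ V'.card = t ∧
          ∀ (ℓ : ℕ) (c : ZMod ℓ → (Fin n ⊕ Fin n)),
            ¬ IsDicycle (BipAdj g U' V') ℓ c}
      ≤ n ^ (s + t) * (t + 1) ^ s * 2 ^ (n ^ 2 - s * t) := by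
  refine (Nat.card_mono (Set.toFinite _) ?_).trans
    ((card_exists_isFerrers_le (Fin n) (Fin n) s t).trans_eq ?_)
  · rintro g ⟨U', V', hU', hV', hacyclic⟩
    exact ⟨U', V', hU', hV', isFerrers_of_forall_not_isDicycle_four (hacyclic 4)⟩
  · rw [Fintype.card_fin, pow_add, sq]

/-- The number of orientations of the complete bipartite graph `K_{n,n}` that
contain subsets `U' ⊆ U`, `V' ⊆ V` with `|U'| = |V'| = m = ⌈n ^ ε⌉` inducing an
acyclic digraph is at most `n ^ (2m) * (m + 1) ^ m * 2 ^ (n² - m²)`. -/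
theorem count_orientations_with_acyclic_pair (ε : ℝ) (hε0 : 0 < ε) (hε1 : ε < 1)
    (n : ℕ) (hn : 1 ≤ n) (m : ℕ) (hm : m = ⌈(n : ℝ) ^ ε⌉₊) :
    Nat.card {g : Fin n → Fin n → Bool //
        ∃ U' V' : Finset (Fin n), U'.card = m ∧ V'.card = m ∧
          ∀ (ℓ : ℕ) (c : ZMod ℓ → (Fin n ⊕ Fin n)),
            ¬ IsDicycle (BipAdj g U' V') ℓ c}
      ≤ n ^ (2 * m) * (m + 1) ^ m * 2 ^ (n ^ 2 - m ^ 2) := by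
  simpa only [two_mul, sq m] using count_orientations_with_acyclic_pair_general n m m
end

section
/- Let k ≥ 1, let U and V be finite sets, and fix an orientation of the complete bipartite graph between U and V (each pair (u, v) ∈ U × V is assigned one of the two arc directions). Suppose U' ⊆ U and V' ⊆ V satisfy |U'| = |V'| = 2k+1 and the digraph induced on U' ∪ V' is acyclic. Then there exist subsets A ⊆ U' and B ⊆ V' with |A| = |B| = k such that either every arc between A and B is oriented from A to B, or every arc between A and B is oriented from B to A. -/
/-- The arc relation of the digraph induced on `U' ∪ V'` by an orientation `g`
of the complete bipartite graph between `U` and `V`: `g u v = true` means the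
edge `{u, v}` is oriented from `u ∈ U` to `v ∈ V`. -/
def BipOrientAdj {U V : Type} (g : U → V → Bool) (U' : Finset U) (V' : Finset V)
    [DecidableEq U] [DecidableEq V] : (U ⊕ V) → (U ⊕ V) → Prop
  | Sum.inl u, Sum.inr v => u ∈ U' ∧ v ∈ V' ∧ g u v = true
  | Sum.inr v, Sum.inl u => u ∈ U' ∧ v ∈ V' ∧ g u v = false
  | _, _ => False

/-! If neither of the out-neighbourhoods `N u, N u' ⊆ V'` of `u, u' ∈ U'` contained the other, then
`v ∈ N u \ N u'` and `v' ∈ N u' \ N u` would give a directed cycle `u → v → u' → v' → u`. So the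
out-neighbourhoods are nested. Some `k` vertices of `U'` all have out-degree at least `k`, or some
`k` of them all have out-degree less than `k`. In the first case the smallest of their
out-neighbourhoods is contained in all the others. The second case is the first one for the reversed
orientation, since `|V' \ N u| ≥ k`. -/

open Finset

theorem card_bipartiteAbove_add_card_bipartiteAbove_not {α β : Type*} (r : α → β → Prop)
    [∀ a, DecidablePred (r a)] (t : Finset β) (a : α) :
    #(t.bipartiteAbove r a) + #(t.bipartiteAbove (fun a b => ¬ r a b) a) = #t :=
  card_filter_add_card_filter_not _

/-- A Ferrers relation (or biorder) between `s` and `t`: no `2 × 2` subrectangle of `s × t` meets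
`r` exactly in a diagonal. If `r a b` says that the arc goes from `a` to `b`, this excludes exactly
the directed 4-cycles of the bipartite digraph induced on `s` and `t`. -/
def IsFerrersOn {α β : Type*} (r : α → β → Prop) (s : Set α) (t : Set β) : Prop :=
  ∀ ⦃a⦄, a ∈ s → ∀ ⦃a'⦄, a' ∈ s → ∀ ⦃b⦄, b ∈ t → ∀ ⦃b'⦄, b' ∈ t →
    r a b → r a' b' → r a b' ∨ r a' b

namespace IsFerrersOn

section Set

variable {α β : Type*} {r : α → β → Prop} {s s' : Set α} {t : Set β}

theorem mono_left (h : IsFerrersOn r s t) (hs : s' ⊆ s) : IsFerrersOn r s' t :=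
  fun _ ha _ ha' => h (hs ha) (hs ha')

protected theorem not (h : IsFerrersOn r s t) : IsFerrersOn (fun a b => ¬ r a b) s t := by
  intro a ha a' ha' b hb b' hb' hab ha'b'
  by_contra! hr
  exact (h ha ha' hb' hb hr.1 hr.2).elim hab ha'b'

theorem setOf_subset_total (h : IsFerrersOn r s t) {a a' : α} (ha : a ∈ s) (ha' : a' ∈ s) :
    {b ∈ t | r a b} ⊆ {b ∈ t | r a' b} ∨ {b ∈ t | r a' b} ⊆ {b ∈ t | r a b} := by
  by_contra! hns
  obtain ⟨⟨b, ⟨hb, hab⟩, hb_not⟩, b', ⟨hb', ha'b'⟩, hb'_not⟩ :=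
    hns.imp Set.not_subset.mp Set.not_subset.mp
  exact (h ha ha' hb hb' hab ha'b').elim (fun hab' => hb'_not ⟨hb', hab'⟩)
    fun ha'b => hb_not ⟨hb, ha'b⟩

end Set

section Finset

variable {α β : Type*} {r : α → β → Prop} {s : Finset α} {t : Finset β}

theorem bipartiteAbove_subset_of_card_le [∀ a, DecidablePred (r a)] (h : IsFerrersOn r s t)
    {a a' : α} (ha : a ∈ s) (ha' : a' ∈ s)
    (hcard : #(t.bipartiteAbove r a) ≤ #(t.bipartiteAbove r a')) :
    t.bipartiteAbove r a ⊆ t.bipartiteAbove r a' := by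
  have htotal : t.bipartiteAbove r a ⊆ t.bipartiteAbove r a' ∨
      t.bipartiteAbove r a' ⊆ t.bipartiteAbove r a := by
    simpa only [← coe_subset, coe_bipartiteAbove, mem_coe] using h.setOf_subset_total ha ha'
  exact htotal.elim id fun hsub => (eq_of_subset_of_card_le hsub hcard).ge

theorem exists_card_eq_forall_rel [∀ a, DecidablePred (r a)] (h : IsFerrersOn r s t) {n : ℕ}
    (ht : n ≤ #t) (hdeg : ∀ a ∈ s, n ≤ #(t.bipartiteAbove r a)) :
    ∃ B ⊆ t, #B = n ∧ ∀ a ∈ s, ∀ b ∈ B, r a b := by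
  obtain rfl | hs := s.eq_empty_or_nonempty
  · obtain ⟨B, hBt, hB⟩ := exists_subset_card_eq ht
    exact ⟨B, hBt, hB, by simp⟩
  · obtain ⟨a₀, ha₀, hmin⟩ := s.exists_min_image (fun a => #(t.bipartiteAbove r a)) hs
    obtain ⟨B, hBa₀, hB⟩ := exists_subset_card_eq (hdeg a₀ ha₀)
    refine ⟨B, hBa₀.trans (filter_subset _ _), hB, fun a ha b hb => ?_⟩
    have hsub := h.bipartiteAbove_subset_of_card_le ha₀ ha (hmin a ha)
    exact ((mem_bipartiteAbove r).mp (hsub (hBa₀ hb))).2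

theorem exists_homogeneous_pair (h : IsFerrersOn r s t) {m m' n n' : ℕ}
    (hs : m + m' ≤ #s + 1) (ht : n + n' ≤ #t + 1) (hn : n ≤ #t) (hn' : n' ≤ #t) :
    (∃ A ⊆ s, ∃ B ⊆ t, #A = m ∧ #B = n ∧ ∀ a ∈ A, ∀ b ∈ B, r a b) ∨
      ∃ A ⊆ s, ∃ B ⊆ t, #A = m' ∧ #B = n' ∧ ∀ a ∈ A, ∀ b ∈ B, ¬ r a b := by
  classical
  have hsplit := card_filter_add_card_filter_not (s := s) fun a => n ≤ #(t.bipartiteAbove r a)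
  obtain hlarge | hsmall : m ≤ #{a ∈ s | n ≤ #(t.bipartiteAbove r a)} ∨
      m' ≤ #{a ∈ s | ¬ n ≤ #(t.bipartiteAbove r a)} := by omega
  · obtain ⟨A, hA, hAm⟩ := exists_subset_card_eq hlarge
    have hAs : A ⊆ s := hA.trans (filter_subset _ _)
    obtain ⟨B, hBt, hBn, hr⟩ := (h.mono_left (coe_subset.mpr hAs)).exists_card_eq_forall_rel hn
      fun a ha => (mem_filter.mp (hA ha)).2
    exact .inl ⟨A, hAs, B, hBt, hAm, hBn, hr⟩
  · obtain ⟨A, hA, hAm⟩ := exists_subset_card_eq hsmall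
    have hAs : A ⊆ s := hA.trans (filter_subset _ _)
    have hdeg : ∀ a ∈ A, n' ≤ #(t.bipartiteAbove (fun a b => ¬ r a b) a) := by
      intro a ha
      have hlt : ¬ n ≤ #(t.bipartiteAbove r a) := (mem_filter.mp (hA ha)).2
      have hadd := card_bipartiteAbove_add_card_bipartiteAbove_not r t a
      omega
    obtain ⟨B, hBt, hBn, hr⟩ :=
      (h.not.mono_left (coe_subset.mpr hAs)).exists_card_eq_forall_rel hn' hdeg
    exact .inr ⟨A, hAs, B, hBt, hAm, hBn, hr⟩

end Finset

end IsFerrersOn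

theorem isDicycle_four {V : Type} {Adj : V → V → Prop} {w x y z : V} (hnodup : [w, x, y, z].Nodup)
    (hwx : Adj w x) (hxy : Adj x y) (hyz : Adj y z) (hzw : Adj z w) :
    IsDicycle Adj 4 ![w, x, y, z] := by
  refine ⟨by norm_num, List.nodup_ofFn.mp (by simpa using hnodup), fun (j : Fin 4) => ?_⟩
  fin_cases j
  exacts [hwx, hxy, hyz, hzw]

theorem isFerrersOn_of_forall_not_isDicycle_four {U V : Type} [DecidableEq U] [DecidableEq V]
    {g : U → V → Bool} {U' : Finset U} {V' : Finset V}
    (hcycle : ∀ c : ZMod 4 → U ⊕ V, ¬ IsDicycle (BipOrientAdj g U' V') 4 c) :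
    IsFerrersOn (fun u v => g u v = true) (U' : Set U) (V' : Set V) := by
  intro u hu u' hu' v hv v' hv' huv hu'v'
  by_contra! hns
  simp only [Bool.not_eq_true] at hns
  obtain ⟨huv', hu'v⟩ := hns
  have hu_ne : u ≠ u' := ne_of_apply_ne (g · v) (by simp [huv, hu'v])
  have hv_ne : v ≠ v' := ne_of_apply_ne (g u) (by simp [huv, huv'])
  exact hcycle ![.inl u, .inr v, .inl u', .inr v'] <| isDicycle_four (by simp [hu_ne, hv_ne])
    ⟨hu, hv, huv⟩ ⟨hu', hv, hu'v⟩ ⟨hu', hv', hu'v'⟩ ⟨hu, hv', huv'⟩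

theorem acyclic_bipartite_orientation_homogeneous_pair_general {k : ℕ} {U V : Type}
    [DecidableEq U] [DecidableEq V] {g : U → V → Bool} {U' : Finset U} {V' : Finset V}
    (hU : 2 * k ≤ #U' + 1) (hV : 2 * k ≤ #V' + 1)
    (hcycle : ∀ c : ZMod 4 → U ⊕ V, ¬ IsDicycle (BipOrientAdj g U' V') 4 c) :
    ∃ (A : Finset U) (B : Finset V), A ⊆ U' ∧ B ⊆ V' ∧ #A = k ∧ #B = k ∧
      ((∀ a ∈ A, ∀ b ∈ B, g a b = true) ∨ (∀ a ∈ A, ∀ b ∈ B, g a b = false)) := by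
  have hferrers := isFerrersOn_of_forall_not_isDicycle_four hcycle
  obtain ⟨A, hA, B, hB, hAk, hBk, hg⟩ | ⟨A, hA, B, hB, hAk, hBk, hg⟩ :=
    hferrers.exists_homogeneous_pair (m := k) (m' := k) (n := k) (n' := k)
      (by omega) (by omega) (by omega) (by omega)
  · exact ⟨A, B, hA, hB, hAk, hBk, .inl hg⟩
  · exact ⟨A, B, hA, hB, hAk, hBk, .inr fun a ha b hb => eq_false_of_ne_true (hg a ha b hb)⟩

/-- If an orientation of the complete bipartite graph between `U` and `V`
induces an acyclic digraph on `U' ∪ V'` with `|U'| = |V'| = 2k + 1`, then there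
are `A ⊆ U'` and `B ⊆ V'` with `|A| = |B| = k` such that all arcs between `A`
and `B` go from `A` to `B`, or all go from `B` to `A`. -/
theorem acyclic_bipartite_orientation_homogeneous_pair (k : ℕ) (hk : 1 ≤ k)
    (U V : Type) [Fintype U] [Fintype V] [DecidableEq U] [DecidableEq V]
    (g : U → V → Bool) (U' : Finset U) (V' : Finset V)
    (hU : U'.card = 2 * k + 1) (hV : V'.card = 2 * k + 1)
    (hacyc : ∀ (ℓ : ℕ) (c : ZMod ℓ → (U ⊕ V)),
      ¬ IsDicycle (BipOrientAdj g U' V') ℓ c) :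
    ∃ (A : Finset U) (B : Finset V), A ⊆ U' ∧ B ⊆ V' ∧
      A.card = k ∧ B.card = k ∧
      ((∀ a ∈ A, ∀ b ∈ B, g a b = true) ∨ (∀ a ∈ A, ∀ b ∈ B, g a b = false)) :=
  acyclic_bipartite_orientation_homogeneous_pair_general (by omega) (by omega) (hacyc 4)
end

section
/- For all integers r ≥ 2 and k ≥ 3, there exists a finite simple graph J with two distinguished distinct vertices u and v such that: (1) J has girth at least k; (2) J admits an acyclic r-coloring; (3) every acyclic r-coloring of J assigns the same color to u and v; and (4) every path in J from u to v has at least k vertices. -/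
/-- `f` is an acyclic coloring of the simple graph `G`: no cycle of `G` is
monochromatic, i.e. each color class induces a forest. -/
def IsAcyclicGraphColoring {V : Type} {r : ℕ} (G : SimpleGraph V) (f : V → Fin r) : Prop :=
  ∀ (v : V) (w : G.Walk v v), w.IsCycle → ∃ x ∈ w.support, f x ≠ f v

/-!
If `G` has girth at least `k` and no acyclic `r`-coloring, and has as few edges as possible, then
deleting any edge `uv` makes it acyclically `r`-colorable, but only with `u` and `v` of the same
color; a path from `u` to `v` avoiding `uv` closes up to a cycle of `G`, so it is long.
Such a `G` exists because an acyclic `r`-coloring refines to a proper `2r`-coloring (forests are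
bipartite), and graphs of large girth and chromatic number exist.

The latter are found greedily rather than at random. Let `q = 2r` and `n = qm`, and consider graphs
on `n` vertices of girth at least `k` and bounded degree. As long as there is an independent `m`-set
and there are `O(n)` edges, most pairs of vertices are far apart and of unsaturated degree, so by
averaging some such pair lies in a proportion at least `1 / (2q²)` of all independent `m`-sets.
Joining it destroys those, and preserves the girth. A potential weighing the number of independent
`m`-sets against the number of edges therefore drops, so it is minimized by a graph without
independent `m`-sets, which cannot be `q`-colorable.
-/

namespace SameColorGadget

open Finset SimpleGraph

section Cycles

variable {V : Type*} {G : SimpleGraph V} {u v : V}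

lemma edist_deleteEdges_add_one_le_length {a : V} {w : G.Walk a a} (hw : w.IsTrail)
    (huv : s(u, v) ∈ w.edges) : (G.deleteEdges {s(u, v)}).edist u v + 1 ≤ w.length := by
  classical
  have hu := w.fst_mem_support_of_mem_edges huv
  have avoid (p : G.Walk u v) (hp : s(u, v) ∉ p.edges) :
      (G.deleteEdges {s(u, v)}).edist u v ≤ p.length := by
    simpa using edist_le (p.toDeleteEdge s(u, v) hp)
  have pos {b c : V} (p : G.Walk b c) (hp : s(u, v) ∈ p.edges) : 1 ≤ p.length := by
    rw [← p.length_edges]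
    exact List.length_pos_of_mem hp
  have huv' : s(u, v) ∈ (w.rotate u hu).edges := ((w.rotate_edges u hu).mem_iff).2 huv
  have hv := (w.rotate u hu).snd_mem_support_of_mem_edges huv'
  set p := (w.rotate u hu).takeUntil v hv
  set q := (w.rotate u hu).dropUntil v hv
  have hpq : p.append q = w.rotate u hu := Walk.take_spec _ hv
  have hlen : p.length + q.length = w.length := by
    rw [← Walk.length_append, hpq, Walk.length_rotate]
  have hdisj : p.edges.Disjoint q.edges := by
    have := (hw.rotate hu).edges_nodup
    rw [← hpq, Walk.edges_append] at this
    exact List.disjoint_of_nodup_append this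
  rw [← hpq, Walk.edges_append, List.mem_append] at huv'
  rw [← hlen, Nat.cast_add]
  rcases huv' with hp | hq
  · have hq := avoid q.reverse (by simpa using hdisj hp)
    rw [Walk.length_reverse] at hq
    rw [add_comm (p.length : ℕ∞)]
    exact add_le_add hq (mod_cast pos p hp)
  · exact add_le_add (avoid p fun hp ↦ hdisj hp hq) (mod_cast pos q hq)

lemma min_egirth_edist_add_one_le_egirth_sup_edge (G : SimpleGraph V) (x y : V) :
    min G.egirth (G.edist x y + 1) ≤ (G ⊔ edge x y).egirth := by
  have hle : (G ⊔ edge x y).deleteEdges {s(x, y)} ≤ G := by simp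
  refine le_egirth.2 fun a w hw ↦ ?_
  by_cases hxy : s(x, y) ∈ w.edges
  · calc min G.egirth (G.edist x y + 1) ≤ G.edist x y + 1 := min_le_right _ _
      _ ≤ ((G ⊔ edge x y).deleteEdges {s(x, y)}).edist x y + 1 := by gcongr
      _ ≤ w.length := edist_deleteEdges_add_one_le_length hw.isTrail hxy
  · have hw' := (hw.toDeleteEdges _ {s(x, y)} fun e he h ↦ hxy (h ▸ he)).mapLe hle
    simpa using (min_le_left _ _).trans (egirth_le_length hw')

lemma egirth_le_edist_deleteEdges_add_one (huv : G.Adj u v) :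
    G.egirth ≤ (G.deleteEdges {s(u, v)}).edist u v + 1 := by
  classical
  by_cases htop : (G.deleteEdges {s(u, v)}).edist u v = ⊤
  · simp [htop]
  obtain ⟨p, hp⟩ := exists_walk_of_edist_ne_top htop
  have huv_notMem : s(v, u) ∉ (p.bypass.mapLe (deleteEdges_le {s(u, v)})).edges := by
    rw [Walk.edges_mapLe_eq_edges]
    intro h
    simpa [Sym2.eq_swap] using p.bypass.edges_subset_edgeSet h
  have hcycle := (Walk.cons_isCycle_iff _ huv.symm).2
    ⟨p.bypass_isPath.mapLe (deleteEdges_le {s(u, v)}), huv_notMem⟩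
  calc G.egirth ≤ (p.bypass.length + 1 : ℕ) := by simpa using egirth_le_length hcycle
    _ ≤ (p.length + 1 : ℕ) := by gcongr; exact p.length_bypass_le_length
    _ = (G.deleteEdges {s(u, v)}).edist u v + 1 := by rw [Nat.cast_add, hp, Nat.cast_one]

lemma eq_or_exists_adj_mem_ball {x y : V} {r : ℕ∞} (hy : y ∈ G.ball x (r + 1)) :
    y = x ∨ ∃ z, G.Adj x z ∧ y ∈ G.ball z r := by
  rw [mem_ball_comm, mem_ball] at hy
  obtain ⟨p, hp⟩ := exists_walk_of_edist_ne_top hy.ne_top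
  cases p with
  | nil => exact .inl rfl
  | cons hxz p =>
    refine .inr ⟨_, hxz, mem_ball_comm.1 (mem_ball.2 ?_)⟩
    rw [← hp, Walk.length_cons, Nat.cast_add, Nat.cast_one] at hy
    exact (edist_le p).trans_lt (lt_of_add_lt_add_right hy)

end Cycles

section Averaging

variable {α β : Type*}

lemma exists_card_mul_le_card_mul_card_bipartiteBelow {s : Finset α} {t : Finset β}
    (r : α → β → Prop) [∀ a b, Decidable (r a b)] (ht : t.Nonempty) {c : ℕ}
    (hc : ∀ a ∈ s, c ≤ #(t.bipartiteAbove r a)) :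
    ∃ b ∈ t, #s * c ≤ #t * #(s.bipartiteBelow r b) := by
  refine exists_le_of_sum_le ht ?_
  calc ∑ _b ∈ t, #s * c = #t * (#s • c) := by simp
    _ ≤ #t * ∑ a ∈ s, #(t.bipartiteAbove r a) := by gcongr; exact card_nsmul_le_sum _ _ _ hc
    _ = ∑ b ∈ t, #t * #(s.bipartiteBelow r b) := by
      rw [sum_card_bipartiteAbove_eq_sum_card_bipartiteBelow, mul_sum]

lemma exists_pair_card_le_mul_card_filter [Fintype α] [DecidableEq α] {q m : ℕ} (hm : 0 < m)
    (hq : 0 < q) (hα : Fintype.card α = q * m) {t : Finset (α × α)} (ht : 2 * #tᶜ ≤ m ^ 2)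
    {s : Finset (Finset α)} (hs : ∀ S ∈ s, #S = m) :
    ∃ x y, (x, y) ∈ t ∧ #s ≤ 2 * q ^ 2 * #{S ∈ s | x ∈ S ∧ y ∈ S} := by
  have hm2 : 0 < m ^ 2 := by positivity
  have hcard : #t + #tᶜ = (q * m) ^ 2 := by
    rw [card_add_card_compl, Fintype.card_prod, hα, sq]
  have htne : t.Nonempty := by
    have hqm : m ^ 2 ≤ (q * m) ^ 2 := by gcongr; exact Nat.le_mul_of_pos_left m hq
    rw [← card_pos]
    lia
  have hc : ∀ S ∈ s, m ^ 2 - #tᶜ ≤ #(t.bipartiteAbove (fun S p ↦ p.1 ∈ S ∧ p.2 ∈ S) S) := by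
    intro S hS
    rw [← hs S hS, sq, ← card_product, tsub_le_iff_right]
    refine (card_le_card fun p hp ↦ ?_).trans (card_union_le _ _)
    simp only [mem_union, mem_bipartiteAbove, mem_compl]
    grind
  obtain ⟨⟨x, y⟩, hxy, hle⟩ := exists_card_mul_le_card_mul_card_bipartiteBelow _ htne hc
  refine ⟨x, y, hxy, Nat.le_of_mul_le_mul_right (c := m ^ 2) ?_ hm2⟩
  set N := #{S ∈ s | x ∈ S ∧ y ∈ S}
  calc #s * m ^ 2 ≤ #s * (2 * (m ^ 2 - #tᶜ)) := by gcongr; lia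
    _ = 2 * (#s * (m ^ 2 - #tᶜ)) := by ring
    _ ≤ 2 * (#t * N) := by gcongr 2 * ?_; exact hle
    _ ≤ 2 * ((q * m) ^ 2 * N) := by gcongr; lia
    _ = 2 * q ^ 2 * N * m ^ 2 := by ring

end Averaging

section Potential

variable {V : Type*} {G : SimpleGraph V} {m : ℕ}

lemma ncard_isNIndepSet_sup_edge_add_le [Finite V] {x y : V} (hxy : x ≠ y) (m : ℕ) :
    {S | (G ⊔ edge x y).IsNIndepSet m S}.ncard + {S | G.IsNIndepSet m S ∧ x ∈ S ∧ y ∈ S}.ncard ≤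
      {S | G.IsNIndepSet m S}.ncard := by
  have hdisj : Disjoint {S | (G ⊔ edge x y).IsNIndepSet m S}
      {S | G.IsNIndepSet m S ∧ x ∈ S ∧ y ∈ S} :=
    Set.disjoint_left.2 fun S hS ⟨_, hx, hy⟩ ↦
      hS.isIndepSet hx hy hxy (.inr (by simp [edge_adj, hxy]))
  rw [← Set.ncard_union_eq hdisj]
  refine Set.ncard_le_ncard (Set.union_subset (fun S hS ↦ ?_) fun S hS ↦ hS.1)
  exact ⟨hS.isIndepSet.mono' fun a b hab h ↦ hab (.inl h), hS.card_eq⟩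

/-- The potential decreased by each good new edge: the number of independent `m`-sets, times a
factor `1 + 1 / M` for every edge, so that graphs of small potential have few edges. -/
noncomputable def potential (M m : ℕ) (G : SimpleGraph V) : ℝ :=
  {S | G.IsNIndepSet m S}.ncard * (1 + 1 / M) ^ G.edgeSet.ncard

lemma potential_bot_le [Fintype V] (M m : ℕ) :
    potential M m (⊥ : SimpleGraph V) ≤ 2 ^ Fintype.card V := by
  classical
  have hcard : {S | (⊥ : SimpleGraph V).IsNIndepSet m S}.ncard ≤ 2 ^ Fintype.card V := by
    rw [← Fintype.card_finset, ← Nat.card_eq_fintype_card]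
    exact Set.ncard_le_card _
  rw [potential, edgeSet_bot, Set.ncard_empty, pow_zero, mul_one]
  exact_mod_cast hcard

lemma potential_sup_edge_lt [Finite V] {M : ℕ} {x y : V} (hxy : x ≠ y)
    (hI : {S | G.IsNIndepSet m S}.Nonempty)
    (hM : {S | G.IsNIndepSet m S}.ncard ≤ M * {S | G.IsNIndepSet m S ∧ x ∈ S ∧ y ∈ S}.ncard) :
    potential M m (G ⊔ edge x y) < potential M m G := by
  have hI0 := hI.ncard_pos
  have hdrop := ncard_isNIndepSet_sup_edge_add_le (G := G) hxy m
  obtain ⟨hM0, hN0⟩ := CanonicallyOrderedAdd.mul_pos.1 (hI0.trans_le hM)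
  have hadj : ¬G.Adj x y := by
    obtain ⟨S, hS, hx, hy⟩ := (Set.ncard_pos).1 hN0
    exact hS.isIndepSet hx hy hxy
  have hcard : (G ⊔ edge x y).edgeSet.ncard = G.edgeSet.ncard + 1 := by
    rw [edgeSet_sup, edgeSet_edge_of_ne hxy, Set.union_singleton,
      Set.ncard_insert_of_notMem (mt (G.mem_edgeSet).1 hadj) (Set.toFinite _)]
  rw [potential, potential, hcard, pow_succ', ← mul_assoc]
  set I := {S | G.IsNIndepSet m S}.ncard
  set I' := {S | (G ⊔ edge x y).IsNIndepSet m S}.ncard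
  set N := {S | G.IsNIndepSet m S ∧ x ∈ S ∧ y ∈ S}.ncard
  have hlt : I' * (M + 1) < I * M := by
    calc I' * (M + 1) = I' * M + I' := by ring
      _ < I' * M + M * N := by lia
      _ = (I' + N) * M := by ring
      _ ≤ I * M := by gcongr
  have hM0' : (0 : ℝ) < M := mod_cast hM0
  gcongr
  calc (I' : ℝ) * (1 + 1 / M) = (I' * (M + 1) : ℕ) / M := by push_cast; field_simp
    _ < I := by rw [div_lt_iff₀ hM0']; exact_mod_cast hlt

lemma ncard_edgeSet_le_of_potential_le [Finite V] {M n : ℕ} (hM : 0 < M)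
    (hI : {S | G.IsNIndepSet m S}.Nonempty) (hG : potential M m G ≤ 2 ^ n) :
    G.edgeSet.ncard ≤ M * n := by
  have hM' : (0 : ℝ) < M := mod_cast hM
  have htwo : (2 : ℝ) ≤ (1 + 1 / M) ^ M := by
    have := one_add_mul_le_pow (a := 1 / (M : ℝ)) (by linarith [one_div_pos.2 hM']) M
    rwa [mul_one_div_cancel hM'.ne', one_add_one_eq_two] at this
  rw [← pow_le_pow_iff_right₀ (a := 1 + 1 / (M : ℝ)) (by simpa using hM)]
  calc (1 + 1 / (M : ℝ)) ^ G.edgeSet.ncard ≤ potential M m G :=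
        le_mul_of_one_le_left (by positivity) (mod_cast hI.ncard_pos)
    _ ≤ 2 ^ n := hG
    _ ≤ ((1 + 1 / (M : ℝ)) ^ M) ^ n := by gcongr
    _ = (1 + 1 / (M : ℝ)) ^ (M * n) := (pow_mul _ _ _).symm

end Potential

section Greedy

variable {V : Type*} [Fintype V] {G : SimpleGraph V}

open scoped Classical in
lemma card_ball_add_one_le (G : SimpleGraph V) [DecidableRel G.Adj] (x : V) (r : ℕ) :
    #{y | y ∈ G.ball x (r + 1)} ≤ (G.maxDegree + 1) ^ r := by
  induction r generalizing x with
  | zero =>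
    rw [pow_zero, card_le_one]
    simp +contextual
  | succ r ih =>
    have hsub : ({y | y ∈ G.ball x ((r + 1 : ℕ) + 1)} : Finset V) ⊆
        (insert x (G.neighborFinset x)).biUnion fun z ↦ {y | y ∈ G.ball z (r + 1)} := by
      intro y hy
      simp only [mem_filter_univ, mem_biUnion, mem_insert, mem_neighborFinset] at hy ⊢
      rcases eq_or_exists_adj_mem_ball hy with rfl | ⟨z, hxz, hyz⟩
      · exact ⟨y, .inl rfl, mem_ball_self (by simp)⟩
      · exact ⟨z, .inr hxz, by simpa using hyz⟩
    calc #{y | y ∈ G.ball x ((r + 1 : ℕ) + 1)}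
        ≤ #(insert x (G.neighborFinset x)) * (G.maxDegree + 1) ^ r :=
          (card_le_card hsub).trans (card_biUnion_le_card_mul _ _ _ fun z _ ↦ ih z)
      _ ≤ (G.maxDegree + 1) * (G.maxDegree + 1) ^ r := by
          gcongr
          exact (card_insert_le _ _).trans (Nat.add_le_add_right (G.degree_le_maxDegree x) 1)
      _ = (G.maxDegree + 1) ^ (r + 1) := (pow_succ' _ _).symm

lemma card_filter_le_degree_mul_le (G : SimpleGraph V) [DecidableRel G.Adj] (D : ℕ) :
    #{v | D ≤ G.degree v} * D ≤ 2 * G.edgeSet.ncard := by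
  classical
  rw [← coe_edgeFinset, Set.ncard_coe_finset, ← G.sum_degrees_eq_twice_card_edges, ← smul_eq_mul]
  calc #{v | D ≤ G.degree v} • D ≤ ∑ v with D ≤ G.degree v, G.degree v :=
        card_nsmul_le_sum _ _ _ fun v hv ↦ (mem_filter_univ v).1 hv
    _ ≤ ∑ v, G.degree v := sum_le_sum_of_subset (subset_univ _)

lemma maxDegree_sup_edge_le {D : ℕ} {x y : V} [DecidableRel G.Adj]
    [DecidableRel (G ⊔ edge x y).Adj] (hG : G.maxDegree ≤ D) (hx : G.degree x < D)
    (hy : G.degree y < D) : (G ⊔ edge x y).maxDegree ≤ D := by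
  refine maxDegree_le_of_forall_degree_le _ _ fun v ↦ ?_
  classical
  have hv := (G.degree_le_maxDegree v).trans hG
  rw [← card_neighborFinset_eq_degree] at hx hy hv ⊢
  by_cases hvx : v = x
  · subst hvx
    refine (card_le_card (t := insert y (G.neighborFinset v)) fun z ↦ ?_).trans
      ((card_insert_le _ _).trans hx)
    simp only [mem_neighborFinset, sup_adj, edge_adj, mem_insert]
    grind
  by_cases hvy : v = y
  · subst hvy
    refine (card_le_card (t := insert x (G.neighborFinset v)) fun z ↦ ?_).trans
      ((card_insert_le _ _).trans hy)
    simp only [mem_neighborFinset, sup_adj, edge_adj, mem_insert]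
    grind
  · refine (card_le_card fun z ↦ ?_).trans hv
    simp only [mem_neighborFinset, sup_adj, edge_adj]
    grind

open scoped Classical in
/-- The ordered pairs which may be joined by a new edge in the greedy construction: both ends have
degree less than `D`, so that degrees stay at most `D`, and their distance is more than `k`, so that
every cycle created is longer than `k`. -/
noncomputable def joinablePairs (G : SimpleGraph V) [DecidableRel G.Adj] (D k : ℕ) :
    Finset (V × V) :=
  {p | G.degree p.1 < D ∧ G.degree p.2 < D ∧ p.2 ∉ G.ball p.1 (k + 1)}

lemma card_compl_joinablePairs_le [DecidableEq V] (G : SimpleGraph V) [DecidableRel G.Adj]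
    (D k : ℕ) :
    #(joinablePairs G D k)ᶜ ≤
      2 * Fintype.card V * #{v | D ≤ G.degree v} + Fintype.card V * (G.maxDegree + 1) ^ k := by
  classical
  set saturated : Finset V := {v | D ≤ G.degree v}
  set close : Finset (V × V) :=
    univ.biUnion fun x ↦ ({y | y ∈ G.ball x (k + 1)} : Finset V).image (Prod.mk x)
  have hcover : (joinablePairs G D k)ᶜ ⊆ saturated ×ˢ univ ∪ univ ×ˢ saturated ∪ close := by
    rintro ⟨x, y⟩
    simp only [joinablePairs, saturated, close, mem_compl, mem_filter_univ, mem_union, mem_product,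
      mem_univ, mem_biUnion, mem_image]
    grind
  have hclose : #close ≤ Fintype.card V * (G.maxDegree + 1) ^ k :=
    card_biUnion_le_card_mul _ _ _ fun x _ ↦ card_image_le.trans (card_ball_add_one_le G x k)
  calc #(joinablePairs G D k)ᶜ ≤ #(saturated ×ˢ univ ∪ univ ×ˢ saturated ∪ close) :=
        card_le_card hcover
    _ ≤ #(saturated ×ˢ univ) + #(univ ×ˢ saturated) + #close :=
        (card_union_le _ _).trans (Nat.add_le_add_right (card_union_le _ _) _)
    _ ≤ _ := by
        rw [card_product, card_product, card_univ]
        linarith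

variable {q k m : ℕ}

lemma two_mul_card_compl_joinablePairs_le [DecidableEq V] [DecidableRel G.Adj] (hq : 0 < q)
    (hV : Fintype.card V = q * m) (hm : 4 * q * (32 * q ^ 4 + 1) ^ k ≤ m)
    (hdeg : G.maxDegree ≤ 32 * q ^ 4) (hedges : G.edgeSet.ncard ≤ 2 * q ^ 2 * Fintype.card V) :
    2 * #(joinablePairs G (32 * q ^ 4) k)ᶜ ≤ m ^ 2 := by
  have hcompl := card_compl_joinablePairs_le G (32 * q ^ 4) k
  have hsat := card_filter_le_degree_mul_le G (32 * q ^ 4)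
  set t := #{v | 32 * q ^ 4 ≤ G.degree v}
  rw [hV] at hcompl hedges
  have ht : 8 * q * t ≤ m := by
    refine Nat.le_of_mul_le_mul_right (c := 4 * q ^ 3) ?_ (by positivity)
    linarith
  have hball : 4 * q * (G.maxDegree + 1) ^ k ≤ m := le_trans (by gcongr) hm
  refine Nat.le_of_mul_le_mul_left (c := 2) ?_ two_pos
  calc 2 * (2 * #(joinablePairs G (32 * q ^ 4) k)ᶜ)
      ≤ 2 * (2 * (2 * (q * m) * t + q * m * (G.maxDegree + 1) ^ k)) := by gcongr
    _ = (8 * q * t + 4 * q * (G.maxDegree + 1) ^ k) * m := by ring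
    _ ≤ (m + m) * m := by gcongr
    _ = 2 * m ^ 2 := by ring

lemma exists_joinablePair_ncard_isNIndepSet_le [DecidableRel G.Adj] (hq : 0 < q)
    (hV : Fintype.card V = q * m) (hm : 4 * q * (32 * q ^ 4 + 1) ^ k ≤ m)
    (hdeg : G.maxDegree ≤ 32 * q ^ 4) (hedges : G.edgeSet.ncard ≤ 2 * q ^ 2 * Fintype.card V) :
    ∃ x y, (x, y) ∈ joinablePairs G (32 * q ^ 4) k ∧
      {S | G.IsNIndepSet m S}.ncard ≤
        2 * q ^ 2 * {S | G.IsNIndepSet m S ∧ x ∈ S ∧ y ∈ S}.ncard := by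
  classical
  have hm0 : 0 < m := lt_of_lt_of_le (by positivity) hm
  obtain ⟨x, y, hxy, hle⟩ := exists_pair_card_le_mul_card_filter hm0 hq hV
    (two_mul_card_compl_joinablePairs_le hq hV hm hdeg hedges)
    (s := {S | G.IsNIndepSet m S}) fun S hS ↦ ((mem_filter_univ S).1 hS).card_eq
  refine ⟨x, y, hxy, ?_⟩
  simpa only [Set.ncard_eq_toFinset_card', Set.toFinset_ofPred, filter_filter] using hle

lemma exists_le_egirth_indepSetFree (hq : 0 < q) (hV : Fintype.card V = q * m)
    (hm : 4 * q * (32 * q ^ 4 + 1) ^ k ≤ m) :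
    ∃ G : SimpleGraph V, k ≤ G.egirth ∧ G.IndepSetFree m := by
  classical
  have hbot : ⊥ ∈ {G : SimpleGraph V | k ≤ G.egirth ∧ G.maxDegree ≤ 32 * q ^ 4} := by
    refine ⟨egirth_bot.symm ▸ le_top, Eq.trans_le ?_ (Nat.zero_le _)⟩
    convert maxDegree_bot_eq_zero (V := V)
  obtain ⟨G, ⟨hgirth, hdeg⟩, hmin⟩ := Set.exists_min_image
    {G : SimpleGraph V | k ≤ G.egirth ∧ G.maxDegree ≤ 32 * q ^ 4} (potential (2 * q ^ 2) m)
    (Set.toFinite _) ⟨⊥, hbot⟩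
  refine ⟨G, hgirth, fun S hS ↦ ?_⟩
  have hI : {S | G.IsNIndepSet m S}.Nonempty := ⟨S, hS⟩
  have hpot : potential (2 * q ^ 2) m G ≤ 2 ^ Fintype.card V :=
    (hmin ⊥ hbot).trans (potential_bot_le _ _)
  have hedges := ncard_edgeSet_le_of_potential_le (by positivity) hI hpot
  obtain ⟨x, y, hxy, hle⟩ := exists_joinablePair_ncard_isNIndepSet_le hq hV hm hdeg hedges
  obtain ⟨hx, hy, hdist⟩ := (mem_filter_univ _).1 hxy
  have hne : x ≠ y := by
    rintro rfl
    exact hdist (mem_ball_self (by simp))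
  have hk : (k : ℕ∞) ≤ G.edist x y + 1 := by
    rw [mem_ball_comm, mem_ball, not_lt] at hdist
    exact le_self_add.trans (hdist.trans le_self_add)
  have hgirth' : (k : ℕ∞) ≤ (G ⊔ edge x y).egirth :=
    (le_min hgirth hk).trans (min_egirth_edist_add_one_le_egirth_sup_edge G x y)
  exact (potential_sup_edge_lt hne hI hle).not_ge
    (hmin _ ⟨hgirth', by convert maxDegree_sup_edge_le hdeg hx hy⟩)

lemma not_colorable_of_indepSetFree (hG : G.IndepSetFree m) (hq : 0 < q)
    (hV : q * m ≤ Fintype.card V) : ¬G.Colorable q := by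
  rintro ⟨C⟩
  have : Nonempty (Fin q) := ⟨⟨0, hq⟩⟩
  obtain ⟨c, hc⟩ := Fintype.exists_le_card_fiber_of_mul_le_card C (n := m) (by simpa using hV)
  obtain ⟨S, hS, hcard⟩ := exists_subset_card_eq hc
  refine hG S ⟨(C.isIndepSet_colorClass c).mono fun v hv ↦ ?_, hcard⟩
  exact (mem_filter_univ v).1 (hS hv)

end Greedy

theorem exists_le_egirth_not_colorable {q : ℕ} (hq : 0 < q) (k : ℕ) :
    ∃ (n : ℕ) (G : SimpleGraph (Fin n)), k ≤ G.egirth ∧ ¬G.Colorable q := by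
  obtain ⟨G, hgirth, hfree⟩ := exists_le_egirth_indepSetFree
    (V := Fin (q * (4 * q * (32 * q ^ 4 + 1) ^ k))) hq (Fintype.card_fin _) le_rfl
  exact ⟨_, G, hgirth, not_colorable_of_indepSetFree hfree hq (Fintype.card_fin _).ge⟩

end SameColorGadget

namespace IsAcyclicGraphColoring

open SimpleGraph

variable {V : Type} {r : ℕ} {G : SimpleGraph V} {f : V → Fin r}

lemma of_isAcyclic (hG : G.IsAcyclic) (f : V → Fin r) : IsAcyclicGraphColoring G f :=
  fun _ w hw ↦ (hG w hw).elim

lemma isAcyclic_sdiff_comap_top (hf : IsAcyclicGraphColoring G f) :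
    (G \ (⊤ : SimpleGraph (Fin r)).comap f).IsAcyclic := by
  intro v w hw
  obtain ⟨x, hx, hne⟩ := hf v (w.mapLe sdiff_le) (hw.mapLe sdiff_le)
  rw [Walk.support_mapLe_eq_support] at hx
  have hconst {a b : V} (p : (G \ (⊤ : SimpleGraph (Fin r)).comap f).Walk a b) : f a = f b := by
    induction p with
    | nil => rfl
    | cons hab p ih =>
      rw [← ih]
      simpa using hab.2
  classical
  exact hne (hconst (w.takeUntil x hx)).symm

theorem colorable (hf : IsAcyclicGraphColoring G f) : G.Colorable (r * 2) := by
  let C := hf.isAcyclic_sdiff_comap_top.coloringTwo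
  let C' : G.Coloring (Fin r × Fin 2) := .mk (fun v ↦ (f v, C v)) fun {v w} hvw h ↦ by
    obtain ⟨hfvw, hC⟩ := Prod.mk.inj h
    exact C.valid (by simp [hvw, hfvw]) hC
  simpa using C'.colorable

theorem of_deleteEdges {u v : V} (hf : IsAcyclicGraphColoring (G.deleteEdges {s(u, v)}) f)
    (huv : f u ≠ f v) : IsAcyclicGraphColoring G f := by
  intro a w hw
  by_cases he : s(u, v) ∈ w.edges
  · by_cases hu : f u = f a
    · exact ⟨v, w.snd_mem_support_of_mem_edges he, fun hv ↦ huv (hu.trans hv.symm)⟩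
    · exact ⟨u, w.fst_mem_support_of_mem_edges he, hu⟩
  · simpa using hf a _ (hw.toDeleteEdges _ {s(u, v)} fun e he' h ↦ he (h ▸ he'))

end IsAcyclicGraphColoring

open SimpleGraph SameColorGadget in
/-- For all `r ≥ 2`, `k ≥ 3` there is a finite simple graph `J` with girth at
least `k`, admitting an acyclic `r`-coloring, with two distinct vertices `u`,
`v` that get the same color in every acyclic `r`-coloring, and such that every
path from `u` to `v` has at least `k` vertices. -/
theorem exists_same_color_gadget (r k : ℕ) (hr : 2 ≤ r) (hk : 3 ≤ k) :
    ∃ (V : Type) (_ : Fintype V) (G : SimpleGraph V) (u v : V),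
      u ≠ v ∧
      (k : ℕ∞) ≤ G.egirth ∧
      (∃ f : V → Fin r, IsAcyclicGraphColoring G f) ∧
      (∀ f : V → Fin r, IsAcyclicGraphColoring G f → f u = f v) ∧
      (∀ p : G.Walk u v, p.IsPath → k ≤ p.support.length) := by
  have hr0 : 0 < r := by lia
  obtain ⟨n, G₀, hgirth₀, hG₀⟩ := exists_le_egirth_not_colorable (q := r * 2) (by lia) k
  obtain ⟨G, ⟨hgirth, hG⟩, hmin⟩ := exists_minimal_of_wellFoundedLT
    (fun G : SimpleGraph (Fin n) ↦ (k : ℕ∞) ≤ G.egirth ∧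
      ¬∃ f : Fin n → Fin r, IsAcyclicGraphColoring G f)
    ⟨G₀, hgirth₀, fun ⟨_, hf⟩ ↦ hG₀ hf.colorable⟩
  have hbot : G ≠ ⊥ := by
    rintro rfl
    exact hG ⟨fun _ ↦ ⟨0, hr0⟩, .of_isAcyclic isAcyclic_bot _⟩
  obtain ⟨u, v, huv⟩ := ne_bot_iff_exists_adj.1 hbot
  have hle : G.deleteEdges {s(u, v)} ≤ G := deleteEdges_le _
  have hgirth' := hgirth.trans (egirth_anti hle)
  refine ⟨Fin n, inferInstance, G.deleteEdges {s(u, v)}, u, v, huv.ne, hgirth', ?_, ?_, ?_⟩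
  · by_contra hf
    simpa using hmin ⟨hgirth', hf⟩ hle huv
  · exact fun f hf ↦ not_not.1 fun hne ↦ hG ⟨f, hf.of_deleteEdges hne⟩
  · intro p _
    have := hgirth.trans (egirth_le_edist_deleteEdges_add_one huv)
    rw [Walk.length_support]
    exact_mod_cast this.trans (add_le_add_left (edist_le p) 1)
end
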